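/- arXiv:2604.15824 — 4 statements merged into one kernel-verified Lean document; each statement's English description precedes it below -/
import Mathlib

section
/- Every 4-connected simple graph of odd order is odd 3-edge-colorable. -/
/-- The degree of vertex `v` in the color class `i` of the edge-coloring `c` of `G`. -/
noncomputable def classDeg {V : Type*} (G : SimpleGraph V) {k : ℕ}
    (c : Sym2 V → Fin k) (i : Fin k) (v : V) : ℕ :=
  {e : Sym2 V | e ∈ G.edgeSet ∧ c e = i ∧ v ∈ e}.ncard

/-- `G` is odd `k`-edge-colorable: there is an edge-coloring with `k` colors such that
every vertex incident to an edge of a color class has odd degree in that class. -/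
def OddEdgeColorable {V : Type*} (G : SimpleGraph V) (k : ℕ) : Prop :=
  ∃ c : Sym2 V → Fin k, ∀ (i : Fin k) (v : V),
    classDeg G c i v ≠ 0 → Odd (classDeg G c i v)

/-- `G` is `k`-connected: it has more than `k` vertices and remains connected
after deleting any set of fewer than `k` vertices. -/
def IsKConnected {V : Type*} [Fintype V] (G : SimpleGraph V) (k : ℕ) : Prop :=
  k < Fintype.card V ∧ ∀ s : Set V, s.ncard < k → (G.induce sᶜ).Connected


section Helpers
open Classical

set_option linter.unusedSectionVars false
set_option linter.unusedSimpArgs false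

variable {V : Type*} [Fintype V]

/-- Degree modulo two. -/
noncomputable def dz (J : SimpleGraph V) (v : V) : ZMod 2 :=
  ∑ w, if J.Adj v w then (1 : ZMod 2) else 0

lemma z2 (a : ZMod 2) : a = 0 ∨ a = 1 := by
  revert a; decide

lemma z2add (a : ZMod 2) : a + a = 0 := by
  revert a; decide

lemma dz_sup (J K : SimpleGraph V) (h : ∀ x y, J.Adj x y → ¬ K.Adj x y) (v : V) :
    dz (J ⊔ K) v = dz J v + dz K v := by
  unfold dz
  rw [← Finset.sum_add_distrib]
  refine Finset.sum_congr rfl fun w _ => ?_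
  have := h v w
  by_cases h1 : J.Adj v w <;> by_cases h2 : K.Adj v w <;> simp_all

lemma dz_sdiff (J K : SimpleGraph V) (h : K ≤ J) (v : V) :
    dz (J \ K) v = dz J v + dz K v := by
  unfold dz
  rw [← Finset.sum_add_distrib]
  refine Finset.sum_congr rfl fun w _ => ?_
  have := @h v w
  by_cases h1 : J.Adj v w <;> by_cases h2 : K.Adj v w <;> simp_all [z2add]

lemma dz_bot (v : V) : dz (⊥ : SimpleGraph V) v = 0 := by simp [dz]

lemma dz_zero (J : SimpleGraph V) (v : V) (h : ∀ w, ¬ J.Adj v w) : dz J v = 0 := by simp [dz, h]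

lemma dz_ne (J : SimpleGraph V) (v : V) (h : dz J v ≠ 0) : ∃ w, J.Adj v w := by
  by_contra hh
  push Not at hh
  exact h (dz_zero J v hh)

lemma dz_deg (J : SimpleGraph V) (v : V) : dz J v = (J.degree v : ZMod 2) := by
  unfold dz
  rw [Finset.sum_boole, ← SimpleGraph.card_neighborFinset_eq_degree, SimpleGraph.neighborFinset_eq_filter]

lemma handshake (J : SimpleGraph V) : ∑ v, dz J v = 0 := by
  simp only [dz_deg]
  rw [← Nat.cast_sum, SimpleGraph.sum_degrees_eq_twice_card_edges]
  push_cast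
  rw [show (2 : ZMod 2) = 0 from rfl, zero_mul]

lemma handshake_on (J : SimpleGraph V) (K : Set V) (hK : ∀ x y, J.Adj x y → x ∈ K → y ∈ K) :
    ∑ v, (if v ∈ K then dz J v else 0) = 0 := by
  let J' : SimpleGraph V :=
    { Adj := fun x y => J.Adj x y ∧ x ∈ K
      symm := ⟨fun x y h => ⟨h.1.symm, hK _ _ h.1 h.2⟩⟩
      loopless := ⟨fun x h => J.loopless.irrefl x h.1⟩ }
  refine Eq.trans ?_ (handshake J')
  refine Finset.sum_congr rfl fun w _ => ?_
  unfold dz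
  by_cases h : w ∈ K <;> simp [h, J']

lemma dz_edge (u w : V) (h : u ≠ w) (x : V) :
    dz (SimpleGraph.edge u w) x = (if x = u then 1 else 0) + (if x = w then 1 else 0) := by
  have e : ∀ z : V, dz (SimpleGraph.edge u w) x = (∑ y, if y = z then
      (if x = u then 1 else 0) + (if x = w then 1 else 0) else (0 : ZMod 2)) →
      dz (SimpleGraph.edge u w) x = (if x = u then 1 else 0) + (if x = w then 1 else 0) := by
    intro z hz
    rw [hz]; simp
  by_cases h1 : x = u
  · apply e w
    refine Finset.sum_congr rfl fun y _ => ?_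
    simp only [SimpleGraph.edge_adj]
    by_cases hy : y = w
    · subst hy; simp [h1, h]
    · simp [h1, h, hy]
  · apply e u
    refine Finset.sum_congr rfl fun y _ => ?_
    simp only [SimpleGraph.edge_adj]
    by_cases hy : y = u
    · subst hy; simp [h1]
    · simp [h1, hy]

/-- Star with centre `v` and leaves `S`. -/
def starG (v : V) (S : Set V) : SimpleGraph V where
  Adj x y := (x = v ∧ y ∈ S ∧ y ≠ v) ∨ (y = v ∧ x ∈ S ∧ x ≠ v)
  symm := ⟨fun _ _ h => h.symm⟩
  loopless := ⟨fun x h => by rcases h with h | h <;> exact h.2.2 h.1⟩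

lemma dz_star (v : V) (S : Set V) (x : V) (hx : x ≠ v) :
    dz (starG v S) x = if x ∈ S then 1 else 0 := by
  unfold dz starG
  simp only [hx, false_and, false_or]
  by_cases h : x ∈ S <;> simp [h, hx]

lemma dz_star_self (v : V) (S : Set V) (hv : v ∉ S) :
    dz (starG v S) v = ∑ w, if w ∈ S then 1 else 0 := by
  unfold dz starG
  refine Finset.sum_congr rfl fun w _ => ?_
  have : w ∈ S → w ≠ v := by rintro h rfl; exact hv h
  by_cases h : w ∈ S
  · simp [h, this h]
  · simp [h, hv]

/-- Every vertex with an edge has odd degree. -/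
def OddG (J : SimpleGraph V) : Prop := ∀ x y, J.Adj x y → dz J x = 1

lemma color3 (G A B : SimpleGraph V) (hA : A ≤ G) (hB : B ≤ G)
    (hAB : ∀ x y, A.Adj x y → ¬ B.Adj x y) (oA : OddG A) (oB : OddG B)
    (oC : OddG (G \ (A ⊔ B))) : OddEdgeColorable G 3 := by
  let c : Sym2 V → Fin 3 := fun e => if e ∈ A.edgeSet then 0 else if e ∈ B.edgeSet then 1 else 2
  have key : ∀ (J : SimpleGraph V) (i : Fin 3), OddG J →
      (∀ x y, (G.Adj x y ∧ c s(x, y) = i) ↔ J.Adj x y) →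
      ∀ v, classDeg G c i v ≠ 0 → Odd (classDeg G c i v) := by
    intro J i oJ hJ v hv
    have h1 : classDeg G c i v = J.degree v := by
      unfold classDeg
      rw [← SimpleGraph.card_incidenceFinset_eq_degree, ← Set.ncard_coe_finset]
      congr 1
      ext e
      induction e with
      | h x y =>
        simp only [Set.mem_ofPred_eq, SimpleGraph.mem_edgeSet, SimpleGraph.coe_incidenceFinset,
          SimpleGraph.incidenceSet, Set.mem_sep_iff]
        rw [← hJ]; tauto
    rw [h1] at hv ⊢
    have : 0 < J.degree v := Nat.pos_of_ne_zero hv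
    rw [SimpleGraph.degree_pos_iff_exists_adj] at this
    obtain ⟨w, hw⟩ := this
    have := oJ _ _ hw
    rw [dz_deg] at this
    exact (ZMod.natCast_eq_one_iff_odd).1 this
  refine ⟨c, fun i => ?_⟩
  fin_cases i
  · refine key A 0 oA ?_
    intro x y
    have := @hA x y
    simp only [c, SimpleGraph.mem_edgeSet]
    by_cases h1 : A.Adj x y <;> by_cases h2 : B.Adj x y <;> simp_all
  · refine key B 1 oB ?_
    intro x y
    have := @hB x y
    have := hAB x y
    simp only [c, SimpleGraph.mem_edgeSet]
    by_cases h1 : A.Adj x y <;> by_cases h2 : B.Adj x y <;> simp_all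
  · refine key _ 2 oC ?_
    intro x y
    simp only [c, SimpleGraph.mem_edgeSet]
    by_cases h1 : A.Adj x y <;> by_cases h2 : B.Adj x y <;> simp_all

/-- Cut formulation of connectivity of the vertex set `S`. -/
def CnD (G : SimpleGraph V) (S : Set V) : Prop :=
  ∀ X : Set V, (∃ x ∈ S, x ∈ X) → (∃ y ∈ S, y ∉ X) →
    ∃ a b, a ∈ S ∧ a ∈ X ∧ b ∈ S ∧ b ∉ X ∧ G.Adj a b

lemma cnd_of_conn (G : SimpleGraph V) (S : Set V) (h : (G.induce S).Connected) : CnD G S := by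
  rintro X ⟨x, hx, hxX⟩ ⟨y, hy, hyX⟩
  obtain ⟨w⟩ := h.preconnected ⟨x, hx⟩ ⟨y, hy⟩
  obtain ⟨d, _, h1, h2⟩ := w.exists_boundary_dart {z | z.1 ∈ X} hxX hyX
  exact ⟨d.fst.1, d.snd.1, d.fst.2, h1, d.snd.2, h2, d.adj⟩

lemma cnd_insert (G : SimpleGraph V) (S : Set V) (h : CnD G S) (u w : V) (hw : w ∈ S)
    (huw : G.Adj u w) : CnD G (insert u S) := by
  rintro X ⟨x, hx, hxX⟩ ⟨y, hy, hyX⟩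
  by_cases h1 : ∃ x ∈ S, x ∈ X
  · by_cases h2 : ∃ y ∈ S, y ∉ X
    · obtain ⟨a, b, ha, ha', hb, hb', hab⟩ := h X h1 h2
      exact ⟨a, b, Or.inr ha, ha', Or.inr hb, hb', hab⟩
    · push Not at h2
      have : y = u := by
        rcases hy with rfl | hy
        · rfl
        · exact absurd (h2 y hy) hyX
      subst this
      exact ⟨w, y, Or.inr hw, h2 w hw, Or.inl rfl, hyX, huw.symm⟩
  · push Not at h1
    have : x = u := by
      rcases hx with rfl | hx
      · rfl
      · exact absurd hxX (h1 x hx)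
    subst this
    exact ⟨x, w, Or.inl rfl, hxX, Or.inr hw, h1 w hw, huw⟩

lemma cnd_singleton (G : SimpleGraph V) (u : V) : CnD G {u} := by
  rintro X ⟨x, rfl, hxX⟩ ⟨y, rfl, hyX⟩
  exact absurd hxX hyX

/-- A good partial two-colouring on `D`. -/
structure GoodP (G : SimpleGraph V) (D : Finset V) (τ : V → ZMod 2) (L : V → ℕ)
    (F2 F3 : SimpleGraph V) (L2 L3 : V → ℕ) : Prop where
  le2 : F2 ≤ G
  le3 : F3 ≤ G
  in2 : ∀ x y, F2.Adj x y → x ∈ D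
  in3 : ∀ x y, F3.Adj x y → x ∈ D
  disj : ∀ x y, F2.Adj x y → ¬ F3.Adj x y
  sumL : ∀ x ∈ D, L2 x + L3 x = L x
  sumτ : ∀ x ∈ D, dz F2 x + dz F3 x = τ x
  odd2 : ∀ x ∈ D, ((∃ y, F2.Adj x y) ∨ L2 x ≠ 0) → dz F2 x + L2 x = 1
  odd3 : ∀ x ∈ D, ((∃ y, F3.Adj x y) ∨ L3 x ≠ 0) → dz F3 x + L3 x = 1

lemma GoodP.swap {G : SimpleGraph V} {D : Finset V} {τ : V → ZMod 2} {L : V → ℕ}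
    {F2 F3 : SimpleGraph V} {L2 L3 : V → ℕ} (h : GoodP G D τ L F2 F3 L2 L3) :
    GoodP G D τ L F3 F2 L3 L2 :=
  ⟨h.le3, h.le2, h.in3, h.in2, fun x y h1 h2 => h.disj x y h2 h1,
    fun x hx => by rw [add_comm]; exact h.sumL x hx,
    fun x hx => by rw [add_comm]; exact h.sumτ x hx, h.odd3, h.odd2⟩

lemma split_nat (l : ℕ) : ∃ a b : ℕ, a + b = l ∧ (a ≠ 0 → (a : ZMod 2) = 1) ∧
    (b ≠ 0 → (b : ZMod 2) = 1) := by
  rcases Nat.even_or_odd l with h | h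
  · rcases Nat.eq_zero_or_pos l with rfl | h0
    · exact ⟨0, 0, by simp⟩
    · refine ⟨1, l - 1, by omega, by simp, fun _ => ?_⟩
      rw [ZMod.natCast_eq_one_iff_odd]
      exact Nat.Even.sub_odd h0 h odd_one
  · exact ⟨l, 0, by simp, fun _ => (ZMod.natCast_eq_one_iff_odd).2 h, by simp⟩

lemma split_nat' (l : ℕ) : ∃ a b : ℕ, a + b = l ∧ (a : ZMod 2) = 0 ∧
    (b ≠ 0 → (b : ZMod 2) = 1) := by
  rcases Nat.even_or_odd l with h | h
  · exact ⟨l, 0, by simp, (ZMod.natCast_eq_zero_iff_even).2 h, by simp⟩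
  · exact ⟨0, l, by simp, by simp, fun _ => (ZMod.natCast_eq_one_iff_odd).2 h⟩

lemma goodP_empty (G : SimpleGraph V) (τ : V → ZMod 2) (L : V → ℕ) :
    GoodP G ∅ τ L ⊥ ⊥ L L := by
  constructor <;> simp

lemma goodP_iso {G : SimpleGraph V} {D : Finset V} {τ : V → ZMod 2} {L : V → ℕ}
    {F2 F3 : SimpleGraph V} {L2 L3 : V → ℕ} (h : GoodP G D τ L F2 F3 L2 L3) (u : V) (hu : u ∉ D)
    (hτ : τ u = 0) : ∃ F2 F3 L2 L3, GoodP G (insert u D) τ L F2 F3 L2 L3 := by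
  obtain ⟨a, b, hab, ha, hb⟩ := split_nat (L u)
  have n2 : ∀ y, ¬ F2.Adj u y := fun y hy => hu (h.in2 _ _ hy)
  have n3 : ∀ y, ¬ F3.Adj u y := fun y hy => hu (h.in3 _ _ hy)
  refine ⟨F2, F3, Function.update L2 u a, Function.update L3 u b, h.le2, h.le3,
    fun x y hx => Finset.mem_insert_of_mem (h.in2 x y hx),
    fun x y hx => Finset.mem_insert_of_mem (h.in3 x y hx), h.disj, ?_, ?_, ?_, ?_⟩
  all_goals
    intro x hx
    by_cases hxu : x = u
    · subst hxu
      first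
        | simpa using hab
        | (simp [dz_zero _ _ n2, dz_zero _ _ n3, hτ]; done)
        | simpa [dz_zero _ _ n2, n2] using ha
        | simpa [dz_zero _ _ n3, n3] using hb
    · have hx' : x ∈ D := by simpa [hxu] using hx
      first
        | simpa [hxu] using h.sumL x hx'
        | simpa [hxu] using h.sumτ x hx'
        | simpa [hxu] using h.odd2 x hx'
        | simpa [hxu] using h.odd3 x hx'

lemma goodP_edge {G : SimpleGraph V} {D : Finset V} {τ τ' : V → ZMod 2} {L L' : V → ℕ}
    {F2 F3 : SimpleGraph V} {L2 L3 : V → ℕ} (u w : V) (hu : u ∉ D) (hw : w ∈ D)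
    (huw : G.Adj u w)
    (h : GoodP G D τ' L' F2 F3 L2 L3)
    (hτ : τ u = 1) (hτ' : ∀ x ∈ D, τ' x = τ x + if x = w then 1 else 0)
    (hL' : ∀ x ∈ D, L' x = L x + if x = w then 1 else 0) (h2 : L2 w ≠ 0) :
    ∃ F2 F3 L2 L3, GoodP G (insert u D) τ L F2 F3 L2 L3 := by
  obtain ⟨a, b, hab, ha, hb⟩ := split_nat' (L u)
  have n2 : ∀ y, ¬ F2.Adj u y := fun y hy => hu (h.in2 _ _ hy)
  have n3 : ∀ y, ¬ F3.Adj u y := fun y hy => hu (h.in3 _ _ hy)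
  have hne : u ≠ w := huw.ne
  have e2 : ∀ x, dz (F2 ⊔ SimpleGraph.edge u w) x = dz F2 x + ((if x = u then 1 else 0) +
      (if x = w then 1 else 0)) := by
    intro x
    rw [dz_sup, dz_edge _ _ hne]
    intro x y h1 h2
    rw [SimpleGraph.edge_adj] at h2
    rcases h2.1 with ⟨rfl, rfl⟩ | ⟨rfl, rfl⟩
    · exact n2 _ h1
    · exact n2 _ h1.symm
  refine ⟨F2 ⊔ SimpleGraph.edge u w, F3, Function.update (Function.update L2 w (L2 w - 1)) u a,
    Function.update L3 u b, ?_, h.le3, ?_,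
    fun x y hx => Finset.mem_insert_of_mem (h.in3 x y hx), ?_, ?_, ?_, ?_, ?_⟩
  · intro x y hxy
    rcases hxy with hxy | hxy
    · exact h.le2 hxy
    · rw [SimpleGraph.edge_adj] at hxy
      rcases hxy.1 with ⟨rfl, rfl⟩ | ⟨rfl, rfl⟩
      · exact huw
      · exact huw.symm
  · intro x y hxy
    rcases hxy with hxy | hxy
    · exact Finset.mem_insert_of_mem (h.in2 _ _ hxy)
    · rw [SimpleGraph.edge_adj] at hxy
      rcases hxy.1 with ⟨rfl, rfl⟩ | ⟨rfl, rfl⟩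
      · simp
      · simp [hw]
  · intro x y hxy h3
    rcases hxy with hxy | hxy
    · exact h.disj _ _ hxy h3
    · rw [SimpleGraph.edge_adj] at hxy
      rcases hxy.1 with ⟨rfl, rfl⟩ | ⟨rfl, rfl⟩
      · exact n3 _ h3
      · exact n3 _ h3.symm
  · intro x hx
    by_cases hxu : x = u
    · subst hxu; simpa using hab
    have hx' : x ∈ D := by simpa [hxu] using hx
    have h3 := h.sumL x hx'
    rw [hL' x hx'] at h3
    by_cases hxw : x = w
    · subst hxw; simp [hxu] at h3 ⊢; omega
    · simpa [hxu, hxw] using h3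
  · intro x hx
    rw [e2]
    by_cases hxu : x = u
    · subst hxu; simp [hne, dz_zero _ _ n2, dz_zero _ _ n3, hτ]
    have hx' : x ∈ D := by simpa [hxu] using hx
    have h3 := h.sumτ x hx'
    rw [hτ' x hx'] at h3
    simp only [hxu, if_false, zero_add]
    rw [add_right_comm, h3, add_assoc, z2add, add_zero]
  · intro x hx
    rw [e2]
    by_cases hxu : x = u
    · subst hxu; simp [hne, dz_zero _ _ n2, ha]
    have hx' : x ∈ D := by simpa [hxu] using hx
    by_cases hxw : x = w
    · subst hxw
      intro _
      have h3 := h.odd2 x hx' (Or.inr h2)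
      obtain ⟨k, hk⟩ := Nat.exists_eq_succ_of_ne_zero h2
      simp [hxu, hk] at h3 ⊢
      linear_combination h3
    · have h3 := h.odd2 x hx'
      simpa [hxu, hxw, SimpleGraph.edge_adj] using h3
  · intro x hx
    by_cases hxu : x = u
    · subst hxu; simpa [dz_zero _ _ n3, n3] using hb
    have hx' : x ∈ D := by simpa [hxu] using hx
    simpa [hxu] using h.odd3 x hx'

lemma exists_goodP (G : SimpleGraph V) (D : Finset V) (hD : CnD G (D : Set V))
    (τ : V → ZMod 2) (L : V → ℕ) (hτ : ∑ x ∈ D, τ x = 0) :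
    ∃ F2 F3 L2 L3, GoodP G D τ L F2 F3 L2 L3 := by
  rcases D.eq_empty_or_nonempty with rfl | ⟨r, hr⟩
  · exact ⟨_, _, _, _, goodP_empty G τ L⟩
  let P : Finset V → Prop := fun E => E ⊆ D ∧ r ∈ E ∧ ∀ (τ : V → ZMod 2) (L : V → ℕ),
    ∑ x ∈ E, τ x = 0 → ∃ F2 F3 L2 L3, GoodP G E τ L F2 F3 L2 L3
  have hP : P {r} := by
    refine ⟨by simpa using hr, by simp, fun τ L h => ?_⟩
    have := goodP_iso (goodP_empty G τ L) r (by simp) (by simpa using h)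
    simpa using this
  obtain ⟨E, hE, hmax⟩ := Finset.exists_max_image (Finset.univ.filter P) Finset.card ⟨{r}, by simp [hP]⟩
  simp only [Finset.mem_filter, Finset.mem_univ, true_and] at hE hmax
  by_cases hED : E = D
  · subst hED; exact hE.2.2 τ L hτ
  exfalso
  obtain ⟨y, hy, hyE⟩ : ∃ y ∈ D, y ∉ E := by
    by_contra hh
    push Not at hh
    exact hED (Finset.Subset.antisymm hE.1 hh)
  obtain ⟨w, u, hw, hwE, hu, huE, hwu⟩ := hD (E : Set V) ⟨r, hr, hE.2.1⟩ ⟨y, hy, hyE⟩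
  have hwE' : w ∈ E := hwE
  have huE' : u ∉ E := huE
  have : P (insert u E) := by
    refine ⟨Finset.insert_subset hu hE.1, Finset.mem_insert_of_mem hE.2.1, fun τ L h => ?_⟩
    rw [Finset.sum_insert huE'] at h
    rcases z2 (τ u) with h0 | h1
    · rw [h0, zero_add] at h
      obtain ⟨F2, F3, L2, L3, hg⟩ := hE.2.2 τ L h
      exact goodP_iso hg u huE' h0
    · obtain ⟨F2, F3, L2, L3, hg⟩ := hE.2.2 (fun x => τ x + if x = w then 1 else 0)
        (fun x => L x + if x = w then 1 else 0) (by
          rw [Finset.sum_add_distrib, Finset.sum_ite_eq' E w]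
          rw [h1] at h; simp [hwE', ← h, add_comm])
      have hs := hg.sumL w hwE'
      simp at hs
      by_cases h2 : L2 w = 0
      · exact goodP_edge u w huE' hwE' hwu.symm hg.swap h1 (fun _ _ => rfl) (fun _ _ => rfl)
          (by omega)
      · exact goodP_edge u w huE' hwE' hwu.symm hg h1 (fun _ _ => rfl) (fun _ _ => rfl) h2
  have := hmax _ this
  rw [Finset.card_insert_of_notMem huE'] at this
  omega

/-- Joins exist in connected sets. -/
lemma exists_join (G : SimpleGraph V) (D : Finset V) (hD : CnD G (D : Set V))
    (τ : V → ZMod 2) (hτ : ∑ x ∈ D, τ x = 0) :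
    ∃ F : SimpleGraph V, F ≤ G ∧ (∀ x y, F.Adj x y → x ∈ D) ∧ ∀ x ∈ D, dz F x = τ x := by
  obtain ⟨F2, F3, L2, L3, h⟩ := exists_goodP G D hD τ 0 hτ
  refine ⟨F2 ⊔ F3, sup_le h.le2 h.le3, ?_, ?_⟩
  · rintro x y (hx | hx)
    · exact h.in2 _ _ hx
    · exact h.in3 _ _ hx
  · intro x hx
    rw [dz_sup _ _ h.disj]; exact h.sumτ x hx

/-- Joins all of whose components meet the terminal set. -/
lemma exists_join' (G : SimpleGraph V) (D : Finset V) (hD : CnD G (D : Set V))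
    (τ : V → ZMod 2) (hτ : ∑ x ∈ D, τ x = 0) :
    ∃ F : SimpleGraph V, F ≤ G ∧ (∀ x y, F.Adj x y → x ∈ D) ∧ (∀ x ∈ D, dz F x = τ x) ∧
      ∀ x y, F.Adj x y → ∃ z ∈ D, τ z = 1 ∧ F.Reachable x z := by
  obtain ⟨F, h1, h2, h3⟩ := exists_join G D hD τ hτ
  let F' : SimpleGraph V :=
    { Adj := fun x y => F.Adj x y ∧ ∃ z ∈ D, τ z = 1 ∧ F.Reachable x z
      symm := ⟨fun x y h => ⟨h.1.symm, by
        obtain ⟨z, a, b, c⟩ := h.2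
        exact ⟨z, a, b, h.1.symm.reachable.trans c⟩⟩⟩
      loopless := ⟨fun x h => F.loopless.irrefl x h.1⟩ }
  have hr : ∀ x z, F.Reachable x z → z ∈ D → τ z = 1 → F'.Reachable x z := by
    rintro x z ⟨w⟩ hz hz'
    induction w with
    | nil => exact SimpleGraph.Reachable.refl _
    | cons hadj w ih =>
      have : F'.Adj _ _ := ⟨hadj, _, hz, hz', hadj.reachable.trans ⟨w⟩⟩
      exact this.reachable.trans (ih hz hz')
  refine ⟨F', fun x y h => h1 h.1, fun x y h => h2 x y h.1, ?_, ?_⟩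
  · intro x hx
    by_cases hg : ∃ z ∈ D, τ z = 1 ∧ F.Reachable x z
    · rw [← h3 x hx]
      unfold dz
      refine Finset.sum_congr rfl fun y _ => ?_
      simp only [F', hg, and_true]
    · rw [dz_zero F' x (fun w hw => hg hw.2)]
      rcases z2 (τ x) with h | h
      · exact h.symm
      · exact absurd ⟨x, hx, h, SimpleGraph.Reachable.refl _⟩ hg
  · rintro x y ⟨_, z, hz, hz', hxz⟩
    exact ⟨z, hz, hz', hr x z hxz hz hz'⟩

/-- A chain in `R` from `A` to `N`. -/
def Ch (Γ : SimpleGraph V) (R A N : Set V) (m : ℕ) (p : ℕ → V) : Prop :=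
  p 0 ∈ A ∧ p m ∈ N ∧ (∀ i ≤ m, p i ∈ R) ∧ ∀ i < m, Γ.Adj (p i) (p (i + 1))

/-- Adjacency inside `R`. -/
def RAdj (Γ : SimpleGraph V) (R : Set V) (x y : V) : Prop := Γ.Adj x y ∧ x ∈ R ∧ y ∈ R

lemma rch_symm {Γ : SimpleGraph V} {R : Set V} {x y : V}
    (h : Relation.ReflTransGen (RAdj Γ R) x y) : Relation.ReflTransGen (RAdj Γ R) y x := by
  induction h with
  | refl => exact .refl
  | tail _ h ih => exact .head ⟨h.1.symm, h.2.2, h.2.1⟩ ih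

lemma rch_mono {Γ : SimpleGraph V} {R R' : Set V} (hR : R ⊆ R') {x y : V}
    (h : Relation.ReflTransGen (RAdj Γ R) x y) : Relation.ReflTransGen (RAdj Γ R') x y := by
  induction h with
  | refl => exact .refl
  | tail _ h ih => exact ih.tail ⟨h.1, hR h.2.1, hR h.2.2⟩

lemma ch_of_rch {Γ : SimpleGraph V} {R A N : Set V} {a u : V} (ha : a ∈ A) (hu : u ∈ N)
    (haR : a ∈ R) (h : Relation.ReflTransGen (RAdj Γ R) a u) : ∃ m p, Ch Γ R A N m p := by
  have : ∃ m p, p 0 = a ∧ Ch Γ R Set.univ N m p := by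
    clear ha
    induction h using Relation.ReflTransGen.head_induction_on with
    | refl => exact ⟨0, fun _ => u, rfl, trivial, hu, fun _ _ => haR, by simp⟩
    | head h _ ih =>
      rename_i b c _
      obtain ⟨m, p, h0, h1, h2, h3, h4⟩ := ih h.2.2
      refine ⟨m + 1, fun i => if i = 0 then b else p (i - 1), by simp, trivial, by simpa using h2,
        ?_, ?_⟩
      · intro i hi
        by_cases h : i = 0
        · simpa [h] using haR
        · simpa [h] using h3 (i - 1) (by omega)
      · intro i hi
        by_cases h' : i = 0
        · simpa [h', h0] using h.1
        · have := h4 (i - 1) (by omega)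
          rw [show i - 1 + 1 = i by omega] at this
          simpa [h'] using this
  obtain ⟨m, p, h0, _, h2⟩ := this
  exact ⟨m, p, h0 ▸ ha, h2⟩

lemma ch_short {Γ : SimpleGraph V} {R A N : Set V} {m : ℕ} {p : ℕ → V} (h : Ch Γ R A N m p)
    (i d : ℕ) (hi : i + 1 + d ≤ m) (hadj : Γ.Adj (p i) (p (i + 1 + d))) :
    ∃ p', Ch Γ R A N (m - d) p' := by
  obtain ⟨h1, h2, h3, h4⟩ := h
  refine ⟨fun k => if k ≤ i then p k else p (k + d), by simpa using h1, ?_, ?_, ?_⟩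
  · have : ¬ (m - d ≤ i) := by omega
    simp only [this, if_false]
    rwa [show m - d + d = m by omega]
  · intro k hk
    by_cases h : k ≤ i
    · simpa [h] using h3 k (by omega)
    · simpa [h] using h3 (k + d) (by omega)
  · intro k hk
    by_cases h : k ≤ i
    · by_cases h' : k = i
      · subst h'; simpa using hadj
      · have : k + 1 ≤ i := by omega
        simpa [h, this] using h4 k (by omega)
    · have : ¬ k + 1 ≤ i := by omega
      have h5 := h4 (k + d) (by omega)
      rw [show k + d + 1 = k + 1 + d by omega] at h5
      simpa [h, this] using h5

lemma three_sorted (I : Finset ℕ) (h : 2 < I.card) : ∃ i j l, i ∈ I ∧ j ∈ I ∧ l ∈ I ∧ i < j ∧ j < l := by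
  have hne : I.Nonempty := Finset.card_pos.1 (by omega)
  obtain ⟨j, hj⟩ : ((I.erase (I.min' hne)).erase (I.max' hne)).Nonempty := by
    apply Finset.card_pos.1
    have h1 := Finset.pred_card_le_card_erase (s := I) (a := I.min' hne)
    have h2 := Finset.pred_card_le_card_erase (s := I.erase (I.min' hne)) (a := I.max' hne)
    omega
  simp only [Finset.mem_erase] at hj
  exact ⟨_, j, _, I.min'_mem hne, hj.2.2, I.max'_mem hne,
    lt_of_le_of_ne (I.min'_le _ hj.2.2) (Ne.symm hj.2.1), lt_of_le_of_ne (I.le_max' _ hj.2.2) hj.1⟩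

lemma nonsep (G Γ : SimpleGraph V) (v : V) (A N : Set V)
    (hK : ∀ s : Finset V, s.card < 4 → CnD G (s : Set V)ᶜ) (hAN : ∀ x ∈ A, x ∉ N)
    (hΓ : ∀ x y, Γ.Adj x y → G.Adj x y)
    (hΓ' : ∀ x y, G.Adj x y → ¬ Γ.Adj x y → A ⊆ {x, y} ∧ N ⊆ {x, y})
    (r : V) (hrv : r ≠ v) (h0 : ∃ m p, Ch Γ {x | x ≠ v ∧ x ≠ r} A N m p) :
    ∃ (D : Finset V) (m : ℕ) (p : ℕ → V), D.Nonempty ∧ v ∉ D ∧ CnD G (D : Set V) ∧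
      (∀ x, x ∉ D ↔ (x = v ∨ ∃ i ≤ m, p i = x)) ∧ (∀ i ≤ m, p i ≠ v) ∧ p 0 ∈ A ∧ p m ∈ N ∧
      (∀ i < m, Γ.Adj (p i) (p (i + 1))) ∧ (∀ i ≤ m, p i ∈ A → i = 0) ∧
      (∀ i ≤ m, p i ∈ N → i = m) ∧
      (∀ i j, i < j → j ≤ m → Γ.Adj (p i) (p j) → j = i + 1) ∧
      (∀ i j, i < j → j ≤ m → p i ≠ p j) := by
  let Q : Finset V → Prop := fun D => D.Nonempty ∧ v ∉ D ∧ CnD G (D : Set V) ∧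
    ∃ m p, Ch Γ {x | x ≠ v ∧ x ∉ D} A N m p
  have hQ : Q {r} := by
    refine ⟨by simp, by simpa using hrv.symm, ?_, ?_⟩
    · rw [Finset.coe_singleton]; exact cnd_singleton G r
    · simpa using h0
  obtain ⟨D, hD, hmax⟩ := Finset.exists_max_image (Finset.univ.filter Q) Finset.card ⟨{r}, by simp [hQ]⟩
  simp only [Finset.mem_filter, Finset.mem_univ, true_and] at hD hmax
  obtain ⟨hDne, hvD, hDc, hex⟩ := hD
  have hmin := fun k => Nat.find_min (m := k) hex
  obtain ⟨p, hp⟩ := Nat.find_spec hex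
  generalize Nat.find hex = m at hmin hp
  have hmin' : ∀ k p', Ch Γ {x | x ≠ v ∧ x ∉ D} A N k p' → m ≤ k := by
    intro k p' h
    by_contra hk
    exact hmin k (by omega) ⟨p', h⟩
  have hpc := hp
  obtain ⟨hpA, hpN, hpR, hpadj⟩ := hp
  have hA0 : ∀ i ≤ m, p i ∈ A → i = 0 := by
    intro i hi hiA
    have : Ch Γ {x | x ≠ v ∧ x ∉ D} A N (m - i) (fun k => p (k + i)) := by
      refine ⟨by simpa using hiA, by simpa [Nat.sub_add_cancel hi] using hpN,
        fun k hk => hpR _ (by omega), fun k hk => ?_⟩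
      have := hpadj (k + i) (by omega)
      rwa [show k + i + 1 = k + 1 + i by omega] at this
    have := hmin' _ _ this
    omega
  have hNm : ∀ i ≤ m, p i ∈ N → i = m := by
    intro i hi hiN
    have : Ch Γ {x | x ≠ v ∧ x ∉ D} A N i p :=
      ⟨hpA, hiN, fun k hk => hpR k (by omega), fun k hk => hpadj k (by omega)⟩
    have := hmin' _ _ this
    omega
  have hind : ∀ i j, i < j → j ≤ m → Γ.Adj (p i) (p j) → j = i + 1 := by
    intro i j hij hj hadj
    obtain ⟨d, rfl⟩ : ∃ d, j = i + 1 + d := ⟨j - i - 1, by omega⟩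
    obtain ⟨p', hp'⟩ := ch_short hpc i d hj hadj
    have := hmin' _ _ hp'
    omega
  have hinj : ∀ i j, i < j → j ≤ m → p i ≠ p j := by
    intro i j hij hj he
    rcases Nat.lt_or_ge j m with h | h
    · have h1 := hpadj j h
      rw [← he] at h1
      have := hind i (j + 1) (by omega) (by omega) h1
      omega
    · have hjm : j = m := by omega
      subst hjm
      have := hNm i (by omega) (he ▸ hpN)
      omega
  have hDx : ∀ x, x ≠ v → x ∉ D → (∃ d ∈ D, G.Adj x d) →
      ¬ ∃ m p, Ch Γ {y | y ≠ v ∧ y ∉ insert x D} A N m p := by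
    rintro x hxv hxD ⟨d, hd, hxd⟩ hc
    have : Q (insert x D) := by
      refine ⟨by simp, ?_, ?_, hc⟩
      · simp [hvD, Ne.symm hxv]
      · rw [Finset.coe_insert]; exact cnd_insert G _ hDc x d hd hxd
    have := hmax _ this
    rw [Finset.card_insert_of_notMem hxD] at this
    omega
  have hP : ∀ x, x ≠ v → x ∉ D → ∃ i ≤ m, p i = x := by
    intro x0 hx0v hx0D
    by_contra hx0P
    let K : Set V := {k | ∃ i ≤ m, p i = k ∧ (i = 0 ∨ i = m ∨ ∃ d ∈ D, G.Adj k d)}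
    let Rk : Set V := {y | y ≠ v ∧ y ∉ D ∧ y ∉ K}
    have hx0K : x0 ∉ K := by
      rintro ⟨i, hi, h, _⟩; exact hx0P ⟨i, hi, h⟩
    have hx0 : x0 ∈ Rk := ⟨hx0v, hx0D, hx0K⟩
    let X : Set V := {y | Relation.ReflTransGen (RAdj Γ Rk) x0 y}
    have hXR : ∀ y ∈ X, y ∈ Rk := by
      intro y hy
      cases (hy : Relation.ReflTransGen (RAdj Γ Rk) x0 y) with
      | refl => exact hx0
      | tail _ h => exact h.2.2
    have hp0K : p 0 ∈ K := ⟨0, by omega, rfl, Or.inl rfl⟩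
    have hpmK : p m ∈ K := ⟨m, le_rfl, rfl, Or.inr (Or.inl rfl)⟩
    have hne0m : p 0 ≠ p m := fun h => hAN _ hpA (h ▸ hpN)
    have hXΓ : ∀ y ∈ X, ∀ z, G.Adj y z → Γ.Adj y z := by
      intro y hy z hyz
      by_contra hc
      obtain ⟨hA, hN⟩ := hΓ' y z hyz hc
      have hyK := (hXR y hy).2.2
      have h1 := hA hpA
      have h2 := hN hpN
      simp only [Set.mem_insert_iff, Set.mem_singleton_iff] at h1 h2
      rcases h1 with h1 | h1
      · exact hyK (h1 ▸ hp0K)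
      · rcases h2 with h2 | h2
        · exact hyK (h2 ▸ hpmK)
        · exact hne0m (h1.trans h2.symm)
    have hXn : ∀ y ∈ X, ∀ z, G.Adj y z → z ∈ X ∨ z ∈ K ∨ z = v := by
      intro y hy z hyz
      by_contra hc
      push Not at hc
      obtain ⟨hzX, hzK, hzv⟩ := hc
      have hyR := hXR y hy
      have hzD : z ∉ D := by
        intro hzD
        by_cases hyP : ∃ i ≤ m, p i = y
        · obtain ⟨i, hi, h⟩ := hyP
          exact hyR.2.2 ⟨i, hi, h, Or.inr (Or.inr ⟨z, hzD, hyz⟩)⟩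
        · refine hDx y hyR.1 hyR.2.1 ⟨z, hzD, hyz⟩ ⟨m, p, hpA, hpN, fun i hi => ⟨(hpR i hi).1, ?_⟩, hpadj⟩
          rw [Finset.mem_insert]
          rintro (h | h)
          · exact hyP ⟨i, hi, h⟩
          · exact (hpR i hi).2 h
      exact hzX (Relation.ReflTransGen.tail hy ⟨hXΓ y hy z hyz, hyR, hzv, hzD, hzK⟩)
    let Nb : Finset V := Finset.univ.filter (fun k => k ∈ K ∧ ∃ y ∈ X, G.Adj y k)
    have hNb : 2 < Nb.card := by
      by_contra hc
      obtain ⟨d, hd⟩ := hDne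
      obtain ⟨a, b, ha, haX, hb, hbX, hab⟩ := hK (insert v Nb)
        (by have := Finset.card_insert_le v Nb; omega) X
        ⟨x0, by simp [Nb, hx0v, hx0K], .refl⟩ ⟨d, by
          have hdv : d ≠ v := by rintro rfl; exact hvD hd
          have hdK : d ∉ K := by
            rintro ⟨i, hi, h, _⟩
            exact (hpR i hi).2 (h ▸ hd)
          simp [Nb, hdv, hdK], fun h => (hXR d h).2.1 hd⟩
      simp only [Finset.coe_insert, Set.mem_compl_iff, Set.mem_insert_iff, not_or,
        Finset.mem_coe, Nb, Finset.mem_filter, Finset.mem_univ, true_and] at hb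
      rcases hXn a haX b hab with h | h | h
      · exact hbX h
      · exact hb.2 ⟨h, a, haX, hab⟩
      · exact hb.1 h
    let I : Finset ℕ := (Finset.range (m + 1)).filter (fun i => p i ∈ Nb)
    have hI : 2 < I.card := by
      refine lt_of_lt_of_le hNb (le_trans (Finset.card_le_card ?_) (Finset.card_image_le (s := I) (f := p)))
      intro k hk
      have hk' := hk
      simp only [Nb, Finset.mem_filter, Finset.mem_univ, true_and] at hk
      obtain ⟨⟨i, hi, h, _⟩, _⟩ := hk
      rw [Finset.mem_image]
      refine ⟨i, ?_, h⟩
      simp only [I, Finset.mem_filter, Finset.mem_range]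
      exact ⟨by omega, h ▸ hk'⟩
    obtain ⟨i, j, l, hi, hj, hl, hij, hjl⟩ := three_sorted I hI
    simp only [I, Nb, Finset.mem_filter, Finset.mem_range, Finset.mem_univ, true_and] at hi hj hl
    obtain ⟨him, hiK, xi, hxi, hxip⟩ := hi
    obtain ⟨hjm, hjK, -⟩ := hj
    obtain ⟨hlm, hlK, xl, hxl, hxlp⟩ := hl
    have hjD : ∃ d ∈ D, G.Adj (p j) d := by
      obtain ⟨j', hj', he, hor⟩ := hjK
      have : j' = j := by
        rcases lt_trichotomy j' j with h | h | h
        · exact absurd he (hinj _ _ h (by omega))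
        · exact h
        · exact absurd he.symm (hinj _ _ h (by omega))
      subst this
      rcases hor with h | h | h
      · omega
      · omega
      · exact h
    let R' : Set V := {y | y ≠ v ∧ y ∉ insert (p j) D}
    have hR' : ∀ k ≤ m, k ≠ j → p k ∈ R' := by
      intro k hk hkj
      refine ⟨(hpR k hk).1, ?_⟩
      rw [Finset.mem_insert]
      rintro (h | h)
      · rcases Nat.lt_or_gt_of_ne hkj with h' | h'
        · exact hinj _ _ h' (by omega) h
        · exact hinj _ _ h' (by omega) h.symm
      · exact (hpR k hk).2 h
    have hRk : Rk ⊆ R' := by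
      rintro y ⟨h1, h2, h3⟩
      refine ⟨h1, ?_⟩
      rw [Finset.mem_insert]
      rintro (h | h)
      · exact h3 (h ▸ hjK)
      · exact h2 h
    have s1 : ∀ k ≤ i, Relation.ReflTransGen (RAdj Γ R') (p 0) (p k) := by
      intro k
      induction k with
      | zero => intro _; exact .refl
      | succ k ih =>
        intro hk
        exact .tail (ih (by omega)) ⟨hpadj k (by omega), hR' _ (by omega) (by omega),
          hR' _ (by omega) (by omega)⟩
    have s2 : ∀ k, l + k ≤ m → Relation.ReflTransGen (RAdj Γ R') (p l) (p (l + k)) := by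
      intro k
      induction k with
      | zero => intro _; exact .refl
      | succ k ih =>
        intro hk
        exact .tail (ih (by omega)) ⟨hpadj (l + k) (by omega), hR' _ (by omega) (by omega),
          hR' _ (by omega) (by omega)⟩
    have s3 : Relation.ReflTransGen (RAdj Γ R') (p i) xi :=
      .single ⟨(hXΓ xi hxi _ hxip).symm, hR' _ (by omega) (by omega), hRk (hXR _ hxi)⟩
    have s4 : Relation.ReflTransGen (RAdj Γ R') xi xl :=
      (rch_mono hRk (rch_symm hxi)).trans (rch_mono hRk hxl)
    have s5 : Relation.ReflTransGen (RAdj Γ R') xl (p l) :=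
      .single ⟨hXΓ xl hxl _ hxlp, hRk (hXR _ hxl), hR' _ (by omega) (by omega)⟩
    have s6 := s2 (m - l) (by omega)
    rw [show l + (m - l) = m by omega] at s6
    have := (s1 i le_rfl).trans (s3.trans (s4.trans (s5.trans s6)))
    exact hDx (p j) (hpR j (by omega)).1 (hpR j (by omega)).2 hjD
      (ch_of_rch hpA hpN (hR' 0 (by omega) (by omega)) this)
  refine ⟨D, m, p, hDne, hvD, hDc, ?_, fun i hi => (hpR i hi).1, hpA, hpN, hpadj, hA0, hNm, hind, hinj⟩
  intro x
  constructor
  · intro hx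
    by_cases hxv : x = v
    · exact Or.inl hxv
    · exact Or.inr (hP x hxv hx)
  · rintro (rfl | ⟨i, hi, rfl⟩)
    · exact hvD
    · exact (hpR i hi).2


lemma goodP_union {G : SimpleGraph V} {Q D : Finset V} {τ : V → ZMod 2} {L : V → ℕ}
    {F2 F3 : SimpleGraph V} {L2 L3 : V → ℕ} {F2' F3' : SimpleGraph V} {L2' L3' : V → ℕ}
    (h : GoodP G Q τ L F2 F3 L2 L3) (h' : GoodP G D τ L F2' F3' L2' L3')
    (hQD : ∀ x, x ∈ Q → x ∉ D) :
    GoodP G (Q ∪ D) τ L (F2 ⊔ F2') (F3 ⊔ F3') (fun x => if x ∈ Q then L2 x else L2' x)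
      (fun x => if x ∈ Q then L3 x else L3' x) := by
  have e2 : ∀ x, dz (F2 ⊔ F2') x = dz F2 x + dz F2' x :=
    dz_sup _ _ fun x y h1 h2 => hQD _ (h.in2 _ _ h1) (h'.in2 _ _ h2)
  have e3 : ∀ x, dz (F3 ⊔ F3') x = dz F3 x + dz F3' x :=
    dz_sup _ _ fun x y h1 h2 => hQD _ (h.in3 _ _ h1) (h'.in3 _ _ h2)
  have a2 : ∀ x y, x ∉ Q → ¬ F2.Adj x y := fun x y hx hh => hx (h.in2 _ _ hh)
  have a3 : ∀ x y, x ∉ Q → ¬ F3.Adj x y := fun x y hx hh => hx (h.in3 _ _ hh)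
  have b2 : ∀ x y, x ∈ Q → ¬ F2'.Adj x y := fun x y hx hh => hQD _ hx (h'.in2 _ _ hh)
  have b3 : ∀ x y, x ∈ Q → ¬ F3'.Adj x y := fun x y hx hh => hQD _ hx (h'.in3 _ _ hh)
  refine ⟨sup_le h.le2 h'.le2, sup_le h.le3 h'.le3, ?_, ?_, ?_, ?_, ?_, ?_, ?_⟩
  · rintro x y (hh | hh)
    · exact Finset.mem_union_left _ (h.in2 _ _ hh)
    · exact Finset.mem_union_right _ (h'.in2 _ _ hh)
  · rintro x y (hh | hh)
    · exact Finset.mem_union_left _ (h.in3 _ _ hh)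
    · exact Finset.mem_union_right _ (h'.in3 _ _ hh)
  · rintro x y (hh | hh) (hk | hk)
    · exact h.disj _ _ hh hk
    · exact b3 _ _ (h.in2 _ _ hh) hk
    · exact b2 _ _ (h.in3 _ _ hk) hh
    · exact h'.disj _ _ hh hk
  all_goals
    intro x hx
    try simp only [e2, e3, SimpleGraph.sup_adj]
    by_cases hxQ : x ∈ Q
    · have z2 := dz_zero _ _ (fun y => b2 x y hxQ)
      have z3 := dz_zero _ _ (fun y => b3 x y hxQ)
      have c2 := fun y => b2 x y hxQ
      have c3 := fun y => b3 x y hxQ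
      simp only [hxQ, z2, z3, c2, c3, add_zero, or_false, if_true]
      first | exact h.sumL x hxQ | exact h.sumτ x hxQ | exact h.odd2 x hxQ | exact h.odd3 x hxQ
    · have z2 := dz_zero _ _ (fun y => a2 x y hxQ)
      have z3 := dz_zero _ _ (fun y => a3 x y hxQ)
      have c2 := fun y => a2 x y hxQ
      have c3 := fun y => a3 x y hxQ
      have hxD : x ∈ D := by simpa [hxQ] using hx
      simp only [hxQ, z2, z3, c2, c3, zero_add, false_or, if_false]
      first | exact h'.sumL x hxD | exact h'.sumτ x hxD | exact h'.odd2 x hxD | exact h'.odd3 x hxD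

lemma goodP_half {G : SimpleGraph V} {D : Finset V} {v : V} (hD : v ∉ D) (hD' : ∀ x, x ≠ v → x ∈ D)
    {L2 : V → ℕ} {F2 : SimpleGraph V} (hin : ∀ x y, F2.Adj x y → x ∈ D) (hle : F2 ≤ G)
    (hL : ∀ x ∈ D, L2 x ≠ 0 → L2 x = 1 ∧ G.Adj v x) (hs : ∑ x ∈ D, (L2 x : ZMod 2) = 1)
    (ho : ∀ x ∈ D, ((∃ y, F2.Adj x y) ∨ L2 x ≠ 0) → dz F2 x + L2 x = 1) :
    F2 ⊔ starG v {x | x ∈ D ∧ L2 x ≠ 0} ≤ G ∧ OddG (F2 ⊔ starG v {x | x ∈ D ∧ L2 x ≠ 0}) ∧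
    (∀ x ∈ D, dz (F2 ⊔ starG v {x | x ∈ D ∧ L2 x ≠ 0}) x = dz F2 x + L2 x) ∧
    dz (F2 ⊔ starG v {x | x ∈ D ∧ L2 x ≠ 0}) v = 1 := by
  set S : Set V := {x | x ∈ D ∧ L2 x ≠ 0} with hS
  have nv : ∀ y, ¬ F2.Adj v y := fun y hy => hD (hin _ _ hy)
  have e : ∀ x, dz (F2 ⊔ starG v S) x = dz F2 x + dz (starG v S) x := by
    refine dz_sup _ _ ?_
    rintro x y h1 (h2 | h2)
    · rw [h2.1] at h1; exact nv _ h1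
    · rw [h2.1] at h1; exact nv _ h1.symm
  have hx : ∀ x ∈ D, dz (F2 ⊔ starG v S) x = dz F2 x + L2 x := by
    intro x hx
    have : x ≠ v := by rintro rfl; exact hD hx
    rw [e, dz_star _ _ _ this]
    congr 1
    by_cases h0 : L2 x = 0
    · simp [hS, h0]
    · simp [hS, h0, hx, hL x hx h0]
  have hvv : dz (F2 ⊔ starG v S) v = 1 := by
    rw [e, dz_zero _ _ nv, zero_add, dz_star_self _ _ (by simp [hS, hD])]
    refine Eq.trans ?_ hs
    refine ((Finset.sum_subset (Finset.subset_univ D) fun x _ hx => ?_).symm).trans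
      (Finset.sum_congr rfl fun x hx => ?_)
    · simp [hS, hx]
    · by_cases h0 : L2 x = 0
      · simp [hS, h0]
      · simp [hS, h0, hx, hL x hx h0]
  refine ⟨?_, ?_, hx, hvv⟩
  · refine sup_le hle ?_
    rintro x y (h | h)
    · rw [h.1]; exact (hL y h.2.1.1 h.2.1.2).2
    · rw [h.1]; exact (hL x h.2.1.1 h.2.1.2).2.symm
  · rintro x y h
    by_cases hxv : x = v
    · rw [hxv]; exact hvv
    · rw [hx x (hD' x hxv)]
      apply ho x (hD' x hxv)
      rcases h with h | h
      · exact .inl ⟨y, h⟩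
      · rcases h with h | h
        · exact absurd h.1 hxv
        · exact .inr h.2.1.2

lemma goodP_finish {G : SimpleGraph V} {D : Finset V} {v : V} (hD : v ∉ D) (hD' : ∀ x, x ≠ v → x ∈ D)
    {τ : V → ZMod 2} (hv : dz G v = 0)
    (hτ : ∀ x, τ x = dz G x + (if G.Adj v x then 1 else 0) + 1)
    {F2 F3 : SimpleGraph V} {L2 L3 : V → ℕ}
    (h : GoodP G D τ (fun x => if G.Adj v x then 1 else 0) F2 F3 L2 L3)
    (hs : ∑ x ∈ D, (L2 x : ZMod 2) = 1) : OddEdgeColorable G 3 := by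
  have hN : ∑ x ∈ D, (if G.Adj v x then (1 : ZMod 2) else 0) = 0 := by
    refine Eq.trans ?_ hv
    unfold dz
    refine Finset.sum_subset (Finset.subset_univ _) fun x _ hx => ?_
    have : x = v := by by_contra h; exact hx (hD' x h)
    simp [this]
  have hs3 : ∑ x ∈ D, (L3 x : ZMod 2) = 1 := by
    have : ∑ x ∈ D, ((L2 x : ZMod 2) + L3 x) = 0 := by
      rw [← hN]
      refine Finset.sum_congr rfl fun x hx => ?_
      have := h.sumL x hx
      rw [← Nat.cast_add, this]; split_ifs <;> simp
    rw [Finset.sum_add_distrib, hs] at this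
    rcases z2 (∑ x ∈ D, (L3 x : ZMod 2)) with h | h
    · rw [h] at this; exact absurd this (by decide)
    · exact h
  have hL : ∀ x ∈ D, L2 x + L3 x = if G.Adj v x then 1 else 0 := h.sumL
  obtain ⟨a1, a2, a3, a4⟩ := goodP_half hD hD' h.in2 h.le2 (fun x hx h0 => by
    have := hL x hx
    split_ifs at this with hh
    · exact ⟨by omega, hh⟩
    · omega) hs h.odd2
  obtain ⟨b1, b2, b3, b4⟩ := goodP_half hD hD' h.in3 h.le3 (fun x hx h0 => by
    have := hL x hx
    split_ifs at this with hh
    · exact ⟨by omega, hh⟩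
    · omega) hs3 h.odd3
  have hdisj : ∀ x y, (F2 ⊔ starG v {x | x ∈ D ∧ L2 x ≠ 0}).Adj x y →
      ¬ (F3 ⊔ starG v {x | x ∈ D ∧ L3 x ≠ 0}).Adj x y := by
    have hd : ∀ x, x ∈ D → L2 x ≠ 0 → L3 x ≠ 0 → False := by
      intro x hx h2 h3
      have := hL x hx
      split_ifs at this <;> omega
    have n2 : ∀ y, ¬ F2.Adj v y := fun y hy => hD (h.in2 _ _ hy)
    have n3 : ∀ y, ¬ F3.Adj v y := fun y hy => hD (h.in3 _ _ hy)
    rintro x y (h1 | ⟨h1, h1', h1''⟩ | ⟨h1, h1', h1''⟩) (h2 | ⟨h2, h2', h2''⟩ | ⟨h2, h2', h2''⟩)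
    · exact h.disj _ _ h1 h2
    · rw [h2] at h1; exact n2 _ h1
    · rw [h2] at h1; exact n2 _ h1.symm
    · rw [h1] at h2; exact n3 _ h2
    · exact hd _ h1'.1 h1'.2 h2'.2
    · exact h1'' h2
    · rw [h1] at h2; exact n3 _ h2.symm
    · exact h2'' h1
    · exact hd _ h1'.1 h1'.2 h2'.2
  refine color3 G _ _ a1 b1 hdisj a2 b2 ?_
  intro x y hxy
  have hne : x ≠ v := by
    rintro rfl
    have hxy' := hxy
    rw [SimpleGraph.sdiff_adj] at hxy
    have hyx : y ≠ x := hxy.1.ne'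
    have hyD := hD' y hyx
    apply hxy.2
    have := hL y hyD
    rw [if_pos hxy.1] at this
    by_cases h2 : L2 y = 0
    · exact .inr (.inr (.inl ⟨rfl, ⟨hyD, by omega⟩, hyx⟩))
    · exact .inl (.inr (.inl ⟨rfl, ⟨hyD, h2⟩, hyx⟩))
  have hxD := hD' x hne
  rw [dz_sdiff _ _ (sup_le a1 b1), dz_sup _ _ hdisj, a3 x hxD, b3 x hxD]
  have e1 := h.sumτ x hxD
  rw [hτ] at e1
  have e2 := hL x hxD
  have e3 : ((L2 x : ZMod 2) + L3 x) = if G.Adj v x then 1 else 0 := by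
    rw [← Nat.cast_add, e2]; split_ifs <;> simp
  rw [← e3] at e1
  generalize dz G x = a at *
  generalize dz F2 x = b at *
  generalize dz F3 x = c at *
  generalize (L2 x : ZMod 2) = d at *
  generalize (L3 x : ZMod 2) = e at *
  clear * - e1
  revert a b c d e
  decide

lemma caseI (G : SimpleGraph V) (hodd : Odd (Fintype.card V)) (v : V) (hv : dz G v = 0)
    (Q D : Finset V) (hQD : ∀ x, x ∈ Q → x ∉ D) (hU : ∀ x, x ≠ v ↔ x ∈ Q ∨ x ∈ D)
    (hQ : CnD G (Q : Set V)) (hD : CnD G (D : Set V))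
    (hQN : ∑ x ∈ Q, (if G.Adj v x then (1 : ZMod 2) else 0) = 1)
    (hQτ : ∑ x ∈ Q, (dz G x + (if G.Adj v x then 1 else 0) + 1) = 0) :
    OddEdgeColorable G 3 := by
  set τ : V → ZMod 2 := fun x => dz G x + (if G.Adj v x then 1 else 0) + 1 with hτ
  have hvU : v ∉ Q ∪ D := by
    intro h; rw [Finset.mem_union] at h; exact (hU v).2 h rfl
  have hU' : ∀ x, x ≠ v → x ∈ Q ∪ D := fun x hx => Finset.mem_union.2 ((hU x).1 hx)
  have hdis : Disjoint Q D := Finset.disjoint_left.2 (fun x => hQD x)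
  have hDτ : ∑ x ∈ D, τ x = 0 := by
    have h1 : ∑ x, τ x = 1 := by
      simp only [hτ, Finset.sum_add_distrib, handshake]
      have : ∑ x, (if G.Adj v x then (1 : ZMod 2) else 0) = 0 := hv
      rw [this]
      simp only [Finset.sum_const, Finset.card_univ, zero_add, nsmul_eq_mul, mul_one]
      exact (ZMod.natCast_eq_one_iff_odd).2 hodd
    have h2 : (Finset.univ : Finset V) = insert v (Q ∪ D) := by
      ext x
      simp only [Finset.mem_univ, Finset.mem_insert, true_iff]
      by_cases h : x = v
      · exact .inl h
      · exact .inr (hU' x h)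
    rw [h2, Finset.sum_insert hvU, Finset.sum_union hdis, hQτ] at h1
    have : τ v = 1 := by simp [hτ, hv]
    rw [this, zero_add] at h1
    rcases z2 (∑ x ∈ D, τ x) with h | h
    · exact h
    · rw [h] at h1; exact absurd h1 (by decide)
  obtain ⟨F2, F3, L2, L3, h⟩ := exists_goodP G Q hQ τ (fun x => if G.Adj v x then 1 else 0) hQτ
  obtain ⟨F2', F3', L2', L3', h'⟩ := exists_goodP G D hD τ (fun x => if G.Adj v x then 1 else 0) hDτ
  have hsum : ∀ M : V → ℕ, ∑ x ∈ Q ∪ D, (((if x ∈ Q then M x else L2' x) : ℕ) : ZMod 2) =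
      ∑ x ∈ Q, (M x : ZMod 2) + ∑ x ∈ D, (L2' x : ZMod 2) := by
    intro M
    rw [Finset.sum_union hdis]
    congr 1
    · exact Finset.sum_congr rfl fun x hx => by simp [hx]
    · exact Finset.sum_congr rfl fun x hx => by simp [Finset.disjoint_right.1 hdis hx]
  have h1 : ∑ x ∈ Q, (L2 x : ZMod 2) + ∑ x ∈ Q, (L3 x : ZMod 2) = 1 := by
    rw [← Finset.sum_add_distrib, ← hQN]
    refine Finset.sum_congr rfl fun x hx => ?_
    rw [← Nat.cast_add, h.sumL x hx]; split_ifs <;> simp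
  by_cases h2 : ∑ x ∈ Q, (L2 x : ZMod 2) + ∑ x ∈ D, (L2' x : ZMod 2) = 1
  · exact goodP_finish hvU hU' hv (fun x => rfl) (goodP_union h h' hQD) ((hsum L2).trans h2)
  · refine goodP_finish hvU hU' hv (fun x => rfl) (goodP_union h.swap h' hQD) ((hsum L3).trans ?_)
    generalize ∑ x ∈ Q, (L2 x : ZMod 2) = a at *
    generalize ∑ x ∈ Q, (L3 x : ZMod 2) = b at *
    generalize ∑ x ∈ D, (L2' x : ZMod 2) = c at *
    clear * - h1 h2
    revert a b c
    decide

lemma exists_notin (s : Finset V) (h : s.card < Fintype.card V) : ∃ x, x ∉ s := by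
  by_contra hh
  push Not at hh
  have : s = Finset.univ := Finset.eq_univ_iff_forall.2 hh
  rw [this, Finset.card_univ] at h
  omega

lemma path_cnd (G : SimpleGraph V) (p : ℕ → V) (m : ℕ) (h : ∀ i < m, G.Adj (p i) (p (i + 1))) :
    CnD G {x | ∃ i ≤ m, p i = x} := by
  induction m with
  | zero =>
    have : {x | ∃ i ≤ 0, p i = x} = {p 0} := by ext x; simp [eq_comm]
    rw [this]; exact cnd_singleton _ _
  | succ m ih =>
    have : {x | ∃ i ≤ m + 1, p i = x} = insert (p (m + 1)) {x | ∃ i ≤ m, p i = x} := by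
      ext x
      simp only [Set.mem_ofPred_eq, Set.mem_insert_iff]
      constructor
      · rintro ⟨i, hi, rfl⟩
        by_cases h : i = m + 1
        · left; rw [h]
        · right; exact ⟨i, by omega, rfl⟩
      · rintro (rfl | ⟨i, hi, rfl⟩)
        · exact ⟨_, le_rfl, rfl⟩
        · exact ⟨i, by omega, rfl⟩
    rw [this]
    exact cnd_insert _ _ (ih fun i hi => h i (by omega)) _ (p m) ⟨m, le_rfl, rfl⟩ (h m (by omega)).symm

lemma rch_of_cnd {G : SimpleGraph V} {S : Set V} (h : CnD G S) {a b : V} (ha : a ∈ S) (hb : b ∈ S) :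
    Relation.ReflTransGen (RAdj G S) a b := by
  by_contra hh
  obtain ⟨x, y, hx, hx', hy, hy', hxy⟩ := h {x | Relation.ReflTransGen (RAdj G S) a x}
    ⟨a, ha, .refl⟩ ⟨b, hb, hh⟩
  exact hy' (Relation.ReflTransGen.tail hx' ⟨hxy, hx, hy⟩)

lemma caseIa (G : SimpleGraph V) (hodd : Odd (Fintype.card V))
    (hK : ∀ s : Finset V, s.card < 4 → CnD G (↑s : Set V)ᶜ) (v : V) (hv : dz G v = 0)
    (u : V) (huv : G.Adj v u) (hu : dz G u = 0) : OddEdgeColorable G 3 := by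
  refine caseI G hodd v hv {u} (Finset.univ \ {v, u}) ?_ ?_ ?_ ?_ ?_ ?_
  · intro x; simp +contextual
  · intro x
    have := huv.ne'
    simp only [Finset.mem_singleton, Finset.mem_sdiff, Finset.mem_univ, true_and, Finset.mem_insert]
    by_cases h : x = u
    · simp [h, this]
    · simp [h]
  · simpa using cnd_singleton G u
  · have := hK {v, u} (lt_of_le_of_lt (Finset.card_le_two) (by norm_num))
    convert this using 1
    ext x; simp
  · rw [Finset.sum_singleton, if_pos huv]
  · simp [huv, hu]; decide

lemma caseIb (G : SimpleGraph V) (hodd : Odd (Fintype.card V)) (hcard : 4 < Fintype.card V)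
    (hK : ∀ s : Finset V, s.card < 4 → CnD G (↑s : Set V)ᶜ) (v : V) (hv : dz G v = 0)
    (hN : ∀ u, G.Adj v u → dz G u = 1) (a : V) (hav : a ≠ v) (ha : dz G a = 0) :
    OddEdgeColorable G 3 := by
  obtain ⟨u, hu⟩ : ∃ u, G.Adj v u := by
    obtain ⟨x, y, _, hx, _, _, hxy⟩ := hK ∅ (by simp) {v} ⟨v, by simp⟩ ⟨a, by simp [hav]⟩
    rw [Set.mem_singleton_iff.1 hx] at hxy
    exact ⟨y, hxy⟩
  obtain ⟨r, hr⟩ := exists_notin {v, a, u} (lt_of_le_of_lt Finset.card_le_three (by omega))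
  simp only [Finset.mem_insert, Finset.mem_singleton, not_or] at hr
  have hc := hK {v, r} (lt_of_le_of_lt (Finset.card_le_two) (by norm_num))
  have hs : ((({v, r} : Finset V) : Set V))ᶜ = {x | x ≠ v ∧ x ≠ r} := by ext x; simp
  rw [hs] at hc
  have haR : a ∈ {x | x ≠ v ∧ x ≠ r} := ⟨hav, fun h => hr.2.1 h.symm⟩
  have h0 := ch_of_rch (A := {x | x ≠ v ∧ dz G x = 0}) (N := {x | G.Adj v x}) ⟨hav, ha⟩ hu haR
    (rch_of_cnd hc haR ⟨hu.ne', fun h => hr.2.2 h.symm⟩)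
  obtain ⟨D, m, p, hDne, hvD, hDc, hDp, hpv, hp0, hpm, hadj, hA, hNm, -, hinj⟩ :=
    nonsep G G v {x | x ≠ v ∧ dz G x = 0} {x | G.Adj v x} hK
      (fun x hx hx' => by have := hN x hx'; rw [hx.2] at this; exact absurd this (by decide))
      (fun _ _ h => h) (fun _ _ h h' => absurd h h') r hr.1 h0
  have hQc := path_cnd G p m hadj
  set Q : Finset V := Finset.univ.filter (fun x => ∃ i ≤ m, p i = x) with hQ
  have hmQ : ∀ x, x ∈ Q ↔ ∃ i ≤ m, p i = x := by intro x; simp [hQ]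
  have sN : ∑ x ∈ Q, (if G.Adj v x then (1 : ZMod 2) else 0) = 1 := by
    rw [Finset.sum_eq_single (p m)]
    · exact if_pos hpm
    · intro x hx hne
      obtain ⟨i, hi, rfl⟩ := (hmQ x).1 hx
      refine if_neg fun h => hne ?_
      rw [hNm i hi h]
    · intro h; exact absurd ((hmQ _).2 ⟨m, le_rfl, rfl⟩) h
  have sA : ∑ x ∈ Q, (dz G x + 1) = 1 := by
    rw [Finset.sum_eq_single (p 0)]
    · rw [hp0.2, zero_add]
    · intro x hx hne
      obtain ⟨i, hi, rfl⟩ := (hmQ x).1 hx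
      rcases z2 (dz G (p i)) with h | h
      · exact absurd (by rw [hA i hi ⟨hpv i hi, h⟩]) hne
      · rw [h]; decide
    · intro h; exact absurd ((hmQ _).2 ⟨0, by omega, rfl⟩) h
  refine caseI G hodd v hv Q D ?_ ?_ ?_ hDc sN ?_
  · intro x hx; rw [hDp]; right; exact (hmQ x).1 hx
  · intro x
    have := hDp x
    rw [hmQ]
    constructor
    · intro h
      by_cases hxD : x ∈ D
      · exact .inr hxD
      · exact .inl ((this.1 hxD).resolve_left h)
    · rintro (⟨i, hi, rfl⟩ | h) hh
      · exact hpv i hi hh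
      · rw [hh] at h; exact hvD h
  · convert hQc using 1
    ext x; simp [hQ]
  · have : ∀ x ∈ Q, (dz G x + (if G.Adj v x then 1 else 0) + 1) =
        (dz G x + 1) + (if G.Adj v x then (1 : ZMod 2) else 0) := fun x _ => by ring
    rw [Finset.sum_congr rfl this, Finset.sum_add_distrib, sA, sN]; decide

lemma caseIII (G : SimpleGraph V) (hodd : Odd (Fintype.card V)) (hcard : 4 < Fintype.card V)
    (hK : ∀ s : Finset V, s.card < 4 → CnD G (↑s : Set V)ᶜ) (v : V) (hv : dz G v = 0)
    (hN : ∀ u, u ≠ v → G.Adj v u) (ho : ∀ u, u ≠ v → dz G u = 1) :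
    OddEdgeColorable G 3 := by
  have hn : ((Fintype.card V : ℕ) : ZMod 2) = 1 := (ZMod.natCast_eq_one_iff_odd).2 hodd
  obtain ⟨a, hav⟩ := exists_notin {v} (by simp; omega)
  simp only [Finset.mem_singleton, ← ne_eq] at hav
  obtain ⟨b, hba, hab⟩ : ∃ b, b ≠ a ∧ ¬ G.Adj a b := by
    by_contra hh
    push Not at hh
    have h1 := ho a hav
    have h2 : ∑ w : V, (1 : ZMod 2) = 1 := by simp [hn]
    have h3 : ∑ w : V, (1 : ZMod 2) = dz G a + 1 := by
      unfold dz
      rw [← Finset.add_sum_erase _ _ (Finset.mem_univ a)]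
      rw [← Finset.add_sum_erase _ (fun w => if G.Adj a w then (1 : ZMod 2) else 0) (Finset.mem_univ a)]
      rw [add_comm]
      simp only [SimpleGraph.irrefl, if_false, zero_add]
      congr 1
      refine Finset.sum_congr rfl fun x hx => ?_
      rw [if_pos (hh x (Finset.ne_of_mem_erase hx))]
    rw [h2, h1] at h3
    exact absurd h3 (by decide)
  have hbv : b ≠ v := by rintro rfl; exact hab (hN a hav).symm
  have hc := hK {v, a, b} (lt_of_le_of_lt Finset.card_le_three (by norm_num))
  obtain ⟨H, hHG, hHD, hHd⟩ := exists_join G (Finset.univ \ {v, a, b})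
    (by convert hc using 1; ext x; simp) (fun _ => 1) (by
      rw [Finset.sum_const, ← Finset.compl_eq_univ_sdiff, Finset.card_compl,
        show ({v, a, b} : Finset V).card = 3 from Finset.card_eq_three.2
          ⟨v, a, b, hav.symm, hbv.symm, hba.symm, rfl⟩]
      rw [nsmul_eq_mul, Nat.cast_sub (by omega), hn]; decide)
  have hHx : ∀ x y, H.Adj x y → x ≠ v ∧ x ≠ a ∧ x ≠ b := by
    intro x y h
    simpa using hHD x y h
  have hHd' : ∀ x, x ≠ v → x ≠ a → x ≠ b → dz H x = 1 := by
    intro x h1 h2 h3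
    exact hHd x (by simp [h1, h2, h3])
  have hH0 : ∀ x, (x = v ∨ x = a ∨ x = b) → dz H x = 0 := by
    intro x hx
    refine dz_zero _ _ fun y hy => ?_
    have := hHx _ _ hy
    tauto
  set B := G \ H with hB
  have hBG : B ≤ G := sdiff_le
  have dB : ∀ x, dz B x = dz G x + dz H x := dz_sdiff _ _ hHG
  have hBv : ∀ x, x ≠ v → B.Adj x v := by
    intro x hx
    rw [hB, SimpleGraph.sdiff_adj]
    exact ⟨(hN x hx).symm, fun h => (hHx _ _ h.symm).1 rfl⟩
  have hvab : v ∈ Finset.univ \ {a, b} := by simp [hav.symm, hbv.symm]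
  obtain ⟨M, hMB, hMD, hMd⟩ := exists_join B (Finset.univ \ {a, b}) (by
      intro X h1 h2
      by_cases hX : v ∈ X
      · obtain ⟨y, hy, hyX⟩ := h2
        exact ⟨v, y, hvab, hX, hy, hyX, (hBv y (fun h => hyX (h ▸ hX))).symm⟩
      · obtain ⟨y, hy, hyX⟩ := h1
        exact ⟨y, v, hy, hyX, hvab, hX, (hBv y (fun h => hX (h ▸ hyX)))⟩)
    (fun w => if G.Adj a w then 0 else 1) (by
      have h1 : ∑ w, (if G.Adj a w then (0 : ZMod 2) else 1) = 0 := by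
        have h2 : ∑ w, (if G.Adj a w then (0 : ZMod 2) else 1) = dz G a + ∑ w : V, (1 : ZMod 2) := by
          unfold dz
          rw [← Finset.sum_add_distrib]
          refine Finset.sum_congr rfl fun x _ => ?_
          split_ifs
          · decide
          · simp
        rw [h2, ho a hav]; simp [hn]; decide
      rw [← Finset.sum_sdiff (Finset.subset_univ {a, b}), Finset.sum_pair hba.symm, if_neg hab,
        if_neg (G.loopless.irrefl a)] at h1
      rw [show (1 : ZMod 2) + 1 = 0 from rfl, add_zero] at h1
      exact h1)
  have hMx : ∀ x y, M.Adj x y → x ≠ a ∧ x ≠ b := by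
    intro x y h
    simpa using hMD x y h
  have hMd' : ∀ x, x ≠ a → x ≠ b → dz M x = if G.Adj a x then 0 else 1 := by
    intro x h2 h3
    exact hMd x (by simp [h2, h3])
  set A := M ⊔ starG a {w | G.Adj a w} with hA
  have hAB : A ≤ B := by
    refine sup_le hMB ?_
    rintro x y (⟨h1, h2, h3⟩ | ⟨h1, h2, h3⟩)
    · rw [hB, SimpleGraph.sdiff_adj, h1]
      exact ⟨h2, fun h => (hHx _ _ h).2.1 rfl⟩
    · rw [hB, SimpleGraph.sdiff_adj, h1]
      exact ⟨h2.symm, fun h => (hHx _ _ h.symm).2.1 rfl⟩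
  have dA : ∀ x, dz A x = dz M x + dz (starG a {w | G.Adj a w}) x := by
    refine dz_sup _ _ ?_
    rintro x y h (⟨h1, h2, h3⟩ | ⟨h1, h2, h3⟩)
    · exact (hMx _ _ h).1 h1
    · exact (hMx _ _ h.symm).1 h1
  have dA1 : ∀ x, x ≠ a → x ≠ b → dz A x = 1 := by
    intro x h1 h2
    rw [dA, hMd' x h1 h2, dz_star _ _ _ h1]
    by_cases h : G.Adj a x <;> simp [h]
  have dAa : dz A a = 1 := by
    rw [dA, dz_zero _ _ (fun y h => (hMx _ _ h).1 rfl), dz_star_self _ _ (by simp), zero_add]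
    exact ho a hav
  have nAb : ∀ y, ¬ A.Adj b y := by
    rintro y (h | ⟨h1, h2, h3⟩ | ⟨h1, h2, h3⟩)
    · exact (hMx _ _ h).2 rfl
    · exact hba h1
    · exact hab h2
  refine color3 G A (B \ A) (hAB.trans hBG) (sdiff_le.trans hBG) ?_ ?_ ?_ ?_
  · intro x y h h'
    exact h'.2 h
  · intro x y h
    by_cases hxa : x = a
    · rw [hxa]; exact dAa
    · by_cases hxb : x = b
      · rw [hxb] at h; exact absurd h (nAb y)
      · exact dA1 x hxa hxb
  · intro x y h
    rw [dz_sdiff _ _ hAB, dB]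
    by_cases hxa : x = a
    · exfalso
      apply h.2
      rw [hxa] at h ⊢
      have := hBG h.1
      exact .inr (.inl ⟨rfl, this, this.ne'⟩)
    by_cases hxb : x = b
    · rw [hxb, dz_zero _ _ nAb, hH0 b (by simp), ho b hbv]; decide
    rw [dA1 x hxa hxb]
    by_cases hxv : x = v
    · rw [hxv, hv, hH0 v (by simp)]; decide
    · rw [ho x hxv, hHd' x hxv hxa hxb]; decide
  · have : G \ (A ⊔ B \ A) = H := by
      rw [sup_sdiff_cancel_right hAB, hB, sdiff_sdiff_eq_self hHG]
    rw [this]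
    intro x y h
    have := hHx _ _ h
    exact hHd' x this.1 this.2.1 this.2.2

lemma reach_cut {B : SimpleGraph V} {x y : V} (h : B.Reachable x y) (X : Set V) (hx : x ∈ X)
    (hy : y ∉ X) : ∃ a b, a ∈ X ∧ b ∉ X ∧ B.Adj a b := by
  obtain ⟨w⟩ := h
  obtain ⟨d, _, h1, h2⟩ := w.exists_boundary_dart X hx hy
  exact ⟨_, _, h1, h2, d.adj⟩

lemma caseII_end (G B : SimpleGraph V) (v : V) (ho : ∀ u, u ≠ v → dz G u = 1) (hBG : B ≤ G)
    (hB : ∀ x, dz B x = 0) (hBv : ∀ x, G.Adj v x → B.Adj v x)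
    (hr : ∀ x y, B.Adj x y → B.Reachable x v)
    (hW : ∑ x, (if ∃ y, B.Adj x y then (1 : ZMod 2) else 0) = 0) : OddEdgeColorable G 3 := by
  obtain ⟨A, hAB, hAW, hAd⟩ := exists_join B (Finset.univ.filter fun x => ∃ y, B.Adj x y) (by
      rintro X ⟨x, hx, hxX⟩ ⟨y, hy, hyX⟩
      simp only [Finset.coe_filter, Finset.mem_univ, true_and, Set.mem_ofPred_eq] at hx hy ⊢
      obtain ⟨x', hx⟩ := hx
      obtain ⟨y', hy⟩ := hy
      obtain ⟨a, b, h1, h2, h3⟩ := reach_cut ((hr _ _ hx).trans (hr _ _ hy).symm) X hxX hyX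
      exact ⟨a, b, ⟨b, h3⟩, h1, ⟨a, h3.symm⟩, h2, h3⟩) (fun _ => 1) (by
      rw [Finset.sum_filter]; exact hW)
  have hAd' : ∀ x y, B.Adj x y → dz A x = 1 := by
    intro x y h
    refine hAd x ?_
    simp only [Finset.mem_filter, Finset.mem_univ, true_and]
    exact ⟨y, h⟩
  refine color3 G A (B \ A) (hAB.trans hBG) (sdiff_le.trans hBG) (fun x y h h' => h'.2 h) ?_ ?_ ?_
  · intro x y h
    exact hAd' x y (hAB h)
  · intro x y h
    rw [dz_sdiff _ _ hAB, hB, hAd' x y h.1, zero_add]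
  · rw [sup_sdiff_cancel_right hAB]
    intro x y h
    have : x ≠ v := by
      rintro rfl
      exact h.2 (hBv _ h.1)
    rw [dz_sdiff _ _ hBG, hB, ho x this, add_zero]

/-- Optional edge. -/
noncomputable def hang (a b : V) (h : ZMod 2) : SimpleGraph V :=
  if h = 1 then SimpleGraph.edge a b else ⊥

lemma hang_adj {a b : V} (hab : a ≠ b) {h : ZMod 2} {x y : V} :
    (hang a b h).Adj x y ↔ h = 1 ∧ ((x = a ∧ y = b) ∨ (x = b ∧ y = a)) := by
  unfold hang
  by_cases hh : h = 1
  · simp only [hh, if_true, SimpleGraph.edge_adj, true_and]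
    constructor
    · rintro ⟨h, _⟩; tauto
    · rintro (⟨rfl, rfl⟩ | ⟨rfl, rfl⟩)
      · exact ⟨by tauto, hab⟩
      · exact ⟨by tauto, hab.symm⟩
  · simp [hh]

lemma dz_hang {a b : V} (hab : a ≠ b) (h : ZMod 2) (x : V) :
    dz (hang a b h) x = (if x = a then h else 0) + (if x = b then h else 0) := by
  unfold hang
  rcases z2 h with rfl | rfl
  · simp [dz_bot]
  · simp [dz_edge a b hab x]

/-- The even subgraph used in case II. -/
noncomputable def bigB (G : SimpleGraph V) (v s ds t dt : V) (hs ht : ZMod 2)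
    (JD J : SimpleGraph V) : SimpleGraph V :=
  starG v {x | G.Adj v x} ⊔ (JD ⊔ (J ⊔ (hang s ds hs ⊔ hang t dt ht)))

lemma two_nbr {Y J : SimpleGraph V} {x y z : V} (hyz : y ≠ z) (hY : ∀ w, Y.Adj x w ↔ w = y ∨ w = z)
    (hJ : J ≤ Y) : dz J x = (if J.Adj x y then 1 else 0) + (if J.Adj x z then 1 else 0) := by
  unfold dz
  rw [← Finset.sum_pair (f := fun w => if J.Adj x w then (1 : ZMod 2) else 0) hyz]
  refine (Finset.sum_subset (Finset.subset_univ _) fun w _ hw => ?_).symm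
  refine if_neg fun h => hw ?_
  have := (hY w).1 (hJ h)
  simpa using this

lemma two_all {Y J : SimpleGraph V} {x : V} (h2 : ∃ y z, y ≠ z ∧ ∀ w, Y.Adj x w ↔ w = y ∨ w = z)
    (hJ : J ≤ Y) (h0 : dz J x = 0) {w w' : V} (hw : J.Adj x w) (hw' : Y.Adj x w') : J.Adj x w' := by
  obtain ⟨y, z, hyz, hY⟩ := h2
  rw [two_nbr hyz hY hJ] at h0
  have h1 := (hY w).1 (hJ hw)
  have h3 := (hY w').1 hw'
  by_cases a : J.Adj x y <;> by_cases b : J.Adj x z <;> simp_all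
  all_goals first
    | (rcases h3 with rfl | rfl <;> assumption)
    | (rcases h1 with rfl | rfl <;> contradiction)

lemma coreJ (G : SimpleGraph V) (v : V) (hv : dz G v = 0) (ho : ∀ u, u ≠ v → dz G u = 1)
    (R D : Finset V) (hvR : v ∉ R) (hvD : v ∉ D) (hRD : ∀ x ∈ R, x ∉ D)
    (hU : ∀ x, x ≠ v → x ∈ R ∨ x ∈ D) (Y : SimpleGraph V) (hYG : Y ≤ G)
    (hYR : ∀ x y, Y.Adj x y → x ∈ R) (hYc : CnD Y (R : Set V))
    (h2 : ∀ x ∈ R, ∃ y z, y ≠ z ∧ ∀ w, Y.Adj x w ↔ w = y ∨ w = z)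
    (s t ds dt : V) (hsR : s ∈ R) (htR : t ∈ R) (hsN : G.Adj v s) (htN : ¬ G.Adj v t)
    (hds : ds ∈ D) (hdt : dt ∈ D) (hsd : G.Adj s ds) (htd : G.Adj t dt) (hs ht : ZMod 2)
    (JD : SimpleGraph V) (hJDG : JD ≤ G) (hJDD : ∀ x y, JD.Adj x y → x ∈ D)
    (hJDd : ∀ x ∈ D, dz JD x = (if G.Adj v x then 1 else 0) +
      ((if x = ds then hs else 0) + (if x = dt then ht else 0)))
    (hJDr : ∀ x y, JD.Adj x y → ∃ z ∈ D, ((if G.Adj v z then 1 else 0) +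
      ((if z = ds then hs else 0) + (if z = dt then ht else 0))) = 1 ∧ JD.Reachable x z)
    (J : SimpleGraph V) (hJY : J ≤ Y)
    (hJd : ∀ x ∈ R, dz J x = (if G.Adj v x then 1 else 0) +
      ((if x = s then hs else 0) + (if x = t then ht else 0)))
    (hW : ∑ x, (if ∃ y, (bigB G v s ds t dt hs ht JD J).Adj x y then (1 : ZMod 2) else 0) = 0) :
    OddEdgeColorable G 3 := by
  have hst : s ≠ t := by rintro rfl; exact htN hsN
  have nsd : ∀ x y, x ∈ R → y ∈ D → x ≠ y := by rintro x y h1 h2 rfl; exact hRD _ h1 h2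
  have hJR : ∀ x y, J.Adj x y → x ∈ R := fun x y h => hYR x y (hJY h)
  have e1 : s ≠ ds := nsd _ _ hsR hds
  have e2 : t ≠ dt := nsd _ _ htR hdt
  set B := bigB G v s ds t dt hs ht JD J with hB
  have hsv : s ≠ v := by rintro rfl; exact hvR hsR
  have htv : t ≠ v := by rintro rfl; exact hvR htR
  have hdsv : ds ≠ v := by rintro rfl; exact hvD hds
  have hdtv : dt ≠ v := by rintro rfl; exact hvD hdt
  have hBG : B ≤ G := by
    refine sup_le ?_ (sup_le hJDG (sup_le (hJY.trans hYG) (sup_le ?_ ?_)))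
    · rintro x y (⟨rfl, h, _⟩ | ⟨rfl, h, _⟩)
      · exact h
      · exact h.symm
    · intro x y h
      obtain ⟨_, ⟨rfl, rfl⟩ | ⟨rfl, rfl⟩⟩ := (hang_adj e1).1 h
      · exact hsd
      · exact hsd.symm
    · intro x y h
      obtain ⟨_, ⟨rfl, rfl⟩ | ⟨rfl, rfl⟩⟩ := (hang_adj e2).1 h
      · exact htd
      · exact htd.symm
  have dB : ∀ x, dz B x = dz (starG v {x | G.Adj v x}) x + (dz JD x + (dz J x +
      (((if x = s then hs else 0) + (if x = ds then hs else 0)) +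
      ((if x = t then ht else 0) + (if x = dt then ht else 0))))) := by
    intro x
    rw [hB, bigB, dz_sup, dz_sup, dz_sup, dz_sup, dz_hang e1, dz_hang e2]
    · intro x y h h'
      obtain ⟨_, ⟨rfl, rfl⟩ | ⟨rfl, rfl⟩⟩ := (hang_adj e1).1 h
      · obtain ⟨_, ⟨h3, h4⟩ | ⟨h3, h4⟩⟩ := (hang_adj e2).1 h'
        · exact hst h3
        · exact nsd _ _ hsR hdt h3
      · obtain ⟨_, ⟨h3, h4⟩ | ⟨h3, h4⟩⟩ := (hang_adj e2).1 h'
        · exact nsd _ _ hsR hdt h4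
        · exact hst h4
    · intro x y h h'
      have h1 := hJR _ _ h
      have h2 := hJR _ _ h.symm
      rcases h' with h' | h'
      · obtain ⟨_, ⟨rfl, rfl⟩ | ⟨rfl, rfl⟩⟩ := (hang_adj e1).1 h'
        · exact hRD _ h2 hds
        · exact hRD _ h1 hds
      · obtain ⟨_, ⟨rfl, rfl⟩ | ⟨rfl, rfl⟩⟩ := (hang_adj e2).1 h'
        · exact hRD _ h2 hdt
        · exact hRD _ h1 hdt
    · intro x y h h'
      have h1 := hJDD _ _ h
      have h2 := hJDD _ _ h.symm
      rcases h' with h' | h' | h'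
      · exact hRD _ (hJR _ _ h') h1
      · obtain ⟨_, ⟨rfl, rfl⟩ | ⟨rfl, rfl⟩⟩ := (hang_adj e1).1 h'
        · exact hRD _ hsR h1
        · exact hRD _ hsR h2
      · obtain ⟨_, ⟨rfl, rfl⟩ | ⟨rfl, rfl⟩⟩ := (hang_adj e2).1 h'
        · exact hRD _ htR h1
        · exact hRD _ htR h2
    · have key : ∀ x y, (JD ⊔ (J ⊔ (hang s ds hs ⊔ hang t dt ht))).Adj x y → x ≠ v := by
        rintro x y (h | h | h | h) rfl
        · exact hvD (hJDD _ _ h)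
        · exact hvR (hJR _ _ h)
        · obtain ⟨_, ⟨h, _⟩ | ⟨h, _⟩⟩ := (hang_adj e1).1 h
          · exact hsv h.symm
          · exact hdsv h.symm
        · obtain ⟨_, ⟨h, _⟩ | ⟨h, _⟩⟩ := (hang_adj e2).1 h
          · exact htv h.symm
          · exact hdtv h.symm
      rintro x y (⟨h, _⟩ | ⟨h, _⟩) h'
      · exact key _ _ h' h
      · exact key _ _ h'.symm h
  have hB0 : ∀ x, dz B x = 0 := by
    intro x
    rw [dB]
    by_cases hxv : x = v
    · rw [hxv, if_neg hsv.symm, if_neg hdsv.symm, if_neg htv.symm, if_neg hdtv.symm,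
        dz_zero JD _ (fun y h => hvD (hJDD _ _ h)), dz_zero J _ (fun y h => hvR (hJR _ _ h)),
        dz_star_self _ _ (by simp)]
      simp only [add_zero]
      exact hv
    rw [dz_star _ _ _ hxv]
    have final : ∀ a b c : ZMod 2, a + (a + (b + c)) + (b + c) = 0 := by decide
    rcases hU x hxv with hx | hx
    · rw [hJd x hx, dz_zero JD _ (fun y h => hRD _ hx (hJDD _ _ h)), if_neg (nsd _ _ hx hds),
        if_neg (nsd _ _ hx hdt)]
      simp only [Set.mem_ofPred_eq, zero_add, add_zero, ← add_assoc]
      have := final (if G.Adj v x then 1 else 0) (if x = s then hs else 0) (if x = t then ht else 0)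
      simpa only [← add_assoc] using this
    · rw [hJDd x hx, dz_zero J _ (fun y h => hRD _ (hJR _ _ h) hx), if_neg (nsd _ _ hsR hx).symm,
        if_neg (nsd _ _ htR hx).symm]
      simp only [Set.mem_ofPred_eq, zero_add, add_zero, ← add_assoc]
      have := final (if G.Adj v x then 1 else 0) (if x = ds then hs else 0) (if x = dt then ht else 0)
      simpa only [← add_assoc] using this
  have hJB : J ≤ B := le_sup_of_le_right (le_sup_of_le_right le_sup_left)
  have hJDB : JD ≤ B := le_sup_of_le_right le_sup_left
  have hBv : ∀ x, G.Adj v x → B.Adj v x := fun x h => .inl (.inl ⟨rfl, h, h.ne'⟩)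
  have rN : ∀ x, G.Adj v x → B.Reachable x v := fun x h => (hBv x h).symm.reachable
  have rJ : ∀ x y, J.Adj x y → B.Reachable x v := by
    intro x x' hxx
    by_contra hcon
    have hno : ∀ y, J.Reachable x y → ¬ G.Adj v y := by
      intro y hy hyN
      exact hcon ((hy.mono hJB).trans (rN y hyN))
    have hxR := hJR _ _ hxx
    have hns : ¬ J.Reachable x s := fun h => hno s h hsN
    have hsum := handshake_on J {y | J.Reachable x y}
      (fun a b hab ha => SimpleGraph.Reachable.trans ha hab.reachable)
    have hd0 : ∀ y, y ∈ R → J.Reachable x y → dz J y = if y = t then ht else 0 := by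
      intro y hyR hy
      have : y ≠ s := by rintro rfl; exact hns hy
      rw [hJd y hyR, if_neg (hno y hy), if_neg this, zero_add, zero_add]
    have hht : J.Reachable x t → ht = 0 := by
      intro hxt
      rw [Finset.sum_eq_single t] at hsum
      · rw [if_pos (show t ∈ {y | J.Reachable x y} from hxt), hd0 t htR hxt, if_pos rfl] at hsum
        exact hsum
      · intro y _ hyt
        by_cases hy : J.Reachable x y
        · by_cases hyR : y ∈ R
          · rw [if_pos (show y ∈ {y | J.Reachable x y} from hy), hd0 y hyR hy, if_neg hyt]
          · rw [dz_zero J _ (fun z h => hyR (hJR _ _ h))]; simp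
        · exact if_neg hy
      · simp
    have hd1 : ∀ y, y ∈ R → J.Reachable x y → dz J y = 0 := by
      intro y hyR hy
      rw [hd0 y hyR hy]
      split_ifs with h
      · rw [h] at hy; exact hht hy
      · rfl
    obtain ⟨a, b, haR, haX, hbR, hbX, hab⟩ := hYc {y | J.Reachable x y ∧ ∃ z, J.Adj y z}
      ⟨x, hxR, .rfl, x', hxx⟩ ⟨s, hsR, fun h => hns h.1⟩
    obtain ⟨h3, z, hz⟩ := haX
    have := two_all (h2 a haR) hJY (hd1 a haR h3) hz hab
    exact hbX ⟨h3.trans this.reachable, a, this.symm⟩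
  have rs : B.Reachable s v := rN s hsN
  have rt : ht = 1 → B.Reachable t v := by
    intro h
    have : dz J t = 1 := by
      rw [hJd t htR, if_neg htN, if_neg hst.symm, if_pos rfl, h]; decide
    obtain ⟨w, hw⟩ := dz_ne J t (by rw [this]; decide)
    exact rJ t w hw
  have rds : hs = 1 → B.Reachable ds v := by
    intro h
    have : B.Adj ds s := .inr (.inr (.inr (.inl ((hang_adj e1).2 ⟨h, .inr ⟨rfl, rfl⟩⟩))))
    exact this.reachable.trans rs
  have rdt : ht = 1 → B.Reachable dt v := by
    intro h
    have : B.Adj dt t := .inr (.inr (.inr (.inr ((hang_adj e2).2 ⟨h, .inr ⟨rfl, rfl⟩⟩))))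
    exact this.reachable.trans (rt h)
  refine caseII_end G B v ho hBG hB0 hBv ?_ hW
  rintro x y (h | h | h | h | h)
  · rcases h with ⟨rfl, _⟩ | ⟨_, h, _⟩
    · rfl
    · exact rN x h
  · obtain ⟨z, hzD, hz, hxz⟩ := hJDr x y h
    refine (hxz.mono hJDB).trans ?_
    by_cases hzN : G.Adj v z
    · exact rN z hzN
    · rw [if_neg hzN] at hz
      by_cases h3 : z = ds ∧ hs = 1
      · rw [h3.1]; exact rds h3.2
      by_cases h4 : z = dt ∧ ht = 1
      · rw [h4.1]; exact rdt h4.2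
      exfalso
      have h5 : (if z = ds then hs else 0) = 0 := by
        split_ifs with h
        · rcases z2 hs with h' | h'
          · exact h'
          · exact absurd ⟨h, h'⟩ h3
        · rfl
      have h6 : (if z = dt then ht else 0) = 0 := by
        split_ifs with h
        · rcases z2 ht with h' | h'
          · exact h'
          · exact absurd ⟨h, h'⟩ h4
        · rfl
      rw [h5, h6] at hz
      exact absurd hz (by decide)
  · exact rJ x y h
  · obtain ⟨hh, ⟨rfl, _⟩ | ⟨rfl, _⟩⟩ := (hang_adj e1).1 h
    · exact rs
    · exact rds hh
  · obtain ⟨hh, ⟨rfl, _⟩ | ⟨rfl, _⟩⟩ := (hang_adj e2).1 h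
    · exact rt hh
    · exact rdt hh

lemma caseII_core (G : SimpleGraph V) (v : V) (hv : dz G v = 0) (ho : ∀ u, u ≠ v → dz G u = 1)
    (R D : Finset V) (hvR : v ∉ R) (hvD : v ∉ D) (hRD : ∀ x ∈ R, x ∉ D)
    (hU : ∀ x, x ≠ v → x ∈ R ∨ x ∈ D) (hDc : CnD G (D : Set V)) (Y : SimpleGraph V) (hYG : Y ≤ G)
    (hYR : ∀ x y, Y.Adj x y → x ∈ R) (hYc : CnD Y (R : Set V))
    (h2 : ∀ x ∈ R, ∃ y z, y ≠ z ∧ ∀ w, Y.Adj x w ↔ w = y ∨ w = z)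
    (s t ds dt : V) (hsR : s ∈ R) (htR : t ∈ R) (hsN : G.Adj v s) (htN : ¬ G.Adj v t)
    (hds : ds ∈ D) (hdt : dt ∈ D) (hsd : G.Adj s ds) (htd : G.Adj t dt) :
    OddEdgeColorable G 3 := by
  obtain ⟨ht, hht⟩ : ∃ ht : ZMod 2,
    ht = 1 + ∑ x ∈ R, (1 + (if G.Adj v x then (1 : ZMod 2) else 0)) := ⟨_, rfl⟩
  obtain ⟨hs, hhs⟩ : ∃ hs : ZMod 2,
    hs = ht + ∑ x ∈ D, (if G.Adj v x then (1 : ZMod 2) else 0) := ⟨_, rfl⟩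
  have hst : s ≠ t := by rintro rfl; exact htN hsN
  have nsd : ∀ x y, x ∈ R → y ∈ D → x ≠ y := by rintro x y h1 h2 rfl; exact hRD _ h1 h2
  have e1 : s ≠ ds := nsd _ _ hsR hds
  have e2 : t ≠ dt := nsd _ _ htR hdt
  have hsumN : ∑ x ∈ R, (if G.Adj v x then (1 : ZMod 2) else 0) +
      ∑ x ∈ D, (if G.Adj v x then (1 : ZMod 2) else 0) = 0 := by
    rw [← Finset.sum_union (Finset.disjoint_left.2 fun x => hRD x)]
    refine Eq.trans ?_ hv
    unfold dz
    refine Finset.sum_subset (Finset.subset_univ _) fun x _ hx => ?_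
    have : x = v := by
      by_contra h
      exact hx (Finset.mem_union.2 (hU x h))
    simp [this]
  have six : ∀ (S : Finset V) (a : V) (h : ZMod 2), a ∈ S → ∑ x ∈ S, (if x = a then h else 0) = h := by
    intro S a h ha
    rw [Finset.sum_ite_eq' S a (fun _ => h), if_pos ha]
  obtain ⟨JD, hJDG, hJDD, hJDd, hJDr⟩ := exists_join' G D hDc
    (fun x => (if G.Adj v x then 1 else 0) +
      ((if x = ds then hs else 0) + (if x = dt then ht else 0))) (by
      rw [Finset.sum_add_distrib, Finset.sum_add_distrib, six _ _ _ hds, six _ _ _ hdt, hhs]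
      generalize ∑ x ∈ D, (if G.Adj v x then (1 : ZMod 2) else 0) = a
      clear * -
      revert a ht; decide)
  obtain ⟨J, hJY, hJR, hJd⟩ := exists_join Y R hYc
    (fun x => (if G.Adj v x then 1 else 0) +
      ((if x = s then hs else 0) + (if x = t then ht else 0))) (by
      rw [Finset.sum_add_distrib, Finset.sum_add_distrib, six _ _ _ hsR, six _ _ _ htR, hhs]
      generalize ∑ x ∈ D, (if G.Adj v x then (1 : ZMod 2) else 0) = a at *
      generalize ∑ x ∈ R, (if G.Adj v x then (1 : ZMod 2) else 0) = b at *
      clear * - hsumN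
      revert a b ht; decide)
  have hYd : ∀ x ∈ R, dz Y x = 0 := by
    intro x hx
    obtain ⟨y, z, hyz, hY⟩ := h2 x hx
    rw [two_nbr hyz hY le_rfl, if_pos ((hY y).2 (.inl rfl)), if_pos ((hY z).2 (.inr rfl))]; decide
  have hJd' : ∀ x ∈ R, dz (Y \ J) x = (if G.Adj v x then 1 else 0) +
      ((if x = s then hs else 0) + (if x = t then ht else 0)) := by
    intro x hx
    rw [dz_sdiff _ _ hJY, hYd x hx, hJd x hx, zero_add]
  have main : ∀ x, (if ∃ y, (bigB G v s ds t dt hs ht JD J).Adj x y then (1 : ZMod 2) else 0) +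
      (if ∃ y, (bigB G v s ds t dt hs ht JD (Y \ J)).Adj x y then (1 : ZMod 2) else 0) =
      if x ∈ R then (1 + (if G.Adj v x then (1 : ZMod 2) else 0)) + (if x = t then ht else 0) else 0 := by
    intro x
    by_cases hx : x ∈ R
    · have hxv : x ≠ v := by rintro rfl; exact hvR hx
      by_cases hxN : G.Adj v x
      · have hxt : x ≠ t := by rintro rfl; exact htN hxN
        have hb : ∀ K, (bigB G v s ds t dt hs ht JD K).Adj x v :=
          fun K => .inl (.inr ⟨rfl, hxN, hxv⟩)
        rw [if_pos ⟨v, hb _⟩, if_pos ⟨v, hb _⟩, if_pos hx, if_pos hxN, if_neg hxt]; decide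
      by_cases hxt : x = t ∧ ht = 1
      · have hb : ∀ K, (bigB G v s ds t dt hs ht JD K).Adj x dt :=
          fun K => .inr (.inr (.inr (.inr ((hang_adj e2).2 ⟨hxt.2, .inl ⟨hxt.1, rfl⟩⟩))))
        rw [if_pos ⟨_, hb _⟩, if_pos ⟨_, hb _⟩, if_pos hx, if_neg hxN, if_pos hxt.1, hxt.2]; decide
      have hxs : x ≠ s := by rintro rfl; exact hxN hsN
      have ht0 : (if x = t then ht else 0) = 0 := by
        split_ifs with h
        · rcases z2 ht with h' | h'
          · exact h'
          · exact absurd ⟨h, h'⟩ hxt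
        · rfl
      have hb : ∀ K : SimpleGraph V, (∃ y, (bigB G v s ds t dt hs ht JD K).Adj x y) ↔ ∃ y, K.Adj x y := by
        intro K
        constructor
        · rintro ⟨y, h | h | h | h | h⟩
          · rcases h with ⟨h, _⟩ | ⟨_, h, _⟩
            · exact absurd h hxv
            · exact absurd h hxN
          · exact absurd (hJDD _ _ h) (hRD _ hx)
          · exact ⟨y, h⟩
          · obtain ⟨_, ⟨h, _⟩ | ⟨h, _⟩⟩ := (hang_adj e1).1 h
            · exact absurd h hxs
            · exact absurd h (nsd _ _ hx hds)
          · obtain ⟨h', ⟨h, _⟩ | ⟨h, _⟩⟩ := (hang_adj e2).1 h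
            · exact absurd ⟨h, h'⟩ hxt
            · exact absurd h (nsd _ _ hx hdt)
        · rintro ⟨y, h⟩
          exact ⟨y, .inr (.inr (.inl h))⟩
      have hJ0 : dz J x = 0 := by
        rw [hJd x hx, if_neg hxN, if_neg hxs, ht0]; decide
      simp only [hb]
      rw [if_pos hx, if_neg hxN, ht0]
      by_cases hJx : ∃ y, J.Adj x y
      · have : ¬ ∃ y, (Y \ J).Adj x y := by
          rintro ⟨y, hy⟩
          obtain ⟨w, hw⟩ := hJx
          exact hy.2 (two_all (h2 x hx) hJY hJ0 hw hy.1)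
        rw [if_pos hJx, if_neg this]; decide
      · have : ∃ y, (Y \ J).Adj x y := by
          obtain ⟨y, z, hyz, hY⟩ := h2 x hx
          exact ⟨y, (hY y).2 (.inl rfl), fun h => hJx ⟨y, h⟩⟩
        rw [if_neg hJx, if_pos this]; decide
    · have : ∀ K K' : SimpleGraph V, K' ≤ Y → (∃ y, (bigB G v s ds t dt hs ht JD K').Adj x y) →
          ∃ y, (bigB G v s ds t dt hs ht JD K).Adj x y := by
        rintro K K' hK' ⟨y, h | h | h | h⟩
        · exact ⟨y, .inl h⟩
        · exact ⟨y, .inr (.inl h)⟩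
        · exact absurd (hYR _ _ (hK' h)) hx
        · exact ⟨y, .inr (.inr (.inr h))⟩
      rw [if_neg hx]
      by_cases h : ∃ y, (bigB G v s ds t dt hs ht JD J).Adj x y
      · rw [if_pos h, if_pos (this _ _ hJY h)]; decide
      · rw [if_neg h, if_neg (fun h' => h (this _ _ sdiff_le h'))]; decide
  have hsum : ∑ x, (if ∃ y, (bigB G v s ds t dt hs ht JD J).Adj x y then (1 : ZMod 2) else 0) +
      ∑ x, (if ∃ y, (bigB G v s ds t dt hs ht JD (Y \ J)).Adj x y then (1 : ZMod 2) else 0) = 1 := by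
    rw [← Finset.sum_add_distrib, Finset.sum_congr rfl fun x _ => main x, Finset.sum_ite_mem,
      Finset.univ_inter, Finset.sum_add_distrib, six _ _ _ htR, hht]
    generalize ∑ x ∈ R, (1 + (if G.Adj v x then (1 : ZMod 2) else 0)) = a
    clear * -
    revert a; decide
  by_cases h0 : ∑ x, (if ∃ y, (bigB G v s ds t dt hs ht JD J).Adj x y then (1 : ZMod 2) else 0) = 0
  · exact coreJ G v hv ho R D hvR hvD hRD hU Y hYG hYR hYc h2 s t ds dt hsR htR hsN htN hds hdt hsd htd
      hs ht JD hJDG hJDD hJDd hJDr J hJY hJd h0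
  · refine coreJ G v hv ho R D hvR hvD hRD hU Y hYG hYR hYc h2 s t ds dt hsR htR hsN htN hds hdt hsd htd
      hs ht JD hJDG hJDD hJDd hJDr (Y \ J) sdiff_le hJd' ?_
    rw [(z2 _).resolve_left h0] at hsum
    rcases z2 (∑ x, (if ∃ y, (bigB G v s ds t dt hs ht JD (Y \ J)).Adj x y then (1 : ZMod 2) else 0))
      with h | h
    · exact h
    · rw [h] at hsum; exact absurd hsum (by decide)

lemma caseII (G : SimpleGraph V) (hcard : 4 < Fintype.card V)
    (hK : ∀ s : Finset V, s.card < 4 → CnD G (↑s : Set V)ᶜ) (v : V) (hv : dz G v = 0)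
    (ho : ∀ u, u ≠ v → dz G u = 1) (q : V) (hqv : q ≠ v) (hqN : ¬ G.Adj v q) :
    OddEdgeColorable G 3 := by
  obtain ⟨u, hu⟩ : ∃ u, G.Adj v u := by
    obtain ⟨x, y, _, hx, _, _, hxy⟩ := hK ∅ (by simp) {v} ⟨v, by simp⟩ ⟨q, by simp [hqv]⟩
    rw [Set.mem_singleton_iff.1 hx] at hxy
    exact ⟨y, hxy⟩
  obtain ⟨s, t, hsv, hsN, htv, htN, hst⟩ := hK {v} (by simp) {x | G.Adj v x}
    ⟨u, by simpa using hu.ne', hu⟩ ⟨q, by simpa using hqv, hqN⟩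
  simp only [Finset.coe_singleton, Set.mem_compl_iff, Set.mem_singleton_iff] at hsv htv
  change G.Adj v s at hsN
  change ¬ G.Adj v t at htN
  have hne : s ≠ t := hst.ne
  let Γ : SimpleGraph V :=
    { Adj := fun x y => G.Adj x y ∧ ¬ ((x = s ∧ y = t) ∨ (x = t ∧ y = s))
      symm := ⟨fun x y h => ⟨h.1.symm, by tauto⟩⟩
      loopless := ⟨fun x h => G.loopless.irrefl x h.1⟩ }
  obtain ⟨r, hr⟩ := exists_notin {v, s, t} (lt_of_le_of_lt Finset.card_le_three (by omega))
  simp only [Finset.mem_insert, Finset.mem_singleton, not_or] at hr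
  obtain ⟨z, hz⟩ := exists_notin {v, r, s, t} (lt_of_le_of_lt Finset.card_le_four (by omega))
  simp only [Finset.mem_insert, Finset.mem_singleton, not_or] at hz
  have half : ∀ a b : V, a ≠ b → ((a = s ∧ b = t) ∨ (a = t ∧ b = s)) →
      Relation.ReflTransGen (RAdj Γ {x | x ≠ v ∧ x ≠ r}) a z := by
    intro a b hab h
    have hc := hK {v, r, b} (lt_of_le_of_lt Finset.card_le_three (by norm_num))
    have h1 : a ∈ ((({v, r, b} : Finset V) : Set V))ᶜ := by
      rcases h with ⟨rfl, rfl⟩ | ⟨rfl, rfl⟩ <;> simp <;> tauto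
    have h2 : z ∈ ((({v, r, b} : Finset V) : Set V))ᶜ := by
      rcases h with ⟨rfl, rfl⟩ | ⟨rfl, rfl⟩ <;> simp <;> tauto
    have h3 := rch_of_cnd hc h1 h2
    clear h1 h2 hz
    induction h3 with
    | refl => exact .refl
    | tail _ hxy ih =>
      refine ih.tail ?_
      obtain ⟨h4, h5, h6⟩ := hxy
      simp only [Finset.coe_insert, Finset.coe_singleton, Set.mem_compl_iff, Set.mem_insert_iff,
        Set.mem_singleton_iff, not_or] at h5 h6
      refine ⟨⟨h4, ?_⟩, ⟨h5.1, h5.2.1⟩, ⟨h6.1, h6.2.1⟩⟩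
      rcases h with ⟨rfl, rfl⟩ | ⟨rfl, rfl⟩ <;> tauto
  have h0 := ch_of_rch (Γ := Γ) (R := {x | x ≠ v ∧ x ≠ r}) (A := {s}) (N := {t}) (a := s) (u := t)
    rfl rfl ⟨hsv, fun h => hr.2.1 h.symm⟩
    ((half s t hne (.inl ⟨rfl, rfl⟩)).trans (rch_symm (half t s hne.symm (.inr ⟨rfl, rfl⟩))))
  obtain ⟨D, m, p, hDne, hvD, hDc, hDp, hpv, hp0, hpm, hadj, hA, hNm, hind, hinj⟩ :=
    nonsep G Γ v {s} {t} hK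
      (fun x hx hx' => hne ((Set.mem_singleton_iff.1 hx).symm.trans (Set.mem_singleton_iff.1 hx')))
      (fun _ _ h => h.1) (fun x y h h' => by
        have h3 : (x = s ∧ y = t) ∨ (x = t ∧ y = s) := by
          by_contra hh; exact h' ⟨h, hh⟩
        rcases h3 with ⟨rfl, rfl⟩ | ⟨rfl, rfl⟩ <;> simp) r hr.1 h0
  have hp0 : p 0 = s := hp0
  have hpm : p m = t := hpm
  have hm2 : 2 ≤ m := by
    by_contra hh
    have : m = 0 ∨ m = 1 := by omega
    rcases this with rfl | rfl
    · exact hne (hp0.symm.trans hpm)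
    · have := hadj 0 (by omega)
      exact this.2 (.inl ⟨hp0, hpm⟩)
  have pinj : ∀ i j, i ≤ m → j ≤ m → p i = p j → i = j := by
    intro i j hi hj h
    rcases lt_trichotomy i j with h' | h' | h'
    · exact absurd h (hinj i j h' hj)
    · exact h'
    · exact absurd h.symm (hinj j i h' hi)
  have hchord : ∀ i j, i < j → j ≤ m → G.Adj (p i) (p j) → j = i + 1 ∨ (i = 0 ∧ j = m) := by
    intro i j hij hj h
    by_cases hh : (p i = s ∧ p j = t) ∨ (p i = t ∧ p j = s)
    · rcases hh with hh | hh
      · exact .inr ⟨hA i (by omega) hh.1, hNm j hj hh.2⟩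
      · have := hA j hj hh.2
        omega
    · exact .inl (hind i j hij hj ⟨h, hh⟩)
  have hGp : ∀ i, i < m → G.Adj (p i) (p (i + 1)) := fun i hi => (hadj i hi).1
  have hG0m : G.Adj (p 0) (p m) := by rw [hp0, hpm]; exact hst
  set R : Finset V := Finset.univ.filter (fun x => ∃ i ≤ m, p i = x) with hR
  have hmR : ∀ x, x ∈ R ↔ ∃ i ≤ m, p i = x := by intro x; simp [hR]
  have hpR : ∀ i, i ≤ m → p i ∈ R := fun i hi => (hmR _).2 ⟨i, hi, rfl⟩
  let Y : SimpleGraph V :=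
    { Adj := fun x y => G.Adj x y ∧ x ∈ R ∧ y ∈ R
      symm := ⟨fun x y h => ⟨h.1.symm, h.2.2, h.2.1⟩⟩
      loopless := ⟨fun x h => G.loopless.irrefl x h.1⟩ }
  have hU : ∀ x, x ≠ v → x ∈ R ∨ x ∈ D := by
    intro x hx
    by_cases hxD : x ∈ D
    · exact .inr hxD
    · exact .inl ((hmR x).2 (((hDp x).1 hxD).resolve_left hx))
  obtain ⟨ds, hds, hsd⟩ : ∃ ds ∈ D, G.Adj s ds := by
    obtain ⟨w, hw⟩ := exists_notin {v, t, p 1, s} (lt_of_le_of_lt Finset.card_le_four (by omega))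
    simp only [Finset.mem_insert, Finset.mem_singleton, not_or] at hw
    have hs1 : s ≠ p 1 := by
      intro h
      have := pinj 0 1 (by omega) (by omega) (hp0.trans h)
      omega
    obtain ⟨x, y, _, hx, hy, _, hxy⟩ := hK {v, t, p 1}
      (lt_of_le_of_lt Finset.card_le_three (by norm_num)) {s}
      ⟨s, by simp [hsv, hne, hs1], rfl⟩ ⟨w, by simp [hw], by simp [hw]⟩
    rw [Set.mem_singleton_iff.1 hx] at hxy
    simp only [Finset.coe_insert, Finset.coe_singleton, Set.mem_compl_iff, Set.mem_insert_iff,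
        Set.mem_singleton_iff, not_or] at hy
    refine ⟨y, (hU y hy.1).resolve_left fun hyR => ?_, hxy⟩
    obtain ⟨j, hj, rfl⟩ := (hmR y).1 hyR
    rw [← hp0] at hxy
    have h0j : 0 < j := by
      rcases Nat.eq_zero_or_pos j with rfl | h
      · exact absurd hxy (G.loopless.irrefl _)
      · exact h
    rcases hchord 0 j h0j hj hxy with rfl | ⟨_, rfl⟩
    · exact hy.2.2 rfl
    · exact hy.2.1 hpm
  obtain ⟨dt, hdt, htd⟩ : ∃ dt ∈ D, G.Adj t dt := by
    obtain ⟨w, hw⟩ := exists_notin {v, s, p (m - 1), t}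
      (lt_of_le_of_lt Finset.card_le_four (by omega))
    simp only [Finset.mem_insert, Finset.mem_singleton, not_or] at hw
    have hs1 : t ≠ p (m - 1) := by
      intro h
      have := pinj m (m - 1) (by omega) (by omega) (hpm.trans h)
      omega
    obtain ⟨x, y, _, hx, hy, _, hxy⟩ := hK {v, s, p (m - 1)}
      (lt_of_le_of_lt Finset.card_le_three (by norm_num)) {t}
      ⟨t, by simp [htv, hne.symm, hs1], rfl⟩ ⟨w, by simp [hw], by simp [hw]⟩
    rw [Set.mem_singleton_iff.1 hx] at hxy
    simp only [Finset.coe_insert, Finset.coe_singleton, Set.mem_compl_iff, Set.mem_insert_iff,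
        Set.mem_singleton_iff, not_or] at hy
    refine ⟨y, (hU y hy.1).resolve_left fun hyR => ?_, hxy⟩
    obtain ⟨j, hj, rfl⟩ := (hmR y).1 hyR
    rw [← hpm] at hxy
    have h0j : j < m := by
      rcases hj.lt_or_eq with h | rfl
      · exact h
      · exact absurd hxy (G.loopless.irrefl _)
    rcases hchord j m h0j le_rfl hxy.symm with h | ⟨rfl, _⟩
    · exact hy.2.2 (by rw [h]; simp)
    · exact hy.2.1 hp0
  refine caseII_core G v hv ho R D ?_ hvD ?_ hU hDc Y (fun _ _ h => h.1) (fun _ _ h => h.2.1) ?_ ?_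
    s t ds dt (hp0 ▸ hpR 0 (by omega)) (hpm ▸ hpR m le_rfl) hsN htN hds hdt hsd htd
  · intro h
    obtain ⟨i, hi, h⟩ := (hmR v).1 h
    exact hpv i hi h
  · intro x hx
    rw [hDp]
    exact .inr ((hmR x).1 hx)
  · have := path_cnd Y p m (fun i hi => ⟨hGp i hi, hpR i (by omega), hpR _ (by omega)⟩)
    convert this using 1
    ext x; simp [hR]
  · intro x hx
    obtain ⟨i, hi, rfl⟩ := (hmR x).1 hx
    refine ⟨p (if i = m then 0 else i + 1), p (if i = 0 then m else i - 1), ?_, ?_⟩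
    · intro h
      have := pinj _ _ (by split_ifs <;> omega) (by split_ifs <;> omega) h
      split_ifs at this <;> omega
    · intro w
      constructor
      · rintro ⟨h1, _, h3⟩
        obtain ⟨j, hj, rfl⟩ := (hmR w).1 h3
        rcases lt_trichotomy i j with h' | h' | h'
        · rcases hchord i j h' hj h1 with rfl | ⟨rfl, rfl⟩
          · left; rw [if_neg (by omega)]
          · right; rw [if_pos rfl]
        · rw [h'] at h1; exact absurd h1 (G.loopless.irrefl _)
        · rcases hchord j i h' hi h1.symm with rfl | ⟨rfl, rfl⟩
          · right; rw [if_neg (by omega)]; simp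
          · left; rw [if_pos rfl]
      · rintro (rfl | rfl)
        · split_ifs with h
          · rw [h]; exact ⟨hG0m.symm, hpR m le_rfl, hpR 0 (by omega)⟩
          · exact ⟨hGp i (by omega), hpR i hi, hpR _ (by omega)⟩
        · split_ifs with h
          · rw [h]; exact ⟨hG0m, hpR 0 (by omega), hpR m le_rfl⟩
          · have := hGp (i - 1) (by omega)
            rw [show i - 1 + 1 = i by omega] at this
            exact ⟨this.symm, hpR i hi, hpR _ (by omega)⟩

end Helpers

/-- Every 4-connected simple graph of odd order is odd 3-edge-colorable. -/
theorem stmt6 {V : Type*} [Fintype V] (G : SimpleGraph V)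
    (hconn : IsKConnected G 4) (hodd : Odd (Fintype.card V)) :
    OddEdgeColorable G 3 := by
  classical
  obtain ⟨hcard, hc⟩ := hconn
  have hK : ∀ s : Finset V, s.card < 4 → CnD G (↑s : Set V)ᶜ := fun s hs =>
    cnd_of_conn G _ (hc _ (by rwa [Set.ncard_coe_finset]))
  obtain ⟨v, hv⟩ : ∃ v, dz G v = 0 := by
    by_contra hh
    push Not at hh
    have h1 := handshake G
    rw [Finset.sum_congr rfl fun x _ => (z2 (dz G x)).resolve_left (hh x)] at h1
    simp only [Finset.sum_const, Finset.card_univ, nsmul_eq_mul, mul_one] at h1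
    rw [(ZMod.natCast_eq_one_iff_odd).2 hodd] at h1
    exact absurd h1 (by decide)
  by_cases h1 : ∃ u, G.Adj v u ∧ dz G u = 0
  · obtain ⟨u, hu, hu'⟩ := h1
    exact caseIa G hodd hK v hv u hu hu'
  by_cases h2 : ∃ a, a ≠ v ∧ dz G a = 0
  · obtain ⟨a, ha, ha'⟩ := h2
    exact caseIb G hodd hcard hK v hv
      (fun u hu => (z2 _).resolve_left fun h => h1 ⟨u, hu, h⟩) a ha ha'
  have ho : ∀ u, u ≠ v → dz G u = 1 := fun u hu => (z2 _).resolve_left fun h => h2 ⟨u, hu, h⟩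
  by_cases h3 : ∃ q, q ≠ v ∧ ¬ G.Adj v q
  · obtain ⟨q, hq, hq'⟩ := h3
    exact caseII G hcard hK v hv ho q hq hq'
  · push Not at h3
    exact caseIII G hodd hcard hK v hv h3 ho
end

section
/- Let G be a 3-connected simple graph of odd order. If G has at least two vertices of even degree, then G is odd 3-edge-colorable. -/
open Classical in
noncomputable def s7pdeg {V : Type*} [Fintype V] (f : Sym2 V → ZMod 2) (x : V) : ZMod 2 :=
  ∑ y, f s(x, y)

open Classical in
noncomputable def s7wf {V : Type*} {G : SimpleGraph V} {a b : V} (p : G.Walk a b) :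
    Sym2 V → ZMod 2 := fun e => ((p.edges.count e : ℕ) : ZMod 2)

open Classical in
lemma s7pdeg_single {V : Type*} [Fintype V] (a c x : V) (h : a ≠ c) :
    (∑ y, (if s(a, c) = s(x, y) then (1 : ZMod 2) else 0))
      = (if x = a then 1 else 0) + (if x = c then 1 else 0) := by
  by_cases hxa : x = a
  · subst hxa
    have : ∀ y, (if s(x, c) = s(x, y) then (1 : ZMod 2) else 0) = if c = y then 1 else 0 := by
      intro y; congr 1; simp; grind
    rw [Finset.sum_congr rfl (fun y _ => this y)]
    simp [h]
  · by_cases hxc : x = c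
    · subst hxc
      have : ∀ y, (if s(a, x) = s(x, y) then (1 : ZMod 2) else 0) = if a = y then 1 else 0 := by
        intro y; congr 1; simp [h]
      rw [Finset.sum_congr rfl (fun y _ => this y)]
      simp [hxa]
    · have : ∀ y, (if s(a, c) = s(x, y) then (1 : ZMod 2) else 0) = 0 := by
        intro y
        rw [if_neg]
        simp; grind
      rw [Finset.sum_congr rfl (fun y _ => this y)]
      simp [hxa, hxc]

open Classical in
lemma s7pdeg_wf {V : Type*} [Fintype V] {G : SimpleGraph V} {a b : V} (p : G.Walk a b) (x : V) :
    s7pdeg (s7wf p) x = (if x = a then 1 else 0) + (if x = b then 1 else 0) := by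
  induction p with
  | nil =>
    simp [s7pdeg, s7wf]
    split_ifs <;> decide
  | @cons a c b h q ih =>
    have h2 := s7pdeg_single a c x h.ne
    have : s7pdeg (s7wf (SimpleGraph.Walk.cons h q)) x = s7pdeg (s7wf q) x +
        (∑ y, (if s(a, c) = s(x, y) then (1 : ZMod 2) else 0)) := by
      unfold s7pdeg s7wf
      rw [← Finset.sum_add_distrib]
      apply Finset.sum_congr rfl
      intro y _
      rw [SimpleGraph.Walk.edges_cons, List.count_cons]
      push_cast
      simp
    rw [this, ih, h2]
    have h3 : ∀ z : ZMod 2, z + z = 0 := by decide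
    linear_combination h3 (if x = c then 1 else 0)

/-- T-joins -/
lemma s7_tjoin {V : Type*} [Fintype V] (G : SimpleGraph V) (B : Finset V) (hB : B.Nonempty)
    (hc : ∀ a ∈ B, ∀ b ∈ B, ∃ p : G.Walk a b, ∀ w ∈ p.support, w ∈ B)
    (t : V → ZMod 2) (ht : ∑ x ∈ B, t x = 0) :
    ∃ f : Sym2 V → ZMod 2, (∀ a b, f s(a, b) ≠ 0 → G.Adj a b ∧ a ∈ B ∧ b ∈ B) ∧
      ∀ x ∈ B, s7pdeg f x = t x := by
  classical
  obtain ⟨r, hr⟩ := hB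
  have hg : ∀ x, ∃ g : Sym2 V → ZMod 2, x ∈ B →
      ((∀ a b, g s(a, b) ≠ 0 → G.Adj a b ∧ a ∈ B ∧ b ∈ B) ∧
        ∀ y, s7pdeg g y = (if y = r then 1 else 0) + (if y = x then 1 else 0)) := by
    intro x
    by_cases hx : x ∈ B
    · obtain ⟨p, hp⟩ := hc r hr x hx
      refine ⟨s7wf p, fun _ => ⟨fun a b h1 => ?_, fun y => s7pdeg_wf p y⟩⟩
      have h2 : s(a, b) ∈ p.edges := by
        by_contra h3
        apply h1
        simp [s7wf, List.count_eq_zero_of_not_mem h3]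
      exact ⟨p.adj_of_mem_edges h2, hp _ (p.fst_mem_support_of_mem_edges h2),
        hp _ (p.snd_mem_support_of_mem_edges h2)⟩
    · exact ⟨0, fun h => absurd h hx⟩
  choose g hg using hg
  refine ⟨fun e => ∑ x ∈ B, t x * g x e, ?_, ?_⟩
  · intro a b h
    obtain ⟨x, hx, hne⟩ := Finset.exists_ne_zero_of_sum_ne_zero h
    exact (hg x hx).1 a b (right_ne_zero_of_mul hne)
  · intro y hy
    have : s7pdeg (fun e => ∑ x ∈ B, t x * g x e) y
        = ∑ x ∈ B, t x * ((if y = r then 1 else 0) + (if y = x then 1 else 0)) := by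
      unfold s7pdeg
      rw [Finset.sum_comm]
      apply Finset.sum_congr rfl
      intro x hx
      rw [← Finset.mul_sum, ← (hg x hx).2 y]
      rfl
    rw [this]
    simp only [mul_add, Finset.sum_add_distrib, ← Finset.sum_mul, ht]
    simp [hy]

lemma s7_tjoin_max {V : Type*} [Fintype V] (G : SimpleGraph V) (B : Finset V) (hB : B.Nonempty)
    (hc : ∀ a ∈ B, ∀ b ∈ B, ∃ p : G.Walk a b, ∀ w ∈ p.support, w ∈ B)
    (t : V → ZMod 2) (ht : ∑ x ∈ B, t x = 0) :
    ∃ f : Sym2 V → ZMod 2, (∀ a b, f s(a, b) ≠ 0 → G.Adj a b ∧ a ∈ B ∧ b ∈ B) ∧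
      (∀ x ∈ B, s7pdeg f x = t x) ∧
      ∀ A : SimpleGraph V, (∀ a b, A.Adj a b → G.Adj a b ∧ a ∈ B ∧ b ∈ B ∧ f s(a, b) = 0) →
        A.IsAcyclic := by
  classical
  have hex := s7_tjoin G B hB hc t ht
  obtain ⟨f, ⟨hf1, hf2⟩, hf3⟩ := Set.Finite.exists_maximalFor
    (fun f : Sym2 V → ZMod 2 => (Finset.univ.filter (fun e => f e ≠ 0)).card)
    {f | (∀ a b, f s(a, b) ≠ 0 → G.Adj a b ∧ a ∈ B ∧ b ∈ B) ∧ ∀ x ∈ B, s7pdeg f x = t x}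
    (Set.toFinite _) hex
  refine ⟨f, hf1, hf2, ?_⟩
  intro A hA v c hcyc
  have key : ∀ e, s7wf c e ≠ 0 → e ∈ A.edgeSet := by
    intro e he
    apply c.edges_subset_edgeSet
    by_contra h3
    apply he
    simp [s7wf, List.count_eq_zero_of_not_mem h3]
  have hmem : (f + s7wf c) ∈ {f : Sym2 V → ZMod 2 | (∀ a b, f s(a, b) ≠ 0 → G.Adj a b ∧ a ∈ B ∧ b ∈ B) ∧ ∀ x ∈ B, s7pdeg f x = t x} := by
    constructor
    · intro a b h
      by_cases h0 : f s(a, b) = 0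
      · have : s7wf c s(a, b) ≠ 0 := by simpa [h0] using h
        have := hA a b (key _ this)
        tauto
      · exact hf1 a b h0
    · intro x hx
      have : s7pdeg (f + s7wf c) x = s7pdeg f x + s7pdeg (s7wf c) x := by
        simp [s7pdeg, Finset.sum_add_distrib]
      rw [this, s7pdeg_wf, hf2 x hx]
      have h3 : ∀ z : ZMod 2, z + z = 0 := by decide
      rw [h3, add_zero]
  have hlt : (Finset.univ.filter (fun e => f e ≠ 0)).card
      < (Finset.univ.filter (fun e => (f + s7wf c) e ≠ 0)).card := by
    have hz : ∀ e, s7wf c e ≠ 0 → f e = 0 := by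
      intro e
      induction e with
      | _ a b => exact fun h => (hA a b (key _ h)).2.2.2
    apply Finset.card_lt_card
    rw [Finset.ssubset_iff_of_subset]
    · cases c with
      | nil => simp at hcyc
      | @cons _ w _ h q =>
        refine ⟨s(v, w), ?_, ?_⟩
        · have hcount : s7wf (SimpleGraph.Walk.cons h q) s(v, w) = 1 := by
            have := List.count_eq_one_of_mem hcyc.isTrail.edges_nodup
              (a := s(v, w)) (by simp)
            unfold s7wf
            rw [this]; simp
          have := hz s(v, w) (by rw [hcount]; decide)
          simp [this, hcount]
        · have := hA v w h
          simp [this]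
    · intro e he
      simp only [Finset.mem_filter, Finset.mem_univ, true_and, Pi.add_apply] at he ⊢
      have : s7wf c e = 0 := by
        by_contra h
        exact he (hz e h)
      simpa [this] using he
  have := hf3 hmem hlt.le
  simp only at this
  omega

lemma s7_acyclic_leaf {V : Type*} [Fintype V] (A : SimpleGraph V) (hA : A.IsAcyclic)
    (S : Finset V) (hS : S.Nonempty) :
    ∃ x ∈ S, ∀ y ∈ S, ∀ z ∈ S, A.Adj x y → A.Adj x z → y = z := by
  classical
  have hac := hA.induce (S : Set V)
  obtain ⟨s0, hs0⟩ := hS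
  have : Nonempty (S : Set V) := ⟨⟨s0, hs0⟩⟩
  obtain ⟨u, v, p, hp, hmax⟩ :=
    SimpleGraph.Walk.exists_isPath_forall_isPath_length_le_length (A.induce (S : Set V))
  have key : ∀ y : (S : Set V), (A.induce (S : Set V)).Adj u y → y = p.snd := by
    intro y hy
    refine hac.eq_snd_of_adj_start hp hy ?_
    by_contra hns
    have := hmax y v (SimpleGraph.Walk.cons hy.symm p) (hp.cons hns)
    simp at this
  refine ⟨u, u.2, fun y hy z hz h1 h2 => ?_⟩
  have a := key ⟨y, hy⟩ h1
  have b := key ⟨z, hz⟩ h2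
  have := a.trans b.symm
  simpa using this


lemma s7_kconn {V : Type*} [Fintype V] (G : SimpleGraph V)
    (h : ∀ s : Set V, s.ncard < 3 → (G.induce sᶜ).Connected)
    (s : Set V) (hs : s.ncard < 3) (a b : V) (ha : a ∉ s) (hb : b ∉ s) :
    ∃ p : G.Walk a b, ∀ w ∈ p.support, w ∉ s := by
  obtain ⟨p⟩ := (h s hs).preconnected ⟨a, ha⟩ ⟨b, hb⟩
  obtain ⟨q, hq⟩ : ∃ q : G.Walk a b, q.support =
      (p.map (SimpleGraph.Embedding.induce sᶜ).toHom).support :=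
    ⟨p.map (SimpleGraph.Embedding.induce sᶜ).toHom, rfl⟩
  refine ⟨q, ?_⟩
  intro w hw
  rw [hq] at hw
  rw [SimpleGraph.Walk.support_map, List.mem_map] at hw
  obtain ⟨x, _, rfl⟩ := hw
  exact x.2

/-- first hit -/
lemma s7_firsthit {V : Type*} (G : SimpleGraph V) (B : Finset V) {x b : V} (p : G.Walk x b)
    (hb : b ∈ B) (hx : x ∉ B) (hxN : ∀ c ∈ B, ¬ G.Adj x c) :
    ∃ y ∈ p.support, (y ∉ B ∧ ∃ c ∈ B, G.Adj y c) ∧ ∃ q : G.Walk x y, ∀ w ∈ q.support,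
      w = y ∨ (w ∉ B ∧ ∀ c ∈ B, ¬ G.Adj w c) := by
  induction p with
  | nil => exact absurd hb hx
  | @cons x c b h q ih =>
    have hcB : c ∉ B := fun hc => hxN c hc h
    by_cases hcN : ∃ d ∈ B, G.Adj c d
    · refine ⟨c, by simp, ⟨hcB, hcN⟩, h.toWalk, ?_⟩
      intro w hw
      simp at hw
      rcases hw with rfl | rfl
      · exact Or.inr ⟨hx, hxN⟩
      · exact Or.inl rfl
    · push Not at hcN
      obtain ⟨y, hy, hyN, r, hr⟩ := ih hb hcB hcN
      refine ⟨y, by simp [hy], hyN, SimpleGraph.Walk.cons h r, ?_⟩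
      intro w hw
      rw [SimpleGraph.Walk.support_cons, List.mem_cons] at hw
      rcases hw with rfl | hw
      · exact Or.inr ⟨hx, hxN⟩
      · exact hr w hw

lemma s7_shortcut {V : Type*} {G : SimpleGraph V} {u v : V} (p : G.Walk u v) (i j : ℕ)
    (hij : i ≤ j) (hj : j ≤ p.length) (hp : p.IsPath) (k : ℕ) (hik : i < k) (hkj : k < j) :
    p.getVert k ∉ (p.take i).support ∧ p.getVert k ∉ (p.drop j).support := by
  constructor
  · intro h
    rw [SimpleGraph.Walk.mem_support_iff_exists_getVert] at h
    obtain ⟨n, hn, hnl⟩ := h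
    rw [SimpleGraph.Walk.take_getVert] at hn
    have := hp.getVert_injOn (x₁ := min i n) (x₂ := k)
      (by simp; omega) (by simp; omega) hn
    omega
  · intro h
    rw [SimpleGraph.Walk.mem_support_iff_exists_getVert] at h
    obtain ⟨n, hn, hnl⟩ := h
    rw [SimpleGraph.Walk.drop_getVert] at hn
    rw [SimpleGraph.Walk.drop_length] at hnl
    have := hp.getVert_injOn (x₁ := j + n) (x₂ := k)
      (by simp; omega) (by simp; omega) hn
    omega

lemma s7_struct {V : Type*} [Fintype V] (G : SimpleGraph V) (ev : V → Prop)
    (hcard : 3 < Fintype.card V)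
    (h : ∀ s : Set V, s.ncard < 3 → (G.induce sᶜ).Connected)
    (u0 v0 : V) (huv0 : u0 ≠ v0) (hu0 : ev u0) (hv0 : ev v0) :
    ∃ (B : Finset V) (u v : V) (p : G.Walk u v), B.Nonempty ∧
      (∀ a ∈ B, ∀ b ∈ B, ∃ q : G.Walk a b, ∀ w ∈ q.support, w ∈ B) ∧
      u ≠ v ∧ ev u ∧ ev v ∧ p.IsPath ∧ (∀ x, x ∈ p.support ↔ x ∉ B) ∧
      (∀ x ∉ B, ev x → x = u ∨ x = v) ∧
      (∀ a ∉ B, ∀ b ∉ B, G.Adj a b → s(a, b) ∈ p.edges) := by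
  classical
  let Good : Finset V → Prop := fun B => B.Nonempty ∧
      (∀ a ∈ B, ∀ b ∈ B, ∃ q : G.Walk a b, ∀ w ∈ q.support, w ∈ B) ∧
      ∃ u v, u ≠ v ∧ ev u ∧ ev v ∧ ∃ p : G.Walk u v, ∀ w ∈ p.support, w ∉ B
  have hex : ∃ B, Good B := by
    have : ∃ z, z ∉ ({u0, v0} : Finset V) := by
      by_contra hcon
      push Not at hcon
      have h1 : (Finset.univ : Finset V) ⊆ {u0, v0} := fun x _ => hcon x
      have h2 := Finset.card_le_card h1
      have h3 : ({u0, v0} : Finset V).card ≤ 2 := Finset.card_le_two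
      rw [Finset.card_univ] at h2
      omega
    obtain ⟨z, hz⟩ := this
    simp at hz
    refine ⟨{z}, by simp, ?_, u0, v0, huv0, hu0, hv0, ?_⟩
    · intro a ha b hb
      simp at ha hb
      subst ha; subst hb
      exact ⟨SimpleGraph.Walk.nil, by simp⟩
    · obtain ⟨p, hp⟩ := s7_kconn G h {z} (by simp) u0 v0 (by simp; grind) (by simp; grind)
      exact ⟨p, by simpa using hp⟩
  obtain ⟨B, ⟨hBne, hBc, u, v, huv, hu, hv, p0, hp0⟩, hmax⟩ :=
    Set.Finite.exists_maximal (Set.toFinite {B | Good B}) hex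
  -- adding a neighbour of B
  have hadd : ∀ y ∉ B, (∃ c ∈ B, G.Adj y c) → ∀ u v, u ≠ v → ev u → ev v →
      ∀ p : G.Walk u v, (∀ w ∈ p.support, w ∉ B) → y ∈ p.support := by
    intro y hy hyc u v huv hu hv p hp
    by_contra hyp
    obtain ⟨c, hcB, hyc⟩ := hyc
    have hto : ∀ a ∈ insert y B, ∃ q : G.Walk a c, ∀ w ∈ q.support, w ∈ insert y B := by
      intro a ha
      rw [Finset.mem_insert] at ha
      rcases ha with rfl | ha
      · exact ⟨hyc.toWalk, by simp [hcB]⟩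
      · obtain ⟨q, hq⟩ := hBc a ha c hcB
        exact ⟨q, fun w hw => Finset.mem_insert_of_mem (hq w hw)⟩
    have hg : Good (insert y B) := by
      refine ⟨by simp, ?_, u, v, huv, hu, hv, p, ?_⟩
      · intro a ha b hb
        obtain ⟨q, hq⟩ := hto a ha
        obtain ⟨r, hr⟩ := hto b hb
        refine ⟨q.append r.reverse, ?_⟩
        intro w hw
        rw [SimpleGraph.Walk.mem_support_append_iff] at hw
        rcases hw with hw | hw
        · exact hq w hw
        · exact hr w (by simpa using hw)
      · intro w hw hwB
        rw [Finset.mem_insert] at hwB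
        rcases hwB with rfl | hwB
        · exact hyp hw
        · exact hp w hw hwB
    exact hy (hmax hg (Finset.subset_insert y B) (Finset.mem_insert_self y B))
  set p := p0.bypass with hpdef
  have hpath : p.IsPath := p0.bypass_isPath
  have hpB : ∀ w ∈ p.support, w ∉ B := fun w hw => hp0 w (p0.support_bypass_subset_support hw)
  -- every vertex outside B is adjacent to B
  have hall : ∀ x ∉ B, ∃ c ∈ B, G.Adj x c := by
    intro x hx
    by_contra hxN
    push Not at hxN
    let Y : Finset V := Finset.univ.filter (fun y => (y ∉ B ∧ ∃ c ∈ B, G.Adj y c) ∧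
      ∃ q : G.Walk x y, ∀ w ∈ q.support, w = y ∨ (w ∉ B ∧ ∀ c ∈ B, ¬ G.Adj w c))
    have hYc : 3 ≤ Y.card := by
      by_contra hlt
      push Not at hlt
      obtain ⟨b, hb⟩ := hBne
      obtain ⟨q, hq⟩ := s7_kconn G h (Y : Set V) (by rwa [Set.ncard_coe_finset]) x b
        (by simp only [Y, Finset.coe_filter]; rintro ⟨_, ⟨_, c, hc, hxc⟩, _⟩; exact hxN c hc hxc)
        (by simp only [Y, Finset.coe_filter]; rintro ⟨_, ⟨h1, _⟩, _⟩; exact h1 hb)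
      obtain ⟨y, hy, h1, h2⟩ := s7_firsthit G B q hb hx hxN
      apply hq y hy
      simp only [Y, Finset.coe_filter]
      exact ⟨Finset.mem_univ _, h1, h2⟩
    have hord : ∀ i j k, i < j → j < k → k ≤ p.length → p.getVert i ∈ Y → p.getVert j ∈ Y →
        p.getVert k ∈ Y → False := by
      intro i j k hij hjk hk hi hj hk'
      simp only [Y, Finset.mem_filter, Finset.mem_univ, true_and] at hi hj hk'
      obtain ⟨_, q1, hq1⟩ := hi
      obtain ⟨hjN, _⟩ := hj
      obtain ⟨_, q3, hq3⟩ := hk'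
      have hs := s7_shortcut p i k (by omega) hk hpath j hij hjk
      have hdist : ∀ i' ≤ p.length, i' ≠ j → p.getVert j ≠ p.getVert i' := by
        intro i' hi' hne heq
        exact hne (hpath.getVert_injOn (by simpa using hi') (by simp; omega) heq.symm)
      have hqq : ∀ i' ≤ p.length, i' ≠ j → ∀ q : G.Walk x (p.getVert i'),
          (∀ w ∈ q.support, w = p.getVert i' ∨ (w ∉ B ∧ ∀ c ∈ B, ¬ G.Adj w c)) →
          ∀ w ∈ q.support, w ∉ B ∧ w ≠ p.getVert j := by
        intro i' hi' hne q hq w hw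
        rcases hq w hw with rfl | ⟨h1, h2⟩
        · exact ⟨hpB _ (p.getVert_mem_support i'), (hdist i' hi' hne).symm⟩
        · refine ⟨h1, ?_⟩
          rintro rfl
          obtain ⟨c, hc, hjc⟩ := hjN.2
          exact h2 c hc hjc
      have a1 := hqq i (by omega) (by omega) q1 hq1
      have a3 := hqq k (by omega) (by omega) q3 hq3
      let W : G.Walk u v := ((p.take i).append q1.reverse).append (q3.append (p.drop k))
      have hW : ∀ w ∈ W.support, w ∉ B ∧ w ≠ p.getVert j := by
        intro w hw
        simp only [W, SimpleGraph.Walk.mem_support_append_iff] at hw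
        rcases hw with (hw | hw) | (hw | hw)
        · exact ⟨hpB w (by
            rw [SimpleGraph.Walk.mem_support_iff_exists_getVert] at hw ⊢
            obtain ⟨n, hn, hnl⟩ := hw
            rw [SimpleGraph.Walk.take_getVert] at hn
            exact ⟨_, hn, by omega⟩), fun he => hs.1 (he ▸ hw)⟩
        · exact a1 w (by simpa using hw)
        · exact a3 w hw
        · exact ⟨hpB w (by
            rw [SimpleGraph.Walk.mem_support_iff_exists_getVert] at hw ⊢
            obtain ⟨n, hn, hnl⟩ := hw
            rw [SimpleGraph.Walk.drop_getVert] at hn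
            rw [SimpleGraph.Walk.drop_length] at hnl
            exact ⟨_, hn, by omega⟩), fun he => hs.2 (he ▸ hw)⟩
      have := hadd (p.getVert j) hjN.1 hjN.2 u v huv hu hv W (fun w hw => (hW w hw).1)
      exact (hW _ this).2 rfl
    obtain ⟨y1, y2, y3, h1, h2, h3, h12, h13, h23⟩ := Finset.two_lt_card_iff.mp hYc
    have hidx : ∀ y ∈ Y, ∃ n, p.getVert n = y ∧ n ≤ p.length := by
      intro y hy
      rw [← SimpleGraph.Walk.mem_support_iff_exists_getVert]
      simp only [Y, Finset.mem_filter, Finset.mem_univ, true_and] at hy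
      exact hadd y hy.1.1 hy.1.2 u v huv hu hv p hpB
    obtain ⟨n1, rfl, l1⟩ := hidx y1 h1
    obtain ⟨n2, rfl, l2⟩ := hidx y2 h2
    obtain ⟨n3, rfl, l3⟩ := hidx y3 h3
    have d12 : n1 ≠ n2 := by rintro rfl; exact h12 rfl
    have d13 : n1 ≠ n3 := by rintro rfl; exact h13 rfl
    have d23 : n2 ≠ n3 := by rintro rfl; exact h23 rfl
    rcases lt_or_gt_of_ne d12 with a | a <;> rcases lt_or_gt_of_ne d13 with b | b <;>
      rcases lt_or_gt_of_ne d23 with c | c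
    · exact hord n1 n2 n3 a c l3 h1 h2 h3
    · exact hord n1 n3 n2 b c l2 h1 h3 h2
    · omega
    · exact hord n3 n1 n2 b a l2 h3 h1 h2
    · exact hord n2 n1 n3 a b l3 h2 h1 h3
    · omega
    · exact hord n2 n3 n1 c b l1 h2 h3 h1
    · exact hord n3 n2 n1 c a l1 h3 h2 h1
  refine ⟨B, u, v, p, hBne, hBc, huv, hu, hv, hpath, ?_, ?_, ?_⟩
  · intro x
    exact ⟨hpB x, fun hx => hadd x hx (hall x hx) u v huv hu hv p hpB⟩
  · intro x hx hex
    by_contra hcon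
    push Not at hcon
    have hxp := hadd x hx (hall x hx) u v huv hu hv p hpB
    have hvB : v ∉ B := hpB v (by simp)
    have := hadd v hvB (hall v hvB) u x hcon.1.symm hu hex (p.takeUntil x hxp)
      (fun w hw => hpB w (p.support_takeUntil_subset_support hxp hw))
    exact SimpleGraph.Walk.endpoint_notMem_support_takeUntil hpath hxp hcon.2.symm this
  · have key : ∀ i j, i < j → j ≤ p.length → G.Adj (p.getVert i) (p.getVert j) → j = i + 1 := by
      intro i j hij hj hadj
      by_contra hne
      have hs := s7_shortcut p i j (by omega) hj hpath (i + 1) (by omega) (by omega)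
      let W : G.Walk u v := (p.take i).append (SimpleGraph.Walk.cons hadj (p.drop j))
      have hyB : p.getVert (i + 1) ∉ B := hpB _ (p.getVert_mem_support _)
      have hcontr : p.getVert (i + 1) ∈ W.support := by
        apply hadd _ hyB (hall _ hyB) u v huv hu hv W
        intro w hw
        apply hpB
        simp only [W, SimpleGraph.Walk.mem_support_append_iff, SimpleGraph.Walk.support_cons,
          List.mem_cons] at hw
        rcases hw with hw | hw | hw
        · rw [SimpleGraph.Walk.mem_support_iff_exists_getVert] at hw ⊢
          obtain ⟨n, hn, hnl⟩ := hw
          rw [SimpleGraph.Walk.take_getVert] at hn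
          exact ⟨_, hn, by omega⟩
        · rw [hw]; exact p.getVert_mem_support _
        · rw [SimpleGraph.Walk.mem_support_iff_exists_getVert] at hw ⊢
          obtain ⟨n, hn, hnl⟩ := hw
          rw [SimpleGraph.Walk.drop_getVert] at hn
          rw [SimpleGraph.Walk.drop_length] at hnl
          exact ⟨_, hn, by omega⟩
      simp only [W, SimpleGraph.Walk.mem_support_append_iff, SimpleGraph.Walk.support_cons,
          List.mem_cons] at hcontr
      rcases hcontr with hw | hw | hw
      · exact hs.1 hw
      · have := hpath.getVert_injOn (x₁ := i + 1) (x₂ := i) (by simp; omega) (by simp; omega) hw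
        omega
      · exact hs.2 hw
    have hedge : ∀ i, i + 1 ≤ p.length → s(p.getVert i, p.getVert (i + 1)) ∈ p.edges := by
      intro i hi
      exact p.mk_mem_edges_iff_exists.mpr ⟨i, by omega, rfl⟩
    intro a ha b hb hab
    have hap := hadd a ha (hall a ha) u v huv hu hv p hpB
    have hbp := hadd b hb (hall b hb) u v huv hu hv p hpB
    rw [SimpleGraph.Walk.mem_support_iff_exists_getVert] at hap hbp
    obtain ⟨i, rfl, hi⟩ := hap
    obtain ⟨j, rfl, hj⟩ := hbp
    rcases lt_trichotomy i j with hij | hij | hij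
    · have := key i j hij hj hab
      subst this
      exact hedge i hj
    · subst hij; exact absurd rfl hab.ne
    · have := key j i hij hi hab.symm
      subst this
      rw [Sym2.eq_swap]
      exact hedge j hi


open Classical in
noncomputable def s7cnt {V C : Type*} [Fintype V] (K : SimpleGraph V) (c : Sym2 V → C) (i : C)
    (x : V) : ℕ := (Finset.univ.filter (fun y => K.Adj x y ∧ c s(x, y) = i)).card

open Classical in
lemma s7_color {V : Type*} [Fintype V] (K : SimpleGraph V) (u : V)
    (hK : ∀ S : Finset V, S.Nonempty → u ∉ S →
      ∃ x ∈ S, ∀ y ∈ S, ∀ z ∈ S, K.Adj x y → K.Adj x z → y = z) :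
    ∀ (n : ℕ) (S : Finset V), S.card = n → u ∉ S → ∃ c : Sym2 V → Bool, ∀ x ∈ S, ∀ b,
      s7cnt K c b x ≠ 0 → Odd (s7cnt K c b x) := by
  intro n
  induction n with
  | zero =>
    intro S hS _
    rw [Finset.card_eq_zero] at hS
    subst hS
    exact ⟨fun _ => true, by simp⟩
  | succ n ih =>
    intro S hS hu
    obtain ⟨x, hxS, hx⟩ := hK S (Finset.card_pos.mp (by omega)) hu
    obtain ⟨c, hc⟩ := ih (S.erase x) (by rw [Finset.card_erase_of_mem hxS]; omega)
      (fun h => hu (Finset.mem_of_mem_erase h))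
    have hk : ∃ k : Bool, ∀ y ∈ S, K.Adj x y → c s(x, y) = k := by
      by_cases h : ∃ y ∈ S, K.Adj x y
      · obtain ⟨y, hy, hxy⟩ := h
        exact ⟨c s(x, y), fun z hz hxz => by rw [hx y hy z hz hxy hxz]⟩
      · push Not at h
        exact ⟨true, fun y hy hxy => absurd hxy (h y hy)⟩
    obtain ⟨k, hk⟩ := hk
    set M := Finset.univ.filter (fun y => K.Adj x y) with hM
    have hz : ∃ z, Even M.card → M.card ≠ 0 → z ∈ M ∧ z ∉ S := by
      by_cases h : Even M.card ∧ M.card ≠ 0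
      · have h2 : 1 < M.card := by
          obtain ⟨⟨r, hr⟩, h0⟩ := h
          omega
        obtain ⟨a, ha, b, hb, hab⟩ := Finset.one_lt_card.mp h2
        simp only [hM, Finset.mem_filter, Finset.mem_univ, true_and] at ha hb
        by_cases haS : a ∈ S
        · have hbS : b ∉ S := fun hbS => hab (hx a haS b hbS ha hb)
          exact ⟨b, fun _ _ => ⟨by simp [hM, hb], hbS⟩⟩
        · exact ⟨a, fun _ _ => ⟨by simp [hM, ha], haS⟩⟩
      · exact ⟨x, fun h1 h2 => absurd ⟨h1, h2⟩ h⟩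
    obtain ⟨z, hz⟩ := hz
    let c' : Sym2 V → Bool := fun e =>
      if x ∈ e ∧ (∀ y ∈ S.erase x, y ∉ e) then
        (if Even M.card ∧ e = s(x, z) then !k else k) else c e
    have hc' : ∀ y ∈ M, c' s(x, y) = if Even M.card ∧ y = z then !k else k := by
      intro y hy
      have hxy : K.Adj x y := by simpa [hM] using hy
      have hMne : M.card ≠ 0 := Finset.card_ne_zero_of_mem hy
      by_cases hyS : y ∈ S
      · have h1 : ¬ (x ∈ s(x, y) ∧ (∀ w ∈ S.erase x, w ∉ s(x, y))) := by
          rintro ⟨_, h⟩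
          exact h y (Finset.mem_erase.mpr ⟨hxy.ne', hyS⟩) (by simp)
        have h2 : ¬ (Even M.card ∧ y = z) := by
          rintro ⟨he, rfl⟩
          exact (hz he hMne).2 hyS
        simp only [c']
        rw [if_neg h1, if_neg h2]
        exact hk y hyS hxy
      · have h1 : (x ∈ s(x, y) ∧ (∀ w ∈ S.erase x, w ∉ s(x, y))) := by
          refine ⟨by simp, ?_⟩
          intro w hw hw2
          rw [Finset.mem_erase] at hw
          simp only [Sym2.mem_iff] at hw2
          rcases hw2 with h | h
          · exact hw.1 h
          · exact hyS (h ▸ hw.2)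
        simp only [c']
        rw [if_pos h1]
        have : s(x, y) = s(x, z) ↔ y = z := by
          simp; grind
        simp only [this]
    refine ⟨c', ?_⟩
    intro w hw b
    by_cases hwx : w = x
    · subst hwx
      have e1 : ∀ b, s7cnt K c' b w
          = (M.filter (fun y => (if Even M.card ∧ y = z then !k else k) = b)).card := by
        intro b
        unfold s7cnt
        congr 1
        ext y
        simp only [Finset.mem_filter, Finset.mem_univ, true_and, hM]
        constructor
        · rintro ⟨h1, h2⟩
          refine ⟨h1, ?_⟩
          rw [← h2, hc' y (by simp [hM, h1])]
        · rintro ⟨h1, h2⟩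
          refine ⟨h1, ?_⟩
          rw [← h2, hc' y (by simp [hM, h1])]
      rw [e1]
      by_cases hev : Even M.card
      · by_cases h0 : M.card = 0
        · rw [Finset.card_eq_zero] at h0
          rw [h0]; simp
        · obtain ⟨hzM, _⟩ := hz hev h0
          intro _
          by_cases hb : b = k
          · have : M.filter (fun y => (if Even M.card ∧ y = z then !k else k) = b) = M.erase z := by
              ext y
              simp only [Finset.mem_filter, Finset.mem_erase, hev, true_and, hb]
              by_cases hyz : y = z <;> simp [hyz]
            rw [this, Finset.card_erase_of_mem hzM]
            obtain ⟨r, hr⟩ := hev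
            exact ⟨r - 1, by omega⟩
          · have : M.filter (fun y => (if Even M.card ∧ y = z then !k else k) = b) = {z} := by
              have hb' : b = !k := by cases b <;> cases k <;> simp_all
              ext y
              simp only [Finset.mem_filter, Finset.mem_singleton, hev, true_and, hb']
              by_cases hyz : y = z <;> simp [hyz, hzM]
            rw [this]; simp
      · simp only [hev, false_and, if_false]
        by_cases hb : k = b
        · simp only [hb, Finset.filter_true]
          intro _
          exact Nat.not_even_iff_odd.mp hev
        · simp [hb]
    · have hwS : w ∈ S.erase x := Finset.mem_erase.mpr ⟨hwx, hw⟩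
      have : s7cnt K c' b w = s7cnt K c b w := by
        unfold s7cnt
        congr 1
        ext y
        have : c' s(w, y) = c s(w, y) := by
          simp only [c']
          rw [if_neg]
          rintro ⟨_, h⟩
          exact h w hwS (by simp)
        simp [this]
      rw [this]
      exact hc w hwS b

lemma s7_path_leaf {V : Type*} {G : SimpleGraph V} {u v : V} (p : G.Walk u v) (hp : p.IsPath)
    (S : Finset V) (hS : S.Nonempty) (hsub : ∀ x ∈ S, x ∈ p.support) :
    ∃ x ∈ S, ∀ y ∈ S, ∀ z ∈ S, s(x, y) ∈ p.edges → s(x, z) ∈ p.edges → y = z := by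
  induction p with
  | nil =>
    obtain ⟨x, hx⟩ := hS
    exact ⟨x, hx, by simp⟩
  | @cons u c v h q ih =>
    rw [SimpleGraph.Walk.cons_isPath_iff] at hp
    by_cases hu : u ∈ S
    · refine ⟨u, hu, ?_⟩
      have key : ∀ y, s(u, y) ∈ (SimpleGraph.Walk.cons h q).edges → y = c := by
        intro y hy
        rw [SimpleGraph.Walk.edges_cons, List.mem_cons] at hy
        rcases hy with hy | hy
        · have := h.ne
          simp at hy; grind
        · exact absurd (q.fst_mem_support_of_mem_edges hy) hp.2
      intro y _ z _ h1 h2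
      rw [key y h1, key z h2]
    · have : ∀ x ∈ S, x ∈ q.support := by
        intro x hx
        have := hsub x hx
        rw [SimpleGraph.Walk.support_cons, List.mem_cons] at this
        rcases this with rfl | h
        · exact absurd hx hu
        · exact h
      obtain ⟨x, hx, hx2⟩ := ih hp.1 this
      refine ⟨x, hx, ?_⟩
      have key : ∀ y ∈ S, s(x, y) ∈ (SimpleGraph.Walk.cons h q).edges → s(x, y) ∈ q.edges := by
        intro y hy hm
        rw [SimpleGraph.Walk.edges_cons, List.mem_cons] at hm
        rcases hm with hm | hm
        · exfalso
          have : u ∈ s(x, y) := by rw [hm]; simp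
          rw [Sym2.mem_iff] at this
          rcases this with rfl | rfl
          · exact hu hx
          · exact hu hy
        · exact hm
      intro y hy z hz h1 h2
      exact hx2 y hy z hz (key y hy h1) (key z hz h2)

open Classical in
lemma s7_classDeg {V : Type*} [Fintype V] (G : SimpleGraph V) {k : ℕ}
    (c : Sym2 V → Fin k) (i : Fin k) (v : V) : classDeg G c i v = s7cnt G c i v := by
  unfold classDeg s7cnt
  rw [← Set.ncard_coe_finset]
  have : {e : Sym2 V | e ∈ G.edgeSet ∧ c e = i ∧ v ∈ e} = (fun y => s(v, y)) ''
      ((Finset.univ.filter (fun y => G.Adj v y ∧ c s(v, y) = i) : Finset V) : Set V) := by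
    ext e
    constructor
    · rintro ⟨h1, h2, h3⟩
      obtain ⟨y, rfl⟩ := Sym2.mem_iff_exists.mp h3
      exact ⟨y, by simp [h2]; exact h1, rfl⟩
    · rintro ⟨y, hy, rfl⟩
      simp at hy
      exact ⟨hy.1, hy.2, by simp⟩
  have inj : Function.Injective (fun y => s(v, y)) := by
    intro a b hab
    simp at hab
    grind
  rw [this, Set.ncard_image_of_injective _ inj]
  congr!

open Classical in
lemma s7_main {V : Type*} [Fintype V] (G : SimpleGraph V) (hodd : Odd (Fintype.card V))
    (B : Finset V) (u v : V) (p : G.Walk u v) (hBne : B.Nonempty)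
    (hBc : ∀ a ∈ B, ∀ b ∈ B, ∃ q : G.Walk a b, ∀ w ∈ q.support, w ∈ B)
    (huv : u ≠ v)
    (hev : ∀ x ∉ B, (((Finset.univ.filter (fun y => G.Adj x y)).card : ℕ) : ZMod 2)
      = if x = u ∨ x = v then 0 else 1)
    (hp : p.IsPath) (hsup : ∀ x, x ∈ p.support ↔ x ∉ B)
    (hind : ∀ a ∉ B, ∀ b ∉ B, G.Adj a b → s(a, b) ∈ p.edges) :
    OddEdgeColorable G 3 := by
  have two : ∀ z : ZMod 2, z + z = 0 := by decide
  have huB : u ∉ B := (hsup u).mp (by simp)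
  -- indicator sums
  let I : Prop → ZMod 2 := fun P => if P then 1 else 0
  have hcardI : ∀ (P : V → Prop) [DecidablePred P], (((Finset.univ.filter P).card : ℕ) : ZMod 2) = ∑ y, I (P y) := by
    intro P _
    rw [Finset.natCast_card_filter]
    apply Finset.sum_congr rfl
    intro y _
    by_cases h : P y <;> simp [I, h]
  have hD : ∀ x ∉ B, ∑ y, I (G.Adj x y ∧ y ∉ B) = I (x = u) + I (x = v) := by
    intro x hx
    have := s7pdeg_wf p x
    simp only [I]
    rw [← this]
    unfold s7pdeg s7wf
    apply Finset.sum_congr rfl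
    intro y _
    by_cases h : s(x, y) ∈ p.edges
    · rw [List.count_eq_one_of_mem hp.isTrail.edges_nodup h, if_pos]
      · simp
      · exact ⟨p.adj_of_mem_edges h, (hsup y).mp (p.snd_mem_support_of_mem_edges h)⟩
    · rw [List.count_eq_zero_of_not_mem h, if_neg]
      · simp
      · rintro ⟨h1, h2⟩
        exact h (hind x hx y h2 h1)
  have hBn : ∀ x ∉ B, x ≠ u → ∑ y, I (G.Adj x y ∧ y ∈ B) = 1 := by
    intro x hx hxu
    have h1 := hev x hx
    have h2 := hD x hx
    rw [hcardI] at h1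
    have h3 : ∑ y, I (G.Adj x y) = ∑ y, I (G.Adj x y ∧ y ∈ B) + ∑ y, I (G.Adj x y ∧ y ∉ B) := by
      rw [← Finset.sum_add_distrib]
      apply Finset.sum_congr rfl
      intro y _
      simp only [I]
      by_cases hy : y ∈ B <;> simp [hy]
    rw [h3, h2] at h1
    by_cases hxv : x = v
    · simp only [I, hxu, hxv, huv.symm] at h1 ⊢
      simp at h1
      linear_combination h1 - two 1
    · simpa [I, hxu, hxv] using h1
  let t : V → ZMod 2 := fun x => 1 + ∑ y, I (G.Adj x y ∧ y ∉ B ∧ y ≠ u)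
  have ht : ∑ x ∈ B, t x = 0 := by
    have e1 : ∑ x ∈ B, ∑ y, I (G.Adj x y ∧ y ∉ B ∧ y ≠ u)
        = ∑ y ∈ Finset.univ.filter (fun y => y ∉ B ∧ y ≠ u), (1 : ZMod 2) := by
      rw [Finset.sum_comm, Finset.sum_filter]
      apply Finset.sum_congr rfl
      intro y _
      split_ifs with h
      · rw [← hBn y h.1 h.2, ← Finset.sum_subset (Finset.subset_univ B)]
        · apply Finset.sum_congr rfl
          intro x hx
          simp [I, h, hx, G.adj_comm]
        · intro x _ hx
          simp [I, hx]
      · apply Finset.sum_eq_zero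
        intro x _
        simp only [I]
        rw [if_neg]
        tauto
    simp only [t, Finset.sum_add_distrib]
    rw [e1]
    have e2 : Finset.univ.filter (fun y => y ∉ B ∧ y ≠ u) = Bᶜ.erase u := by
      ext y
      simp [and_comm]
    rw [e2]
    simp only [Finset.sum_const, nsmul_eq_mul, mul_one]
    rw [← Nat.cast_add, ZMod.natCast_eq_zero_iff_even,
      Finset.card_erase_of_mem (by simpa using huB), Finset.card_compl]
    have : B.card < Fintype.card V := by
      rw [← Finset.card_univ]
      exact Finset.card_lt_card (Finset.ssubset_univ_iff.mpr (fun h => huB (h ▸ Finset.mem_univ u)))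
    obtain ⟨r, hr⟩ := hodd
    exact ⟨r, by omega⟩
  obtain ⟨f, hf1, hf2, hf3⟩ := s7_tjoin_max G B hBne hBc t ht
  let K : SimpleGraph V :=
    { Adj := fun a b => G.Adj a b ∧ ((a ∉ B ∧ b ∉ B) ∨ (a ∈ B ∧ b ∈ B ∧ f s(a, b) = 0) ∨
        (a = u ∧ b ∈ B) ∨ (b = u ∧ a ∈ B))
      symm := ⟨by
        rintro a b ⟨h1, h2⟩
        rw [Sym2.eq_swap] at h2
        exact ⟨h1.symm, by tauto⟩⟩
      loopless := ⟨fun a h => h.1.ne rfl⟩ }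
  have hKle : ∀ a b, K.Adj a b → G.Adj a b := fun a b h => h.1
  let A : SimpleGraph V :=
    { Adj := fun a b => G.Adj a b ∧ a ∈ B ∧ b ∈ B ∧ f s(a, b) = 0
      symm := ⟨by
        rintro a b ⟨h1, h2⟩
        rw [Sym2.eq_swap] at h2
        exact ⟨h1.symm, by tauto⟩⟩
      loopless := ⟨fun a h => h.1.ne rfl⟩ }
  have hA : A.IsAcyclic := hf3 A (fun a b h => h)
  have hdeg : ∀ S : Finset V, S.Nonempty → u ∉ S →
      ∃ x ∈ S, ∀ y ∈ S, ∀ z ∈ S, K.Adj x y → K.Adj x z → y = z := by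
    intro S hS huS
    by_cases hSB : (S ∩ B).Nonempty
    · obtain ⟨x, hx, hx2⟩ := s7_acyclic_leaf A hA (S ∩ B) hSB
      rw [Finset.mem_inter] at hx
      refine ⟨x, hx.1, ?_⟩
      have key : ∀ y ∈ S, K.Adj x y → y ∈ S ∩ B ∧ A.Adj x y := by
        rintro y hy ⟨h1, h2⟩
        have hyu : y ≠ u := fun h => huS (h ▸ hy)
        have hxu : x ≠ u := fun h => huS (h ▸ hx.1)
        have h3 : x ∈ B ∧ y ∈ B ∧ f s(x, y) = 0 := by
          have := hx.2
          tauto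
        exact ⟨Finset.mem_inter.mpr ⟨hy, h3.2.1⟩, h1, h3⟩
      intro y hy z hz h1 h2
      exact hx2 y (key y hy h1).1 z (key z hz h2).1 (key y hy h1).2 (key z hz h2).2
    · have hSD : ∀ x ∈ S, x ∉ B := fun x hx hxB => hSB ⟨x, Finset.mem_inter.mpr ⟨hx, hxB⟩⟩
      obtain ⟨x, hx, hx2⟩ := s7_path_leaf p hp S hS (fun x hx => (hsup x).mpr (hSD x hx))
      refine ⟨x, hx, fun y hy z hz h1 h2 => hx2 y hy z hz ?_ ?_⟩
      · exact hind x (hSD x hx) y (hSD y hy) h1.1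
      · exact hind x (hSD x hx) z (hSD z hz) h2.1
  obtain ⟨c0, hc0⟩ := s7_color K u hdeg _ (Finset.univ.erase u) rfl (by simp)
  have hKu : ∀ y, K.Adj u y ↔ G.Adj u y := by
    intro y
    refine ⟨fun h => h.1, fun h => ⟨h, ?_⟩⟩
    tauto
  -- make the parity at u right
  have hc : ∃ c : Sym2 V → Bool, (∀ x, x ≠ u → ∀ b, s7cnt K c b x ≠ 0 → Odd (s7cnt K c b x)) ∧
      ((s7cnt K c true u : ℕ) : ZMod 2) = 1 := by
    by_cases hpar : ((s7cnt K c0 true u : ℕ) : ZMod 2) = 1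
    · exact ⟨c0, fun x hx b => hc0 x (by simp [hx]) b, hpar⟩
    · have hpar0 : ((s7cnt K c0 true u : ℕ) : ZMod 2) = 0 := by
        revert hpar
        generalize ((s7cnt K c0 true u : ℕ) : ZMod 2) = z
        revert z
        decide
      let c : Sym2 V → Bool := fun e => if ∀ a ∈ e, a ∉ B then !(c0 e) else c0 e
      have hcc : ∀ x y, c s(x, y) = if x ∉ B ∧ y ∉ B then !(c0 s(x, y)) else c0 s(x, y) := by
        intro x y
        simp [c]
      refine ⟨c, ?_, ?_⟩
      · intro x hx b
        by_cases hxB : x ∈ B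
        · have : s7cnt K c b x = s7cnt K c0 b x := by
            unfold s7cnt
            congr 1
            ext y
            simp [hcc, hxB]
          rw [this]
          exact hc0 x (by simp [hx]) b
        · have : s7cnt K c b x = s7cnt K c0 (!b) x := by
            unfold s7cnt
            congr 1
            ext y
            simp only [Finset.mem_filter, Finset.mem_univ, true_and, hcc]
            constructor
            · rintro ⟨h1, h2⟩
              refine ⟨h1, ?_⟩
              have hy : y ∉ B := by
                have := h1.2
                tauto
              rw [if_pos ⟨hxB, hy⟩] at h2
              rw [← h2]; simp
            · rintro ⟨h1, h2⟩
              refine ⟨h1, ?_⟩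
              have hy : y ∉ B := by
                have := h1.2
                tauto
              rw [if_pos ⟨hxB, hy⟩, h2]; simp
          rw [this]
          exact hc0 x (by simp [hx]) (!b)
      · have h1 := hD u huB
        unfold s7cnt at hpar0 ⊢
        rw [hcardI] at hpar0 ⊢
        have : ∑ y, I (K.Adj u y ∧ c s(u, y) = true) =
            ∑ y, I (K.Adj u y ∧ c0 s(u, y) = true) + ∑ y, I (G.Adj u y ∧ y ∉ B) := by
          rw [← Finset.sum_add_distrib]
          apply Finset.sum_congr rfl
          intro y _
          simp only [hKu, hcc, huB, I]
          by_cases h1 : G.Adj u y <;> by_cases h2 : y ∈ B <;> cases c0 s(u, y) <;>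
            simp [h1, h2] <;> decide
        rw [this, hpar0, h1]
        simp [I, huv]
  obtain ⟨c, hc1, hc2⟩ := hc
  have hc3 : ((s7cnt K c false u : ℕ) : ZMod 2) = 1 := by
    have h1 := hev u huB
    rw [hcardI] at h1
    unfold s7cnt at hc2 ⊢
    rw [hcardI] at hc2 ⊢
    have : ∑ y, I (G.Adj u y) = ∑ y, I (K.Adj u y ∧ c s(u, y) = true)
        + ∑ y, I (K.Adj u y ∧ c s(u, y) = false) := by
      rw [← Finset.sum_add_distrib]
      apply Finset.sum_congr rfl
      intro y _
      simp only [hKu, I]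
      cases c s(u, y) <;> simp
    rw [this, hc2] at h1
    simp at h1
    linear_combination h1 - two 1
  have hcK : ∀ x b, s7cnt K c b x ≠ 0 → Odd (s7cnt K c b x) := by
    intro x b
    by_cases hx : x = u
    · subst hx
      intro _
      rw [← ZMod.natCast_eq_one_iff_odd]
      cases b
      · exact hc3
      · exact hc2
    · exact hc1 x hx b
  let c3 : Sym2 V → Fin 3 := fun e => if e ∈ K.edgeSet then (if c e = true then 1 else 2) else 0
  refine ⟨c3, ?_⟩
  intro i x
  rw [s7_classDeg]
  have hi : i = 0 ∨ i = 1 ∨ i = 2 := by revert i; decide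
  have hc3e : ∀ y, c3 s(x, y) = if K.Adj x y then (if c s(x, y) = true then 1 else 2) else 0 := by
    intro y
    rfl
  rcases hi with rfl | rfl | rfl
  · by_cases hxu : x = u
    · intro h
      exfalso
      apply h
      unfold s7cnt
      rw [Finset.card_eq_zero]
      apply Finset.eq_empty_of_forall_notMem
      intro y hy
      simp only [Finset.mem_filter, Finset.mem_univ, true_and] at hy
      obtain ⟨h1, h2⟩ := hy
      have hxy := (hKu y).mpr (by rw [← hxu]; exact h1)
      rw [← hxu] at hxy
      rw [hc3e, if_pos hxy] at h2
      revert h2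
      split_ifs <;> decide
    · intro _
      rw [← ZMod.natCast_eq_one_iff_odd]
      unfold s7cnt
      rw [hcardI]
      have e0 : ∀ y, (G.Adj x y ∧ c3 s(x, y) = 0) ↔ (G.Adj x y ∧ ¬ K.Adj x y) := by
        intro y
        rw [hc3e]
        by_cases h : K.Adj x y
        · simp only [h, if_true]
          split_ifs <;> simp
        · simp [h]
      simp only [e0]
      by_cases hxB : x ∈ B
      · have h1 := hf2 x hxB
        have : ∑ y, I (G.Adj x y ∧ ¬ K.Adj x y) = s7pdeg f x +
            ∑ y, I (G.Adj x y ∧ y ∉ B ∧ y ≠ u) := by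
          unfold s7pdeg
          rw [← Finset.sum_add_distrib]
          apply Finset.sum_congr rfl
          intro y _
          have hK : K.Adj x y ↔ G.Adj x y ∧ ((y ∈ B ∧ f s(x, y) = 0) ∨ y = u) := by
            change (G.Adj x y ∧ _) ↔ _
            have : u ∉ B := huB
            constructor
            · rintro ⟨a, b⟩
              exact ⟨a, by tauto⟩
            · rintro ⟨a, b⟩
              exact ⟨a, by tauto⟩
          have hz : ∀ z : ZMod 2, z ≠ 0 → z = 1 := by decide
          simp only [I, hK]
          by_cases hf : f s(x, y) = 0
          · rw [hf, zero_add]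
            congr 1
            apply propext
            tauto
          · have hh := hf1 x y hf
            have hyu : y ≠ u := fun h => huB (h ▸ hh.2.2)
            rw [hz _ hf]
            simp [hh, hyu]
        rw [this, h1]
        simp only [t]
        linear_combination two (∑ y, I (G.Adj x y ∧ y ∉ B ∧ y ≠ u))
      · rw [← hBn x hxB hxu]
        apply Finset.sum_congr rfl
        intro y _
        simp only [I]
        congr 1
        apply propext
        constructor
        · rintro ⟨h1, h2⟩
          refine ⟨h1, ?_⟩
          by_contra hy
          exact h2 ⟨h1, Or.inl ⟨hxB, hy⟩⟩
        · rintro ⟨h1, h2⟩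
          refine ⟨h1, ?_⟩
          rintro ⟨_, h3⟩
          tauto
  · have : s7cnt G c3 1 x = s7cnt K c true x := by
      unfold s7cnt
      congr 1
      ext y
      simp only [Finset.mem_filter, Finset.mem_univ, true_and, hc3e]
      by_cases h : K.Adj x y
      · have := hKle x y h
        cases hcc : c s(x, y) <;> simp [h, this]
      · simp [h]
    rw [this]
    exact hcK x true
  · have : s7cnt G c3 2 x = s7cnt K c false x := by
      unfold s7cnt
      congr 1
      ext y
      simp only [Finset.mem_filter, Finset.mem_univ, true_and, hc3e]
      by_cases h : K.Adj x y
      · have := hKle x y h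
        cases hcc : c s(x, y) <;> simp [h, this]
      · simp [h]
    rw [this]
    exact hcK x false

/-- A 3-connected graph of odd order with at least two vertices of even degree
is odd 3-edge-colorable. -/
theorem stmt7 {V : Type*} [Fintype V] (G : SimpleGraph V)
    (hconn : IsKConnected G 3) (hodd : Odd (Fintype.card V))
    (u v : V) (huv : u ≠ v)
    (hu : Even (G.neighborSet u).ncard) (hv : Even (G.neighborSet v).ncard) :
    OddEdgeColorable G 3 := by
  classical
  obtain ⟨B, u, v, p, hBne, hBc, huv, hu, hv, hp, hsup, hev, hind⟩ :=
    s7_struct G (fun x => Even (G.neighborSet x).ncard) hconn.1 hconn.2 u v huv hu hv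
  refine s7_main G hodd B u v p hBne hBc huv ?_ hp hsup hind
  intro x hx
  have hn : (G.neighborSet x).ncard = (Finset.univ.filter (fun y => G.Adj x y)).card := by
    rw [← Set.ncard_coe_finset]
    congr 1
    ext y
    simp
  split_ifs with h
  · rw [ZMod.natCast_eq_zero_iff_even]
    convert! hn ▸ (show Even (G.neighborSet x).ncard from by rcases h with rfl | rfl <;> assumption)
  · rw [ZMod.natCast_eq_one_iff_odd]
    convert! hn ▸ (Nat.not_even_iff_odd.mp (fun he => h (hev x hx he)))
end

section
/- Let G be a connected simple graph of odd order with exactly one vertex w of even degree. If w is adjacent to all other vertices of G, G − w is connected, and G is not isomorphic to the wheel W_4, then G is odd 3-edge-colorable. -/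
/-- The wheel `W₄`: a 4-cycle `0-1-2-3` together with the center `4` adjacent to all
four cycle vertices. -/
def wheelFour : SimpleGraph (Fin 5) :=
  SimpleGraph.fromEdgeSet
    {s(0, 1), s(1, 2), s(2, 3), s(3, 0), s(4, 0), s(4, 1), s(4, 2), s(4, 3)}

open Classical in
/-- parity sum of colour class -/
lemma colorable_of_col {V : Type*} [Fintype V] (G : SimpleGraph V) (col : V → V → Fin 3)
    (hs : ∀ u v, col u v = col v u)
    (h : ∀ i v, (∑ u, if G.Adj v u ∧ col v u = i then (1 : ZMod 2) else 0) = 1 ∨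
      ∀ u, G.Adj v u → col v u ≠ i) : OddEdgeColorable G 3 := by
  refine ⟨Sym2.lift ⟨col, hs⟩, fun i v hne => ?_⟩
  have key : classDeg G (Sym2.lift ⟨col, hs⟩) i v
      = (Finset.univ.filter (fun u => G.Adj v u ∧ col v u = i)).card := by
    unfold classDeg
    have : {e : Sym2 V | e ∈ G.edgeSet ∧ Sym2.lift ⟨col, hs⟩ e = i ∧ v ∈ e}
        = (fun u => s(v, u)) '' {u | G.Adj v u ∧ col v u = i} := by
      ext e
      constructor
      · rintro ⟨h1, h2, h3⟩
        obtain ⟨u, rfl⟩ := Sym2.mem_iff_exists.1 h3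
        exact ⟨u, ⟨by simpa using h1, by simpa using h2⟩, rfl⟩
      · rintro ⟨u, ⟨h1, h2⟩, rfl⟩
        exact ⟨by simpa using h1, by simpa using h2, by simp⟩
    rw [this, Set.ncard_image_of_injective]
    · rw [← Set.ncard_coe_finset]; congr 1; ext; simp
    · intro a b hab
      have : a = b ∨ v = b ∧ a = v := by simpa using hab
      rcases this with h | ⟨h1, h2⟩
      · exact h
      · rw [h2, h1]
  rw [key] at hne ⊢
  rcases h i v with h | h
  · rw [Finset.sum_boole] at h
    exact (ZMod.natCast_eq_one_iff_odd).1 h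
  · exfalso; apply hne
    rw [Finset.card_eq_zero, Finset.filter_eq_empty_iff]
    rintro u - ⟨h1, h2⟩
    exact h u h1 h2

/-- handshake -/
lemma handshake_s8 {V : Type*} [Fintype V] (x : V → V → ZMod 2)
    (hs : ∀ u v, x u v = x v u) (hd : ∀ u, x u u = 0) : ∑ u, ∑ v, x u v = 0 := by
  classical
  rw [← Finset.sum_product']
  apply Finset.sum_involution (fun p _ => Prod.swap p)
  · rintro ⟨a, b⟩ -
    simp only [Prod.swap]
    rw [hs b a]; exact CharTwo.add_self_eq_zero _
  · rintro ⟨a, b⟩ - h1 h2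
    simp only [Prod.swap, Prod.mk.injEq] at h2
    obtain ⟨rfl, -⟩ := h2
    exact h1 (hd _)
  · simp
  · simp

/-- `G[Y]` has a spanning odd subgraph -/
def ES {V : Type*} [Fintype V] (G : SimpleGraph V) (Y : Finset V) : Prop :=
  ∃ x : V → V → ZMod 2, (∀ u v, x u v = x v u) ∧
    (∀ u v, x u v ≠ 0 → G.Adj u v ∧ u ∈ Y ∧ v ∈ Y) ∧ ∀ v ∈ Y, ∑ u, x v u = 1

open Classical in
lemma ES.dual {V : Type*} [Fintype V] {G : SimpleGraph V} {Y : Finset V} (h : ¬ ES G Y) :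
    ∃ P ⊆ Y, (P.card : ZMod 2) = 1 ∧ ∀ u ∈ P, ∀ v ∈ Y \ P, ¬ G.Adj u v := by
  let A : V → V → ZMod 2 := fun u v => if G.Adj u v ∧ u ∈ Y ∧ v ∈ Y then 1 else 0
  have hA : ∀ u v, A u v = A v u := by
    intro u v; simp only [A, G.adj_comm u v, and_comm (a := u ∈ Y)]
  let D : (V → V → ZMod 2) →ₗ[ZMod 2] (V → ZMod 2) :=
    { toFun := fun x v => ∑ u, A v u * (x v u + x u v)
      map_add' := by
        intro x y; ext v
        simp only [Pi.add_apply, ← Finset.sum_add_distrib]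
        exact Finset.sum_congr rfl fun u _ => by ring
      map_smul' := by
        intro c x; ext v
        simp only [Pi.smul_apply, smul_eq_mul, RingHom.id_apply, Finset.mul_sum]
        exact Finset.sum_congr rfl fun u _ => by ring }
  let T : V → ZMod 2 := fun v => if v ∈ Y then 1 else 0
  have hT : T ∉ LinearMap.range D := by
    rintro ⟨x, hx⟩
    apply h
    refine ⟨fun v u => A v u * (x v u + x u v), ?_, ?_, ?_⟩
    · intro u v; simp only [hA u v]; ring
    · intro u v huv
      by_contra hc
      apply huv
      simp only [A, if_neg hc, zero_mul]
    · intro v hv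
      have := congrFun hx v
      simpa [D, T, hv] using this
  obtain ⟨f, hf1, hf2⟩ := Submodule.exists_le_ker_of_notMem hT
  let g : V → ZMod 2 := fun v => f (Pi.single v 1)
  have hfg : ∀ y : V → ZMod 2, f y = ∑ v, y v * g v := by
    intro y
    conv_lhs => rw [← Finset.univ_sum_single y]
    rw [map_sum]
    refine Finset.sum_congr rfl fun v _ => ?_
    have : (Pi.single v (y v) : V → ZMod 2) = y v • Pi.single v 1 := by
      rw [← Pi.single_smul]; simp
    rw [this, map_smul, smul_eq_mul]
  have z2 : ∀ z : ZMod 2, z = 0 ∨ z = 1 := by decide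
  refine ⟨Y.filter (fun v => g v = 1), Finset.filter_subset _ _, ?_, ?_⟩
  · have h1 : f T = 1 := (z2 _).resolve_left hf1
    refine Eq.trans ?_ h1
    rw [hfg, Finset.card_filter, Nat.cast_sum, ← Finset.sum_filter_add_sum_filter_not Finset.univ (· ∈ Y)]
    rw [Finset.sum_eq_zero (s := Finset.univ.filter (¬ · ∈ Y)), add_zero]
    · simp only [Finset.filter_mem_eq_inter, Finset.univ_inter]
      refine Finset.sum_congr rfl fun v hv => ?_
      rcases z2 (g v) with h | h <;> simp [T, hv, h]
    · intro v hv
      simp at hv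
      simp [T, hv]
  · intro u hu v hv huv
    simp only [Finset.mem_filter, Finset.mem_sdiff, not_and] at hu hv
    have hv0 : g v = 0 := (z2 _).resolve_right (hv.2 hv.1)
    have h0 : f (D (Pi.single u (Pi.single v 1))) = 0 := hf2 ⟨_, rfl⟩
    have hne : u ≠ v := huv.ne
    have : D (Pi.single u (Pi.single v 1)) = Pi.single u 1 + Pi.single v 1 := by
      ext a
      simp only [D, LinearMap.coe_mk, AddHom.coe_mk, Pi.add_apply]
      have hsum : ∀ b, A a b * ((Pi.single u (Pi.single v 1) : V → V → ZMod 2) a b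
          + (Pi.single u (Pi.single v 1) : V → V → ZMod 2) b a)
          = (if a = u then (if b = v then 1 else 0) else 0) +
            (if a = v then (if b = u then 1 else 0) else 0) := by
        intro b
        have huv' := huv.symm
        have hvY := hv.1
        have huY := hu.1
        by_cases h1 : a = u <;> by_cases h2 : b = v <;> by_cases h3 : a = v <;>
          by_cases h4 : b = u <;> simp_all [Pi.single_apply, A]
      rw [Finset.sum_congr rfl fun b _ => hsum b, Finset.sum_add_distrib]
      by_cases h1 : a = u <;> by_cases h3 : a = v <;> simp [h1, h3, Pi.single_apply] <;> simp_all
    rw [this, map_add] at h0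
    change g u + g v = 0 at h0
    rw [hu.2, hv0] at h0
    simp at h0

lemma ES.card {V : Type*} [Fintype V] {G : SimpleGraph V} {Y : Finset V} (h : ES G Y) :
    (Y.card : ZMod 2) = 0 := by
  classical
  obtain ⟨x, h1, h2, h3⟩ := h
  have := handshake_s8 x h1 (fun u => by
    by_contra h; exact (h2 u u h).1.ne rfl)
  rw [← this, Finset.card_eq_sum_ones, Nat.cast_sum, ← Finset.sum_subset (Finset.subset_univ Y)]
  · exact Finset.sum_congr rfl fun v hv => by rw [h3 v hv]; simp
  · intro v _ hv
    refine Finset.sum_eq_zero fun u _ => ?_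
    by_contra h
    exact hv (h2 v u h).2.1

lemma ES.union {V : Type*} [Fintype V] [DecidableEq V] {G : SimpleGraph V} {Y Z : Finset V} (h : ES G Y) (h' : ES G Z)
    (hd : Disjoint Y Z) : ES G (Y ∪ Z) := by
  obtain ⟨x, h1, h2, h3⟩ := h
  obtain ⟨y, k1, k2, k3⟩ := h'
  refine ⟨fun u v => x u v + y u v, fun u v => by simp only [h1 u v, k1 u v], ?_, ?_⟩
  · intro u v huv
    by_cases hx : x u v = 0
    · have : y u v ≠ 0 := by
        intro hy; apply huv; simp [hx, hy]
      have := k2 u v this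
      simp [this]
    · have := h2 u v hx
      simp [this]
  · intro v hv
    rw [Finset.sum_add_distrib]
    rcases Finset.mem_union.1 hv with hv | hv
    · rw [h3 v hv, Finset.sum_eq_zero, add_zero]
      intro u _
      by_contra h
      exact Finset.disjoint_left.1 hd hv (k2 v u h).2.1
    · rw [k3 v hv, Finset.sum_eq_zero, zero_add]
      intro u _
      by_contra h
      exact Finset.disjoint_left.1 hd (h2 v u h).2.1 hv

lemma ES.pair {V : Type*} [Fintype V] [DecidableEq V] {G : SimpleGraph V} {a b : V} (h : G.Adj a b) : ES G {a, b} := by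
  have hne := h.ne
  refine ⟨fun u v => if (u = a ∧ v = b) ∨ (u = b ∧ v = a) then 1 else 0, ?_, ?_, ?_⟩
  · intro u v; exact if_congr (by tauto) rfl rfl
  · intro u v huv
    have : (u = a ∧ v = b) ∨ (u = b ∧ v = a) := by
      by_contra hc; exact huv (if_neg hc)
    rcases this with ⟨rfl, rfl⟩ | ⟨rfl, rfl⟩
    · simp [h]
    · simp [h.symm]
  · intro v hv
    rcases (by simpa using hv : v = a ∨ v = b) with rfl | rfl <;> simp [hne, hne.symm]

lemma ES.star {V : Type*} [Fintype V] [DecidableEq V] {G : SimpleGraph V} {a b c d : V} (hb : G.Adj a b)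
    (hc : G.Adj a c) (hd : G.Adj a d) (h1 : b ≠ c) (h2 : b ≠ d) (h3 : c ≠ d) :
    ES G {a, b, c, d} := by
  have e1 := hb.ne
  have e2 := hc.ne
  have e3 := hd.ne
  refine ⟨fun u v => if (u = a ∧ v ∈ ({b, c, d} : Finset V)) ∨ (v = a ∧ u ∈ ({b, c, d} : Finset V))
    then 1 else 0, ?_, ?_, ?_⟩
  · intro u v; exact if_congr (by tauto) rfl rfl
  · intro u v huv
    have : (u = a ∧ v ∈ ({b, c, d} : Finset V)) ∨ (v = a ∧ u ∈ ({b, c, d} : Finset V)) := by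
      by_contra hc; exact huv (if_neg hc)
    simp only [Finset.mem_insert, Finset.mem_singleton] at this
    rcases this with ⟨rfl, rfl | rfl | rfl⟩ | ⟨rfl, rfl | rfl | rfl⟩ <;>
      simp [hb, hc, hd, hb.symm, hc.symm, hd.symm]
  · intro v hv
    have hv' : v = a ∨ v = b ∨ v = c ∨ v = d := by simpa using hv
    rcases hv' with rfl | rfl | rfl | rfl
    · have : ∀ u, ((v = v ∧ u ∈ ({b, c, d} : Finset V)) ∨ (u = v ∧ v ∈ ({b, c, d} : Finset V)))
        ↔ u ∈ ({b, c, d} : Finset V) := by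
        intro u; simp [e1, e2, e3]
      refine (Finset.sum_congr rfl fun u _ => if_congr (this u) rfl rfl).trans ?_
      rw [Finset.sum_boole]
      have : Finset.univ.filter (fun u => u ∈ ({b, c, d} : Finset V)) = {b, c, d} := by ext; simp
      rw [this, Finset.card_eq_three.2 ⟨b, c, d, h1, h2, h3, rfl⟩]
      decide
    all_goals simp [e1.symm, e2.symm, e3.symm]

open Classical in
lemma main_color {V : Type*} [Fintype V] (G : SimpleGraph V)
    (hodd : Odd (Fintype.card V)) (w : V)
    (hw : Even (G.neighborSet w).ncard)
    (honly : ∀ v : V, v ≠ w → Odd (G.neighborSet v).ncard)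
    (hadj : ∀ v : V, v ≠ w → G.Adj w v)
    (Y : Finset V) (hY : w ∉ Y) (hX : ES G ({w}ᶜ \ Y)) (hne : ¬ ES G Y) : OddEdgeColorable G 3 := by
  obtain ⟨P, hPY, hP1, hPQ⟩ := ES.dual hne
  have hXc := hX.card
  obtain ⟨x, x1, x2, x3⟩ := hX
  have z2 : ∀ z : ZMod 2, z = 0 ∨ z = 1 := by decide
  have hwP : w ∉ P := fun h => hY (hPY h)
  have hdeg : ∀ v, (∑ u, if G.Adj v u then (1 : ZMod 2) else 0) = if v = w then 0 else 1 := by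
    intro v
    rw [Finset.sum_boole]
    have : (Finset.univ.filter (fun u => G.Adj v u)).card = (G.neighborSet v).ncard := by
      rw [← Set.ncard_coe_finset]; congr 1; ext; simp
    rw [this]
    split_ifs with h
    · subst h; exact (ZMod.natCast_eq_zero_iff_even).2 hw
    · exact (ZMod.natCast_eq_one_iff_odd).2 (honly v h)
  let y : V → V → ZMod 2 := fun u v =>
    if G.Adj u v ∧ u ≠ w ∧ v ≠ w ∧ (u ∈ P ∨ v ∈ P) then 1 else 0
  let r : V → ZMod 2 := fun v => ∑ u, y v u
  have y1 : ∀ u v, y u v = y v u := by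
    intro u v; exact if_congr (by rw [G.adj_comm u v]; tauto) rfl rfl
  have hr : ∑ v, r v = 0 := handshake_s8 y y1 (fun u => by simp [y])
  have rw0 : r w = 0 := by simp [r, y]
  have rP : ∀ v ∈ P, r v = 0 := by
    intro v hv
    have hvw : v ≠ w := fun h => hwP (h ▸ hv)
    have h := hdeg v
    rw [if_neg hvw] at h
    have : ∀ u, (if G.Adj v u then (1 : ZMod 2) else 0) = y v u + if u = w then 1 else 0 := by
      intro u
      by_cases hu : u = w
      · subst hu; simp [y, (hadj v hvw).symm]
      · simp [y, hvw, hu, hv]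
    rw [Finset.sum_congr rfl fun u _ => this u, Finset.sum_add_distrib] at h
    simpa [r] using h
  have yQ : ∀ v ∈ Y \ P, ∀ u, y v u = 0 := by
    intro v hv u
    have hvP := (Finset.mem_sdiff.1 hv).2
    simp only [y]
    rw [if_neg]
    rintro ⟨h1, -, -, h2 | h2⟩
    · exact hvP h2
    · exact hPQ u h2 v hv h1.symm
  have rQ : ∀ v ∈ Y \ P, r v = 0 := fun v hv => Finset.sum_eq_zero fun u _ => yQ v hv u
  let a : V → Fin 3 := fun v => if v ∈ P ∨ (v ∉ Y ∧ r v = 0) then 0 else 1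
  let col : V → V → Fin 3 := fun u v =>
    if u = w then a v else if v = w then a u else
      if u ∈ P ∨ v ∈ P then 0 else if x u v = 1 then 2 else 1
  have cs : ∀ u v, col u v = col v u := by
    intro u v
    by_cases h1 : u = w <;> by_cases h2 : v = w
    · rw [h1, h2]
    · simp [col, h1, h2]
    · simp [col, h1, h2]
    · simp only [col, h1, h2, if_false, x1 u v, or_comm (a := u ∈ P)]
  have a2 : ∀ v, a v ≠ 2 := by intro v; simp only [a]; split_ifs <;> decide
  have xX : ∀ u v, x u v = 1 → G.Adj u v ∧ u ≠ w ∧ u ∉ Y ∧ v ≠ w ∧ v ∉ Y := by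
    intro u v h
    have := x2 u v (by rw [h]; decide)
    simpa [and_assoc] using this
  let S : Fin 3 → V → ZMod 2 := fun i v => ∑ u, if G.Adj v u ∧ col v u = i then (1 : ZMod 2) else 0
  have Ssum : ∀ v, S 0 v + S 1 v + S 2 v = if v = w then 0 else 1 := by
    intro v
    rw [← hdeg v]
    simp only [S, ← Finset.sum_add_distrib]
    refine Finset.sum_congr rfl fun u _ => ?_
    have : ∀ k : Fin 3, k = 0 ∨ k = 1 ∨ k = 2 := by decide
    by_cases h : G.Adj v u
    · rcases this (col v u) with h' | h' | h' <;> simp [h, h']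
    · simp [h]
  have S0 : ∀ v, v ≠ w → S 0 v = r v + if a v = 0 then 1 else 0 := by
    intro v hvw
    have : ∀ u, (if G.Adj v u ∧ col v u = 0 then (1 : ZMod 2) else 0)
        = y v u + if u = w then (if a v = 0 then 1 else 0) else 0 := by
      intro u
      by_cases hu : u = w
      · subst hu; simp [y, col, (hadj v hvw).symm, hvw]
      · by_cases hp : v ∈ P ∨ u ∈ P
        · simp [y, col, hvw, hu, hp]
        · by_cases hx : x v u = 1 <;> simp [y, col, hvw, hu, hp, hx]
    simp only [S]
    rw [Finset.sum_congr rfl fun u _ => this u, Finset.sum_add_distrib]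
    simp [r]
  have S2 : ∀ v, v ≠ w → v ∉ Y → S 2 v = 1 := by
    intro v hvw hvY
    rw [← x3 v (by simp [hvw, hvY])]
    refine Finset.sum_congr rfl fun u _ => ?_
    have hvP : v ∉ P := fun h => hvY (hPY h)
    rcases z2 (x v u) with hx | hx
    · rw [hx, if_neg]
      rintro ⟨-, h⟩
      simp only [col, hvw, hvP, hx, false_or, if_false] at h
      split_ifs at h with h1 h2 h3
      · exact a2 _ h
      · exact absurd h (by decide)
      · rename_i h3; exact absurd h3 (by decide)
      · exact absurd h (by decide)
    · obtain ⟨h1, -, -, h2, h3⟩ := xX v u hx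
      have : u ∉ P := fun h => h3 (hPY h)
      simp [col, hvw, hvP, hx, h1, h2, this]
  apply colorable_of_col G col cs
  have fin3 : ∀ k : Fin 3, k = 0 ∨ k = 1 ∨ k = 2 := by decide
  intro i v
  change S i v = 1 ∨ _
  by_cases hvw : v = w
  · subst hvw
    have n2 : ∀ u, G.Adj v u → col v u ≠ 2 := by
      intro u _; simp only [col, if_true]; exact a2 u
    have s2 : S 2 v = 0 := by
      refine Finset.sum_eq_zero fun u _ => ?_
      rw [if_neg]; rintro ⟨h1, h2⟩; exact n2 u h1 h2
    have s0 : S 0 v = 1 := by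
      have : ∀ u, (if G.Adj v u ∧ col v u = 0 then (1 : ZMod 2) else 0)
          = (if u ∈ P then 1 else 0) + (if u ∈ ({v}ᶜ \ Y : Finset V) then 1 else 0) + r u := by
        intro u
        by_cases huv : u = v
        · subst huv; simp [hwP, rw0]
        · have hu : G.Adj v u := hadj u huv
          by_cases huP : u ∈ P
          · simp [col, a, hu, huP, hPY huP, rP u huP]
          · by_cases huY : u ∈ Y
            · have : r u = 0 := rQ u (by simp [huP, huY])
              simp [col, a, hu, huP, huY, this]
            · rcases z2 (r u) with h | h
              · simp [col, a, hu, huP, huY, h, huv]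
              · simp [col, a, hu, huP, huY, h, huv]; decide
      simp only [S]
      rw [Finset.sum_congr rfl fun u _ => this u, Finset.sum_add_distrib, Finset.sum_add_distrib, hr]
      simp only [Finset.sum_boole, Finset.filter_univ_mem, hP1, hXc]
      simp
    have := Ssum v
    rw [if_pos rfl, s0, s2] at this
    rcases fin3 i with rfl | rfl | rfl
    · exact Or.inl s0
    · left
      rcases z2 (S 1 v) with h | h
      · rw [h] at this; simp at this
      · exact h
    · exact Or.inr n2
  · have hs := Ssum v
    rw [if_neg hvw] at hs
    have h0 := S0 v hvw
    by_cases hvP : v ∈ P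
    · have hc : ∀ u, col v u = 0 := by
        intro u
        by_cases h : u = v <;> by_cases h' : u = w <;> simp [col, hvw, hvP, a, h']
      by_cases hi : i = 0
      · subst hi; left; rw [h0, rP v hvP]; simp [a, hvP]
      · right; intro u _ h; exact hi (by rw [← h, hc])
    · by_cases hvY : v ∈ Y
      · have hQ : v ∈ Y \ P := by simp [hvP, hvY]
        have ha : a v = 1 := by simp [a, hvP, hvY]
        have hc : ∀ u, G.Adj v u → col v u = 1 := by
          intro u huv
          by_cases h' : u = w
          · simp [col, hvw, h', ha]
          · have h1 : u ∉ P := fun h => hPQ u h v hQ huv.symm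
            have h2 : x v u ≠ 1 := fun h => (xX v u h).2.2.1 hvY
            simp [col, hvw, h', hvP, h1, h2]
        by_cases hi : i = 1
        · subst hi; left
          have e0 : S 0 v = 0 := by
            refine Finset.sum_eq_zero fun u _ => ?_
            rw [if_neg]; rintro ⟨h1, h2⟩; rw [hc u h1] at h2; simp at h2
          have e2 : S 2 v = 0 := by
            refine Finset.sum_eq_zero fun u _ => ?_
            rw [if_neg]; rintro ⟨h1, h2⟩; rw [hc u h1] at h2; simp at h2
          rw [e0, e2] at hs; simpa using hs
        · right; intro u hu h; exact hi (by rw [← h, hc u hu])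
      · have e2 := S2 v hvw hvY
        have e0 : S 0 v = 1 := by
          rw [h0]
          rcases z2 (r v) with h | h <;> simp [a, hvP, hvY, h]
        left
        rcases fin3 i with rfl | rfl | rfl
        · exact e0
        · rw [e0, e2] at hs
          rcases z2 (S 1 v) with h | h
          · rw [h] at hs; exact absurd hs (by decide)
          · exact h
        · exact e2

/-- closure under adjacency off `w` -/
lemma closure_all {V : Type*} (G : SimpleGraph V) (w : V)
    (hGw : (G.induce {v : V | v ≠ w}).Connected) (p : V → Prop) (a : V) (ha : a ≠ w) (hp : p a)
    (hstep : ∀ u v, u ≠ w → v ≠ w → G.Adj u v → p u → p v) (v : V) (hv : v ≠ w) : p v := by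
  obtain ⟨q⟩ := hGw.preconnected ⟨a, ha⟩ ⟨v, hv⟩
  have : ∀ (s t : {v : V | v ≠ w}) (_ : (G.induce {v : V | v ≠ w}).Walk s t), p s.1 → p t.1 := by
    intro s t q
    induction q with
    | nil => exact id
    | @cons s t u h q ih => exact fun hs => ih (hstep _ _ s.2 t.2 h hs)
  exact this _ _ q hp

theorem stmt8 {V : Type*} [Fintype V] (G : SimpleGraph V)
    (hconn : G.Connected) (hodd : Odd (Fintype.card V)) (w : V)
    (hw : Even (G.neighborSet w).ncard)
    (honly : ∀ v : V, v ≠ w → Odd (G.neighborSet v).ncard)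
    (hadj : ∀ v : V, v ≠ w → G.Adj w v)
    (hGw : (G.induce {v : V | v ≠ w}).Connected)
    (hW4 : ¬ Nonempty (G ≃g wheelFour)) :
    OddEdgeColorable G 3 := by
  classical
  by_contra hno
  have comp : ∀ Y : Finset V, w ∉ Y → ES G ({w}ᶜ \ Y) → ES G Y := by
    intro Y h1 h2
    by_contra h3
    exact hno (main_color G hodd w hw honly hadj Y h1 h2 h3)
  have comp' : ∀ Y : Finset V, w ∉ Y → ES G Y → ES G ({w}ᶜ \ Y) := by
    intro Y h1 h2
    apply comp _ (by simp)
    convert h2 using 1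
    ext v
    simp only [Finset.mem_sdiff, Finset.mem_compl, Finset.mem_singleton]
    by_cases h : v = w
    · subst h; simp [h1]
    · simp [h]
  have esadj : ∀ a b, ES G {a, b} → G.Adj a b := by
    rintro a b ⟨x, h1, h2, h3⟩
    have h := h3 a (by simp)
    obtain ⟨u, -, hu⟩ := Finset.exists_ne_zero_of_sum_ne_zero (by rw [h]; decide)
    obtain ⟨k1, -, k2⟩ := h2 _ _ hu
    rcases (by simpa using k2 : u = a ∨ u = b) with rfl | rfl
    · exact absurd rfl k1.ne
    · exact k1
  have diff : ∀ a b c d : V, a ≠ w → b ≠ w → c ≠ w → d ≠ w → a ≠ c → a ≠ d → b ≠ c → b ≠ d →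
      ES G {a, b, c, d} → G.Adj a b → G.Adj c d := by
    intro a b c d ha hb hc hd h1 h2 h3 h4 hE hab
    apply esadj
    apply comp
    · simp [hc.symm, hd.symm]
    have := (comp' {a, b, c, d} (by simp [ha.symm, hb.symm, hc.symm, hd.symm]) hE).union (ES.pair hab)
      (by rw [Finset.disjoint_left]; intro v; simp; tauto)
    convert this using 1
    ext v
    simp only [Finset.mem_sdiff, Finset.mem_compl, Finset.mem_singleton, Finset.mem_insert,
      Finset.mem_union]
    by_cases e1 : v = a
    · subst e1; simp [*]
    by_cases e2 : v = b
    · subst e2; simp [*]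
    simp [e1, e2]
  have P4 : ∀ a b c d : V, a ≠ w → b ≠ w → c ≠ w → d ≠ w → G.Adj a b → G.Adj b c → G.Adj c d →
      a ≠ c → a ≠ d → b ≠ d → G.Adj a d := by
    intro a b c d ha hb hc hd h1 h2 h3 e1 e2 e3
    refine diff b c a d hb hc ha hd h1.ne.symm e3 e1.symm h3.ne ?_ h2
    have := (ES.pair h1).union (ES.pair h3) (by
      have := h2.ne
      rw [Finset.disjoint_left]; intro v; simp only [Finset.mem_insert, Finset.mem_singleton]
      rintro (rfl | rfl) <;> simp [*])
    convert this using 1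
    ext v; simp; tauto
  have claw : ∀ a b c d : V, a ≠ w → b ≠ w → c ≠ w → d ≠ w → G.Adj a b → G.Adj a c → G.Adj a d →
      b ≠ c → b ≠ d → c ≠ d → G.Adj c d := by
    intro a b c d ha hb hc hd h1 h2 h3 e1 e2 e3
    exact diff a b c d ha hb hc hd h2.ne h3.ne e1 e2 (ES.star h1 h2 h3 e1 e2 e3) h1
  -- case A
  have caseA : ∀ a b c d : V, a ≠ w → b ≠ w → c ≠ w → d ≠ w → G.Adj a b → G.Adj a c → G.Adj a d →
      b ≠ c → b ≠ d → c ≠ d → False := by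
    intro a b c d ha hb hc hd h1 h2 h3 e1 e2 e3
    have hall : ∀ v, v ≠ w → (v = a ∨ G.Adj a v) := by
      refine closure_all G w hGw (fun v => v = a ∨ G.Adj a v) a ha (Or.inl rfl) ?_
      intro u v hu hv huv hp
      rcases hp with rfl | hp
      · exact Or.inr huv
      by_cases hva : v = a
      · exact Or.inl hva
      right
      -- find p, a neighbour of `a` other than `u`, `v`, adjacent to `u`
      have third : ∀ p q, p ≠ w → q ≠ w → p ≠ q → G.Adj a p → G.Adj a q → p ≠ u → q ≠ u →
          G.Adj a v := by
        intro p q hpw hqw hpq h1 h2 h3 h4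
        by_cases hpv : p = v
        · exact hpv ▸ h1
        have : G.Adj u p := claw a q u p ha hqw hu hpw h2 hp h1 h4 (Ne.symm hpq) (Ne.symm h3)
        exact claw u p a v hu hpw ha hv this hp.symm huv h1.ne.symm hpv (Ne.symm hva)
      by_cases hub : u = b
      · exact third c d hc hd e3 h2 h3 (by rw [hub]; exact e1.symm) (by rw [hub]; exact e2.symm)
      by_cases huc : u = c
      · exact third b d hb hd e2 h1 h3 (by rw [huc]; exact e1) (by rw [huc]; exact e3.symm)
      exact third b c hb hc e1 h1 h2 (Ne.symm hub) (Ne.symm huc)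
    have hN : G.neighborSet a = {a}ᶜ := by
      ext v
      simp only [SimpleGraph.mem_neighborSet, Set.mem_compl_iff, Set.mem_singleton_iff]
      constructor
      · intro h; exact h.ne.symm
      · intro h
        by_cases hvw : v = w
        · subst hvw; exact (hadj a ha).symm
        · exact (hall v hvw).resolve_left h
    have h := honly a ha
    rw [hN, Set.ncard_compl, Nat.card_eq_fintype_card, Set.ncard_singleton] at h
    obtain ⟨k, hk⟩ := hodd
    rw [hk] at h
    simp at h
    revert h; simp
  have second : ∀ v b, v ≠ w → b ≠ w → G.Adj v b → ∃ d, d ≠ b ∧ d ≠ w ∧ G.Adj v d := by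
    intro v b hv hb hvb
    by_contra! hc
    have hN : G.neighborSet v = {w, b} := by
      ext u
      simp only [SimpleGraph.mem_neighborSet, Set.mem_insert_iff, Set.mem_singleton_iff]
      constructor
      · intro h
        by_contra! h'
        exact hc u h'.2 h'.1 h
      · rintro (rfl | rfl)
        · exact (hadj v hv).symm
        · exact hvb
    have h := honly v hv
    rw [hN, Set.ncard_pair hb.symm] at h
    revert h; decide
  obtain ⟨⟨a, ha⟩⟩ := hGw.nonempty
  have ha : a ≠ w := ha
  have cardlem : ∀ s : Finset V, (∀ v, v ≠ w → v ∈ s) → w ∈ s → Odd s.card := by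
    intro s h1 h2
    have : s = Finset.univ := by
      ext v; by_cases h : v = w
      · simp [h, h2]
      · simp [h1 v h]
    rw [this]; exact hodd
  obtain ⟨b, hb, hab⟩ : ∃ b, b ≠ w ∧ G.Adj a b := by
    by_contra! hc
    have hall := closure_all G w hGw (· = a) a ha rfl (by
      rintro u v hu hv huv rfl; exact absurd huv (hc v hv))
    have := cardlem {w, a} (fun v hv => by simp [hall v hv]) (by simp)
    rw [Finset.card_pair ha.symm] at this
    revert this; decide
  obtain ⟨c, hcb, hc, hac⟩ := second a b ha hb hab
  obtain ⟨d, hda, hd, hbd⟩ := second b a hb ha hab.symm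
  -- uniqueness of neighbours
  have uniq : ∀ v p q, v ≠ w → p ≠ w → q ≠ w → G.Adj v p → G.Adj v q → p ≠ q →
      ∀ u, u ≠ w → G.Adj v u → u = p ∨ u = q := by
    intro v p q hv hp hq h1 h2 h3 u hu h
    by_contra! hcc
    exact caseA v p q u hv hp hq hu h1 h2 h h3 hcc.1.symm hcc.2.symm
  have ua := uniq a b c ha hb hc hab hac hcb.symm
  have ub := uniq b a d hb ha hd hab.symm hbd hda.symm
  by_cases hdc : d = c
  · subst hdc
    have uc := uniq d a b hd ha hb hac.symm hbd.symm hab.ne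
    have hall := closure_all G w hGw (fun v => v = a ∨ v = b ∨ v = d) a ha (Or.inl rfl) (by
      rintro u v hu hv huv (rfl | rfl | rfl)
      · have := ua v hv huv; tauto
      · have := ub v hv huv; tauto
      · have := uc v hv huv; tauto)
    have := cardlem {w, a, b, d} (fun v hv => by simp [hall v hv]) (by simp)
    rw [Finset.card_eq_of_equiv_fin (n := 4)] at this
    · revert this; decide
    · apply Finset.equivFinOfCardEq
      have := hab.ne
      rw [Finset.card_insert_of_notMem (by simp [ha.symm, hb.symm, hd.symm]),
        Finset.card_insert_of_notMem (by simp [this, hda.symm]), Finset.card_pair hcb.symm]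
  have hcd : G.Adj c d := P4 c a b d hc ha hb hd hac.symm hab hbd hcb (Ne.symm hdc) hda.symm
  have uc := uniq c a d hc ha hd hac.symm hcd hda.symm
  have ud := uniq d b c hd hb hc hbd.symm hcd.symm hcb.symm
  have hall := closure_all G w hGw (fun v => v = a ∨ v = b ∨ v = c ∨ v = d) a ha (Or.inl rfl) (by
      rintro u v hu hv huv (rfl | rfl | rfl | rfl)
      · have := ua v hv huv; tauto
      · have := ub v hv huv; tauto
      · have := uc v hv huv; tauto
      · have := ud v hv huv; tauto)
  have nad : ¬ G.Adj a d := by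
    intro h; rcases ua d hd h with h | h
    · exact hbd.ne h.symm
    · exact hdc h
  have nbc : ¬ G.Adj b c := by
    intro h; rcases ub c hc h with h | h
    · exact hac.ne h.symm
    · exact hdc h.symm
  apply hW4
  let f : Fin 5 → V := ![a, b, d, c, w]
  have e1 := hab.ne
  have e2 := hac.ne
  have e3 := hbd.ne
  have hf : Function.Bijective f := by
    constructor
    · intro i j
      fin_cases i <;> fin_cases j <;> simp [f, ha, hb, hc, hd, ha.symm, hb.symm, hc.symm, hd.symm,
        e1, e2, e3, e1.symm, e2.symm, e3.symm, hda, hda.symm, hcb, hcb.symm, hdc, Ne.symm hdc]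
    · intro v
      by_cases hv : v = w
      · exact ⟨4, by simp [f, hv]⟩
      · rcases hall v hv with rfl | rfl | rfl | rfl
        · exact ⟨0, rfl⟩
        · exact ⟨1, rfl⟩
        · exact ⟨3, rfl⟩
        · exact ⟨2, rfl⟩
  refine ⟨RelIso.symm ⟨Equiv.ofBijective f hf, ?_⟩⟩
  intro i j
  have wa := hadj a ha
  have wb := hadj b hb
  have wc := hadj c hc
  have wd := hadj d hd
  have nda : ¬ G.Adj d a := fun h => nad h.symm
  have ncb : ¬ G.Adj c b := fun h => nbc h.symm
  fin_cases i <;> fin_cases j <;> simp [f, wheelFour, wa, wb, wc, wd, wa.symm, wb.symm, wc.symm,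
    wd.symm, nad, nda, nbc, ncb, hab, hac, hbd, hcd, hab.symm, hac.symm, hbd.symm, hcd.symm]
end

section
/- Let G be a connected graph and S ⊆ V(G) with |S| even. Then G has a spanning subgraph F such that every non-trivial connected component of F contains a vertex of S, every vertex of S has odd degree in F, and every vertex not in S has even degree in F. -/
open scoped symmDiff in
theorem odd_card_symmDiff_aux {α : Type*} [DecidableEq α] (A B : Finset α) :
    Odd (A ∆ B).card ↔ ¬ (Odd A.card ↔ Odd B.card) := by
  have h1 : (A ∆ B).card = (A \ B).card + (B \ A).card := by
    rw [symmDiff_def, Finset.sup_eq_union, Finset.card_union_of_disjoint]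
    exact disjoint_sdiff_sdiff
  have h2 := Finset.card_sdiff_add_card_inter A B
  have h3 := Finset.card_sdiff_add_card_inter B A
  rw [Finset.inter_comm] at h3
  simp only [Nat.odd_iff]
  omega

def TJ {V : Type*} (G : SimpleGraph V) (T : Set V) : Prop :=
  ∃ F : Set (Sym2 V), F ⊆ G.edgeSet ∧ ∀ v, Odd {e : Sym2 V | e ∈ F ∧ v ∈ e}.ncard ↔ v ∈ T

open scoped symmDiff in
theorem TJ.symmDiff {V : Type*} [Fintype V] {G : SimpleGraph V} {A B : Set V}
    (hA : TJ G A) (hB : TJ G B) : TJ G (A ∆ B) := by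
  classical
  obtain ⟨F, hF, hF'⟩ := hA
  obtain ⟨H, hH, hH'⟩ := hB
  refine ⟨F ∆ H, ?_, ?_⟩
  · intro e he
    rcases he with he | he
    · exact hF he.1
    · exact hH he.1
  · intro v
    have h : {e : Sym2 V | e ∈ F ∆ H ∧ v ∈ e} =
        {e : Sym2 V | e ∈ F ∧ v ∈ e} ∆ {e : Sym2 V | e ∈ H ∧ v ∈ e} := by
      ext e
      simp only [Set.mem_symmDiff, Set.mem_setOf_eq]
      tauto
    have h1 := hF' v
    have h2 := hH' v
    rw [Set.ncard_eq_toFinset_card'] at h1 h2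
    rw [h, Set.ncard_eq_toFinset_card', Set.toFinset_symmDiff, odd_card_symmDiff_aux, h1, h2,
      Set.mem_symmDiff]
    tauto

open scoped symmDiff in
theorem TJ.walk {V : Type*} [Fintype V] {G : SimpleGraph V} {u v : V} (p : G.Walk u v) :
    TJ G ({u} ∆ {v}) := by
  classical
  induction p with
  | nil => exact ⟨∅, by simp, by simp⟩
  | @cons a b c h p ih =>
    have h1 : TJ G ({a} ∆ {b}) := by
      refine ⟨{s(a, b)}, by simpa using h, ?_⟩
      intro v
      have hab := h.ne
      by_cases hv : v = a ∨ v = b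
      · have : {e : Sym2 V | e ∈ ({s(a, b)} : Set (Sym2 V)) ∧ v ∈ e} = {s(a, b)} := by
          ext e
          simp only [Set.mem_setOf_eq, Set.mem_singleton_iff]
          constructor
          · exact fun h => h.1
          · rintro rfl
            simpa using hv
        rw [this]
        simp only [Set.ncard_singleton, Set.mem_symmDiff, Set.mem_singleton_iff, odd_one, true_iff]
        grind
      · have : {e : Sym2 V | e ∈ ({s(a, b)} : Set (Sym2 V)) ∧ v ∈ e} = ∅ := by
          ext e
          simp only [Set.mem_setOf_eq, Set.mem_singleton_iff, Set.mem_empty_iff_false, iff_false]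
          rintro ⟨rfl, h⟩
          exact hv (by simpa using h)
        rw [this]
        simp only [Set.ncard_empty, Set.mem_symmDiff, Set.mem_singleton_iff]
        grind
    have := h1.symmDiff ih
    rwa [symmDiff_assoc, symmDiff_symmDiff_cancel_left] at this

theorem TJ.main {V : Type*} [Fintype V] {G : SimpleGraph V} (hG : G.Connected) (n : ℕ) :
    ∀ S : Set V, S.ncard = n → Even n → TJ G S := by
  classical
  induction n using Nat.strong_induction_on with
  | _ n ih =>
    intro S hS hn
    by_cases h0 : n = 0
    · have : S = ∅ := by
        rw [h0] at hS
        exact (Set.ncard_eq_zero (Set.toFinite S)).1 hS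
      subst this
      exact ⟨∅, by simp, by simp⟩
    · have h2 : 1 < S.ncard := by
        obtain ⟨k, hk⟩ := hn
        omega
      obtain ⟨a, ha, b, hb, hab⟩ := (Set.one_lt_ncard (Set.toFinite S)).1 h2
      have e1 := Set.ncard_diff_singleton_add_one ha (Set.toFinite S)
      have hb' : b ∈ S \ {a} := ⟨hb, fun h => hab h.symm⟩
      have e2 := Set.ncard_diff_singleton_add_one hb' (Set.toFinite _)
      have h3 := ih (n - 2) (by omega) ((S \ {a}) \ {b}) (by omega) (by
        obtain ⟨k, hk⟩ := hn
        exact ⟨k - 1, by omega⟩)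
      obtain ⟨p⟩ := hG.preconnected a b
      have h4 := h3.symmDiff (TJ.walk p)
      convert h4 using 1
      ext x
      simp only [Set.mem_symmDiff, Set.mem_diff, Set.mem_singleton_iff]
      grind


/-- Let `G` be a connected graph and `S` a set of vertices of even cardinality.  Then `G`
has a spanning subgraph `F` (given by its edge set) such that every vertex of `S` has odd
degree in `F`, every vertex outside `S` has even degree in `F`, and every non-trivial
component of `F` (i.e. every vertex incident to an edge of `F`) contains a vertex of `S`. -/
theorem stmt13 {V : Type*} [Fintype V] (G : SimpleGraph V)
    (hconn : G.Connected) (S : Set V) (hS : Even S.ncard) :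
    ∃ F ⊆ G.edgeSet,
      (∀ v ∈ S, Odd {e : Sym2 V | e ∈ F ∧ v ∈ e}.ncard) ∧
      (∀ v ∉ S, Even {e : Sym2 V | e ∈ F ∧ v ∈ e}.ncard) ∧
      (∀ v : V, {e : Sym2 V | e ∈ F ∧ v ∈ e}.ncard ≠ 0 →
        ∃ s ∈ S, (SimpleGraph.fromEdgeSet F).Reachable v s) := by
  classical
  obtain ⟨F, hF, hd⟩ := TJ.main hconn _ S rfl hS
  let R : V → Prop := fun v => ∃ s ∈ S, (SimpleGraph.fromEdgeSet F).Reachable v s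
  have hne : ∀ a b, s(a, b) ∈ F → a ≠ b := fun a b h => (hF h : G.Adj a b).ne
  have hR : ∀ a b, s(a, b) ∈ F → R a → R b := by
    rintro a b hab ⟨s, hs, h⟩
    have hadj : (SimpleGraph.fromEdgeSet F).Adj a b :=
      (SimpleGraph.fromEdgeSet_adj F).2 ⟨hab, hne a b hab⟩
    exact ⟨s, hs, hadj.symm.reachable.trans h⟩
  let F' : Set (Sym2 V) := {e | e ∈ F ∧ ∀ v ∈ e, R v}
  have hF' : ∀ a b, s(a, b) ∈ F → R a → s(a, b) ∈ F' := by
    intro a b hab ha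
    refine ⟨hab, ?_⟩
    intro v hv
    rcases Sym2.mem_iff.1 hv with rfl | rfl
    · exact ha
    · exact hR _ _ hab ha
  have hpos : ∀ v, R v → {e : Sym2 V | e ∈ F' ∧ v ∈ e} = {e : Sym2 V | e ∈ F ∧ v ∈ e} := by
    intro v hv
    ext e
    constructor
    · exact fun h => ⟨h.1.1, h.2⟩
    · rintro ⟨h1, h2⟩
      obtain ⟨w, rfl⟩ := Sym2.mem_iff_exists.1 h2
      exact ⟨hF' _ _ h1 hv, h2⟩
  have hneg : ∀ v, ¬ R v → {e : Sym2 V | e ∈ F' ∧ v ∈ e} = ∅ := by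
    intro v hv
    ext e
    simp only [Set.mem_setOf_eq, Set.mem_empty_iff_false, iff_false]
    exact fun h => hv (h.1.2 v h.2)
  have hwalk : ∀ v s, (SimpleGraph.fromEdgeSet F).Walk v s → R v →
      (SimpleGraph.fromEdgeSet F').Reachable v s := by
    intro v s p
    induction p with
    | nil => exact fun _ => SimpleGraph.Reachable.refl _
    | @cons a b c h p ih =>
      intro ha
      have hab := ((SimpleGraph.fromEdgeSet_adj F).1 h).1
      have hadj : (SimpleGraph.fromEdgeSet F').Adj a b :=
        (SimpleGraph.fromEdgeSet_adj F').2 ⟨hF' a b hab ha, hne a b hab⟩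
      exact hadj.reachable.trans (ih (hR a b hab ha))
  refine ⟨F', fun e he => hF he.1, ?_, ?_, ?_⟩
  · intro v hv
    rw [hpos v ⟨v, hv, SimpleGraph.Reachable.refl _⟩]
    exact (hd v).2 hv
  · intro v hv
    by_cases h : R v
    · rw [hpos v h, ← Nat.not_odd_iff_even, hd v]
      exact hv
    · rw [hneg v h]
      simp
  · intro v hv
    by_cases h : R v
    · obtain ⟨s, hs, ⟨p⟩⟩ := id h
      exact ⟨s, hs, hwalk v s p h⟩
    · rw [hneg v h] at hv
      simp at hv
end
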